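/- Let Ψ be the set of roots of L of the form (λ; 1, θ(−3 − |λ|²)/6 + β + n), where λ ∈ Λ, n ∈ ℤ, and β is chosen so that the last entry lies in ℰ. Then rad(Ψ) = Φ_L, the set of all roots of L; in particular the ω-reflections in the elements of Ψ generate the reflection group R(L). -/

import Mathlib

noncomputable section

open ComplexConjugate

namespace Bimonster

/-- The primitive cube root of unity `ω = e^{2πi/3}`. -/
def ω : ℂ := Complex.exp (2 * (Real.pi : ℂ) * Complex.I / 3)

/-- `θ = ω - ω̄ = √-3`. -/
def θ : ℂ := ω - conj ω

/-- `ξ = e^{-πi/6}`. -/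
def ξ : ℂ := Complex.exp (-((Real.pi : ℂ) * Complex.I) / 6)

/-- Membership in the ring of Eisenstein integers `ℰ = ℤ[ω] ⊆ ℂ`. -/
def EisP (z : ℂ) : Prop := ∃ a b : ℤ, z = (a : ℂ) + (b : ℂ) * ω

/-- The units of the ring of Eisenstein integers. -/
def EisUnit (z : ℂ) : Prop :=
  z = 1 ∨ z = -1 ∨ z = ω ∨ z = -ω ∨ z = ω ^ 2 ∨ z = -ω ^ 2

/-- A generator matrix of the ternary Golay code `𝒞₁₂ ⊆ 𝔽₃¹²`. -/
def golay : Fin 6 → Fin 12 → ℤ :=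
  ![![1, 0, 0, 0, 0, 0, 0, 1, 1, 1, 1, 1],
    ![0, 1, 0, 0, 0, 0, -1, 0, 1, -1, -1, 1],
    ![0, 0, 1, 0, 0, 0, -1, 1, 0, 1, -1, -1],
    ![0, 0, 0, 1, 0, 0, -1, -1, 1, 0, 1, -1],
    ![0, 0, 0, 0, 1, 0, -1, -1, -1, 1, 0, 1],
    ![0, 0, 0, 0, 0, 1, -1, 1, -1, -1, 1, 0]]

/-- The complex Leech lattice `Λ ⊆ ℰ¹²`: vectors `(m + θc_i + 3z_i)` with
`m ∈ {0, ±1}`, `(c_i)` in the ternary Golay code and `z_i ∈ ℰ` with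
`Σ z_i ≡ m mod θ`. -/
def Leech : Set (Fin 12 → ℂ) :=
  {lam | ∃ (m : ℤ) (s : Fin 6 → ℤ) (za zb : Fin 12 → ℤ),
    (m = 0 ∨ m = 1 ∨ m = -1) ∧
    (∀ i, lam i = (m : ℂ) + θ * ((∑ j, golay j i * s j : ℤ) : ℂ) +
        3 * ((za i : ℂ) + (zb i : ℂ) * ω)) ∧
    ∃ a b : ℤ, (∑ i, ((za i : ℂ) + (zb i : ℂ) * ω)) - (m : ℂ) = θ * ((a : ℂ) + (b : ℂ) * ω)}

/-- The underlying 14-dimensional complex vector space of `L = Λ ⊕ H`. -/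
abbrev V : Type := Fin 14 → ℂ

/-- The Hermitian form of `L = Λ ⊕ H`: `⟨u,v⟩ = -(1/3)Σ ū_i v_i` on the twelve Leech
coordinates, and the hyperbolic cell with Gram matrix `[[0, θ̄], [θ, 0]]` on the last
two coordinates.  It is conjugate-linear in the first variable. -/
def herm (u v : V) : ℂ :=
  -(1 / 3) *
      (∑ i : Fin 12, conj (u (Fin.castLE (by norm_num) i)) * v (Fin.castLE (by norm_num) i)) +
    conj (u 12) * conj θ * v 13 + conj (u 13) * θ * v 12

/-- The norm `⟨λ,λ⟩ = -(1/3)Σ |λ_i|²` of a vector of the complex Leech lattice. -/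
def normL (lam : Fin 12 → ℂ) : ℂ := -(1 / 3) * ∑ i, conj (lam i) * lam i

/-- Assemble a vector `(λ; x, y)` of `Λ ⊕ H` from its Leech part and its two
hyperbolic coordinates. -/
def glue (lam : Fin 12 → ℂ) (x y : ℂ) : V := fun i =>
  if h : (i : ℕ) < 12 then lam ⟨(i : ℕ), h⟩ else if (i : ℕ) = 12 then x else y

/-- The lattice `L = Λ ⊕ H` as a subset of `ℂ¹⁴`. -/
def Lset : Set V :=
  {v | (fun i : Fin 12 => v (Fin.castLE (by norm_num) i)) ∈ Leech ∧
    EisP (v 12) ∧ EisP (v 13)}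

/-- A root of `L`: a primitive lattice vector of norm `-3`. -/
def IsRoot (r : V) : Prop :=
  r ∈ Lset ∧ herm r r = -3 ∧
    ∀ α : ℂ, EisP α → ∀ y ∈ Lset, r = α • y → EisUnit α

/-- The `μ`-reflection in a vector `r`: `v ↦ v − (1−μ)·r·⟨r,v⟩/|r|²`. -/
def reflMap (μ : ℂ) (r v : V) : V := v - ((1 - μ) * herm r v / herm r r) • r

/-- The automorphism group of the lattice `L`. -/
def AutL : Subgroup (V ≃ₗ[ℂ] V) where
  carrier := {g | (∀ v : V, v ∈ Lset ↔ g v ∈ Lset) ∧ ∀ u v : V, herm (g u) (g v) = herm u v}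
  one_mem' := ⟨fun _ => Iff.rfl, fun _ _ => rfl⟩
  mul_mem' := by
    rintro f g ⟨hf1, hf2⟩ ⟨hg1, hg2⟩
    refine ⟨fun v => ?_, fun u v => ?_⟩
    · exact (hg1 v).trans (hf1 (g v))
    · exact (hf2 (g u) (g v)).trans (hg2 u v)
  inv_mem' := by
    rintro g ⟨hg1, hg2⟩
    refine ⟨fun v => ?_, fun u v => ?_⟩
    · have h := hg1 (g.symm v)
      have hv : g (g.symm v) = v := g.apply_symm_apply v
      rw [hv] at h
      exact h.symm
    · have h := hg2 (g.symm u) (g.symm v)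
      have hu : g (g.symm u) = u := g.apply_symm_apply u
      have hv : g (g.symm v) = v := g.apply_symm_apply v
      rw [hu, hv] at h
      exact h.symm

/-- The set of elements of `Aut(L)` acting as the `ω`-reflection in some root in `S`. -/
def ReflAutos (S : Set V) : Set (V ≃ₗ[ℂ] V) :=
  {g | g ∈ AutL ∧ ∃ r ∈ S, ∀ v, g v = reflMap ω r v}

/-- The reflection group `R(L)` of `L`. -/
def RL : Subgroup (V ≃ₗ[ℂ] V) := Subgroup.closure (ReflAutos {r | IsRoot r})

/-- Two roots are adjacent when `|⟨a,b⟩| = √3`. -/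
def Adj (a b : V) : Prop := ‖herm a b‖ = Real.sqrt 3

/-- A set of roots is connected if its adjacency graph is connected. -/
def ConnectedSet (Φ : Set V) : Prop :=
  ∀ a ∈ Φ, ∀ b ∈ Φ, Relation.ReflTransGen (fun x y => x ∈ Φ ∧ y ∈ Φ ∧ Adj x y) a b

/-- `Rad Φ` is the radical of a set `Φ` of roots: the closure of `Φ` under reflecting
members of the set in each other (and identification of unit multiples). -/
inductive Rad (Φ : Set V) : V → Prop
  | base {r : V} : r ∈ Φ → Rad Φ r
  | refl {a b : V} : Rad Φ a → Rad Φ b → Rad Φ (reflMap ω a b)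
  | inv {a b : V} : Rad Φ a → Rad Φ b → Rad Φ (reflMap (conj ω) a b)
  | unit {u : ℂ} {r : V} : EisUnit u → Rad Φ r → Rad Φ (u • r)

/-- The set `Ψ` of roots of the form `(λ; 1, θ(−3 − |λ|²)/6 + β + n)` with `λ ∈ Λ`,
`n ∈ ℤ`, and `β` chosen so that the last entry lies in `ℰ`. -/
def Psi8 : Set V :=
  {r | IsRoot r ∧ ∃ (lam : Fin 12 → ℂ) (β : ℝ) (n : ℤ),
    lam ∈ Leech ∧ r = glue lam 1 (θ * (-3 - normL lam) / 6 + (β : ℂ) + (n : ℂ))}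

/-!
The height of a root `v` is `|v₁₂|²`. It is nonzero because `Λ` has no vectors of norm `-3`, and
roots of height `1` are unit multiples of elements of `Ψ`. If the height exceeds `1`, rescale `v` to
`w` with `w₁₂ = 1`. As every point of `Λ ⊗ ℂ` is within squared distance `3` of `Λ`, some `s ∈ Ψ`
satisfies `-3 < Re ⟨s, w⟩ < 0` and `|Im ⟨s, w⟩| ≤ √3 / 2`, and then one of the reflections `φ_s`,
`φ_s⁻¹` lowers the height of `v`.

In real terms, the distance bound says that the Leech lattice has covering radius at most `√2`, and
this holds for every rootless even unimodular lattice of rank 24. Its theta series is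
determined by the absence of vectors of norm `2`, and counting the vectors of norm `4`, `6`, `8`
shows that every class modulo `2` has a representative of norm at most `8`, so the lattice points
nearest to a deep hole are at squared distance at most `8` from one another. Were the squared
radius of the hole greater than `2`, these points would contain an affine Dynkin diagram. The center
of that diagram defines a neighboring lattice, whose roots form a spherical 2-design since there is
no nonzero cusp form of weight `14`; this makes the center itself the hole, with squared radius `2`.
-/

/-! ### Modular forms of level one -/

section ModularForms

open UpperHalfPlane ModularForm ModularFormClass SlashInvariantFormClass MatrixGroups
  EisensteinSeries SlashInvariantForm Function
open scoped Manifold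

theorem differentiableOn_tsum_mul_pow {c : ℕ → ℂ}
    (hc : ∀ q : ℂ, ‖q‖ < 1 → Summable fun m ↦ c m * q ^ m) :
    DifferentiableOn ℂ (fun q ↦ ∑' m, c m * q ^ m) (Metric.ball 0 1) := by
  intro q hq
  obtain ⟨r, hqr, hr1⟩ := exists_between (mem_ball_zero_iff.1 hq)
  have hr0 : 0 ≤ r := (norm_nonneg q).trans hqr.le
  have hnorm : ‖(r : ℂ)‖ = r := by rw [Complex.norm_real, Real.norm_of_nonneg hr0]
  have hball : DifferentiableOn ℂ (fun q ↦ ∑' m, c m * q ^ m) (Metric.ball 0 r) := by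
    refine Complex.differentiableOn_tsum_of_summable_norm (u := fun m ↦ ‖c m‖ * r ^ m) ?_
      (fun m ↦ by fun_prop) Metric.isOpen_ball fun m w hw ↦ ?_
    · simpa only [norm_mul, norm_pow, hnorm] using (hc r (hnorm.trans_lt hr1)).norm
    · rw [norm_mul, norm_pow]
      gcongr
      exact (mem_ball_zero_iff.1 hw).le
  exact (hball.differentiableAt
    (Metric.isOpen_ball.mem_nhds (mem_ball_zero_iff.2 hqr))).differentiableWithinAt

section HasSum

variable {k : ℤ} {f : ℍ → ℂ} {c : ℕ → ℂ}

theorem summable_mul_pow_of_hasSum_qParam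
    (hf : ∀ τ : ℍ, HasSum (fun m ↦ c m • Periodic.qParam 1 (τ : ℂ) ^ m) (f τ)) {q : ℂ}
    (hq : ‖q‖ < 1) : Summable fun m ↦ c m * q ^ m := by
  by_cases hq0 : q = 0
  · refine summable_of_ne_finset_zero (s := {0}) fun m hm ↦ ?_
    rw [hq0, zero_pow (by simpa using hm), mul_zero]
  · have hpos := Periodic.im_invQParam_pos_of_norm_lt_one one_pos hq hq0
    simpa [Periodic.qParam_right_inv one_ne_zero hq0] using (hf ⟨_, hpos⟩).summable

theorem mdifferentiable_of_hasSum_qParam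
    (hf : ∀ τ : ℍ, HasSum (fun m ↦ c m • Periodic.qParam 1 (τ : ℂ) ^ m) (f τ)) : MDiff f := by
  have hq := differentiableOn_tsum_mul_pow fun q hq ↦ summable_mul_pow_of_hasSum_qParam hf hq
  rw [UpperHalfPlane.mdifferentiable_iff]
  refine (hq.comp (Periodic.differentiable_qParam (h := 1)).differentiableOn
    fun z hz ↦ ?_).congr fun z hz ↦ ?_
  · exact mem_ball_zero_iff.2 (Periodic.norm_qParam_lt_one one_pos hz)
  · simp only [comp_apply, ofComplex_apply_of_im_pos hz, ← (hf ⟨z, hz⟩).tsum_eq, smul_eq_mul]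

theorem slash_T_eq_of_hasSum_qParam
    (hf : ∀ τ : ℍ, HasSum (fun m ↦ c m • Periodic.qParam 1 (τ : ℂ) ^ m) (f τ)) :
    f ∣[k] ModularGroup.T = f := by
  ext z
  have hq : Periodic.qParam 1 (((1 : ℝ) +ᵥ z : ℍ) : ℂ) = Periodic.qParam 1 (z : ℂ) := by
    rw [coe_vadd, add_comm]
    simp only [Periodic.qParam, Complex.ofReal_one, div_one, mul_add, mul_one]
    exact Complex.exp_periodic _
  have hshift := hf ((1 : ℝ) +ᵥ z)
  rw [hq] at hshift
  rw [SL_slash_apply, modular_T_smul, hshift.unique (hf z), ModularGroup.denom_apply]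
  simp [ModularGroup.T]

theorem slash_S_eq_of_smul_S (hS : ∀ τ : ℍ, f (ModularGroup.S • τ) = (τ : ℂ) ^ k * f τ) :
    f ∣[k] ModularGroup.S = f := by
  ext z
  have hz : (z : ℂ) ≠ 0 := ne_zero z
  rw [SL_slash_apply, hS, ModularGroup.denom_S, zpow_neg]
  field_simp

theorem exists_modularForm_of_hasSum_qParam
    (hf : ∀ τ : ℍ, HasSum (fun m ↦ c m • Periodic.qParam 1 (τ : ℂ) ^ m) (f τ))
    (hS : ∀ τ : ℍ, f (ModularGroup.S • τ) = (τ : ℂ) ^ k * f τ) :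
    ∃ F : ModularForm 𝒮ℒ k, ∀ m, (qExpansion 1 F).coeff m = c m := by
  have hslash := slash_action_generators_SL2Z (slash_S_eq_of_smul_S hS)
    (slash_T_eq_of_hasSum_qParam hf)
  let F : ModularForm 𝒮ℒ k :=
    { toFun := f
      slash_action_eq' := by
        rintro _ ⟨γ, rfl⟩
        exact hslash γ
      holo' := mdifferentiable_of_hasSum_qParam hf
      bdd_at_cusps' := by
        intro c hc
        rw [Subgroup.IsArithmetic.isCusp_iff_isCusp_SL2Z] at hc
        rw [OnePoint.isBoundedAt_iff_forall_SL2Z hc]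
        intro γ _
        rw [hslash γ]
        exact isBoundedAtImInfty_of_hasSum_qExpansion one_pos hf }
  exact ⟨F, fun m ↦ (ModularFormClass.qExpansion_coeff_unique (f := F) one_pos
    one_mem_strictPeriods_SL hf m).symm⟩

end HasSum

/-- Dividing by the discriminant lands in weight two, where there are no forms. -/
theorem qExpansion_eq_zero_of_weight_fourteen (F : ModularForm 𝒮ℒ 14)
    (h0 : (qExpansion 1 F).coeff 0 = 0) : qExpansion 1 F = 0 := by
  have hquot : CuspForm.discriminantEquiv (toCuspForm F h0) = 0 :=
    rank_zero_iff_forall_zero.1 levelOne_weight_two_rank_zero _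
  rw [qExpansion_eq_qExpansion_discriminant_mul F h0, hquot]
  simp [qExpansion_zero]

theorem coeff_qExpansion_E₄ (m : ℕ) : (qExpansion 1 E₄).coeff m =
    if m = 0 then 1 else 240 * (ArithmeticFunction.sigma 3 m : ℂ) := by
  have hB : bernoulli 4 = -1 / 30 := by decide +kernel
  rw [E_qExpansion_coeff _ ⟨2, rfl⟩]
  norm_num [hB]

theorem coeff_qExpansion_E₆ (m : ℕ) : (qExpansion 1 E₆).coeff m =
    if m = 0 then 1 else -504 * (ArithmeticFunction.sigma 5 m : ℂ) := by
  have hB : bernoulli 6 = 1 / 42 := by decide +kernel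
  rw [E_qExpansion_coeff _ ⟨3, rfl⟩]
  norm_num [hB]

theorem coeff_qExpansion_E₄_pow_three :
    (qExpansion 1 E₄ ^ 3).coeff 0 = 1 ∧ (qExpansion 1 E₄ ^ 3).coeff 1 = 720 ∧
      (qExpansion 1 E₄ ^ 3).coeff 2 = 179280 ∧ (qExpansion 1 E₄ ^ 3).coeff 3 = 16954560 ∧
      (qExpansion 1 E₄ ^ 3).coeff 4 = 396974160 := by
  have hσ₁ : ArithmeticFunction.sigma 3 1 = 1 := by decide +kernel
  have hσ₂ : ArithmeticFunction.sigma 3 2 = 9 := by decide +kernel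
  have hσ₃ : ArithmeticFunction.sigma 3 3 = 28 := by decide +kernel
  have hσ₄ : ArithmeticFunction.sigma 3 4 = 73 := by decide +kernel
  refine ⟨?_, ?_, ?_, ?_, ?_⟩ <;>
  norm_num [pow_succ, PowerSeries.coeff_mul, Finset.Nat.antidiagonal_succ, coeff_qExpansion_E₄,
    hσ₁, hσ₂, hσ₃, hσ₄]

theorem coeff_qExpansion_E₆_sq :
    (qExpansion 1 E₆ ^ 2).coeff 0 = 1 ∧ (qExpansion 1 E₆ ^ 2).coeff 1 = -1008 ∧
      (qExpansion 1 E₆ ^ 2).coeff 2 = 220752 ∧ (qExpansion 1 E₆ ^ 2).coeff 3 = 16519104 ∧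
      (qExpansion 1 E₆ ^ 2).coeff 4 = 399517776 := by
  have hσ₁ : ArithmeticFunction.sigma 5 1 = 1 := by decide +kernel
  have hσ₂ : ArithmeticFunction.sigma 5 2 = 33 := by decide +kernel
  have hσ₃ : ArithmeticFunction.sigma 5 3 = 244 := by decide +kernel
  have hσ₄ : ArithmeticFunction.sigma 5 4 = 1057 := by decide +kernel
  refine ⟨?_, ?_, ?_, ?_, ?_⟩ <;>
  norm_num [sq, PowerSeries.coeff_mul, Finset.Nat.antidiagonal_succ, coeff_qExpansion_E₆,
    hσ₁, hσ₂, hσ₃, hσ₄]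

/-- The extremal form of weight twelve: the theta series of an even unimodular lattice of rank 24
without roots. -/
def extremalForm : ModularForm 𝒮ℒ 12 :=
  (7 / 12 : ℂ) • (E₄.pow 3).mcast (by norm_num) + (5 / 12 : ℂ) • (E₆.pow 2).mcast (by norm_num)

theorem qExpansion_extremalForm : qExpansion 1 extremalForm =
    (7 / 12 : ℂ) • qExpansion 1 E₄ ^ 3 + (5 / 12 : ℂ) • qExpansion 1 E₆ ^ 2 := by
  have hadd := ModularForm.qExpansion_add one_pos one_mem_strictPeriods_SL
    ((7 / 12 : ℂ) • (E₄.pow 3).mcast (b := 12) (by norm_num))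
    ((5 / 12 : ℂ) • (E₆.pow 2).mcast (b := 12) (by norm_num))
  have hA := ModularForm.qExpansion_smul one_pos one_mem_strictPeriods_SL (7 / 12 : ℂ)
    ((E₄.pow 3).mcast (b := 12) (by norm_num))
  have hB := ModularForm.qExpansion_smul one_pos one_mem_strictPeriods_SL (5 / 12 : ℂ)
    ((E₆.pow 2).mcast (b := 12) (by norm_num))
  rw [ModularForm.qExpansion_mcast,
    ModularForm.qExpansion_pow one_pos one_mem_strictPeriods_SL] at hA hB
  exact hadd.trans (congrArg₂ (· + ·) hA hB)

theorem eq_extremalForm {F : ModularForm 𝒮ℒ 12} (h0 : (qExpansion 1 F).coeff 0 = 1)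
    (h1 : (qExpansion 1 F).coeff 1 = 0) : F = extremalForm := by
  obtain ⟨hA0, hA1, -⟩ := coeff_qExpansion_E₄_pow_three
  obtain ⟨hB0, hB1, -⟩ := coeff_qExpansion_E₆_sq
  have horder : ((2 : ℕ) : ℕ∞) ≤ (qExpansion 1 (F - extremalForm)).order := by
    refine PowerSeries.le_order _ _ fun i hi ↦ ?_
    have hi' : i < 2 := mod_cast hi
    rw [ModularForm.qExpansion_sub one_pos one_mem_strictPeriods_SL F extremalForm,
      qExpansion_extremalForm]
    interval_cases i <;>
    · simp only [map_sub, map_add, PowerSeries.coeff_smul, h0, h1, hA0, hA1, hB0, hB1, smul_eq_mul]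
      norm_num
  refine sub_eq_zero.1 (sturm_bound_levelOne (lt_of_lt_of_le ?_ horder))
  exact Nat.cast_lt.2 (by decide)

theorem coeff_qExpansion_extremalForm :
    (qExpansion 1 extremalForm).coeff 2 = 196560 ∧
      (qExpansion 1 extremalForm).coeff 3 = 16773120 ∧
      (qExpansion 1 extremalForm).coeff 4 = 398034000 := by
  obtain ⟨-, -, hA2, hA3, hA4⟩ := coeff_qExpansion_E₄_pow_three
  obtain ⟨-, -, hB2, hB3, hB4⟩ := coeff_qExpansion_E₆_sq
  simp only [qExpansion_extremalForm, map_add, PowerSeries.coeff_smul, hA2, hA3, hA4, hB2, hB3,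
    hB4, smul_eq_mul]
  norm_num

end ModularForms

/-! ### Poisson summation -/

section PoissonSummation

open MeasureTheory Filter Topology UnitAddTorus Set

variable {ι : Type*}

/-- An integer vector, viewed as a real vector. -/
def intVec (n : ι → ℤ) : ι → ℝ := fun i ↦ n i

theorem intVec_add (m n : ι → ℤ) : intVec (m + n) = intVec m + intVec n := by
  ext i; simp [intVec]

variable (ι) in
/-- The projection `ℝ^ι → ℝ^ι / ℤ^ι`. -/
def toTorus : C(ι → ℝ, UnitAddTorus ι) :=
  ⟨Pi.map fun _ x ↦ (x : UnitAddCircle), by fun_prop⟩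

theorem isOpenQuotientMap_toTorus : IsOpenQuotientMap (toTorus ι) :=
  IsOpenQuotientMap.piMap fun _ ↦ QuotientAddGroup.isOpenQuotientMap_mk

theorem exists_eq_add_intVec_of_toTorus_eq {x y : ι → ℝ} (hxy : toTorus ι x = toTorus ι y) :
    ∃ m : ι → ℤ, y = x + intVec m := by
  have hcoord : ∀ i, ∃ n : ℤ, y i = x i + n := fun i ↦ by
    have hzero : ((y i - x i : ℝ) : UnitAddCircle) = 0 := by
      have hi : ((x i : ℝ) : UnitAddCircle) = (y i : ℝ) := congrFun hxy i
      rw [AddCircle.coe_sub, hi, sub_self]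
    obtain ⟨n, hn⟩ := (AddCircle.coe_eq_zero_iff 1).1 hzero
    exact ⟨n, by linarith [show (n : ℝ) = y i - x i by simpa using hn]⟩
  choose m hm using hcoord
  exact ⟨m, funext hm⟩

section Cubes

/-- The half-open unit cube with lower corner `m ∈ ℤ^ι`. -/
def unitCube (m : ι → ℤ) : Set (ι → ℝ) := {x | ∀ i, x i ∈ Ioc (m i : ℝ) (m i + 1)}

theorem measurableSet_unitCube [Finite ι] (m : ι → ℤ) : MeasurableSet (unitCube m) := by
  have hpi : unitCube m = Set.pi univ fun i ↦ Ioc (m i : ℝ) (m i + 1) := by ext; simp [unitCube]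
  rw [hpi]
  exact MeasurableSet.univ_pi fun i ↦ measurableSet_Ioc

theorem pairwise_disjoint_unitCube :
    Pairwise (Function.onFun Disjoint (unitCube : (ι → ℤ) → Set (ι → ℝ))) := by
  intro m m' hmm'
  refine Set.disjoint_left.2 fun x hx hx' ↦ hmm' (funext fun i ↦ ?_)
  have hlt : (m i : ℝ) < m' i + 1 := (hx i).1.trans_le (hx' i).2
  have hlt' : (m' i : ℝ) < m i + 1 := (hx' i).1.trans_le (hx i).2
  norm_cast at hlt hlt'
  omega

theorem iUnion_unitCube : ⋃ m, (unitCube m : Set (ι → ℝ)) = univ := by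
  refine eq_univ_of_forall fun x ↦ mem_iUnion.2 ⟨fun i ↦ ⌈x i⌉ - 1, fun i ↦ ⟨?_, ?_⟩⟩ <;> push_cast
  · linarith [Int.ceil_lt_add_one (x i)]
  · linarith [Int.le_ceil (x i)]

theorem preimage_add_intVec_unitCube (m : ι → ℤ) :
    (fun x ↦ x + intVec m) ⁻¹' unitCube m = unitCube 0 := by
  ext x
  simp only [unitCube, intVec, mem_preimage, mem_ofPred_eq, Pi.add_apply, mem_Ioc, Pi.zero_apply,
    Int.cast_zero, zero_add]
  refine forall_congr' fun i ↦ ?_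
  constructor <;> rintro ⟨_, _⟩ <;> constructor <;> linarith

variable [Fintype ι]

theorem norm_le_one_of_mem_unitCube_zero {x : ι → ℝ} (hx : x ∈ unitCube 0) : ‖x‖ ≤ 1 := by
  refine (pi_norm_le_iff_of_nonneg zero_le_one).2 fun i ↦ ?_
  obtain ⟨hpos, hle⟩ : 0 < x i ∧ x i ≤ 1 := by simpa using hx i
  rwa [Real.norm_of_nonneg hpos.le]

theorem volume_unitCube_zero_lt_top : volume (unitCube 0 : Set (ι → ℝ)) < ⊤ :=
  (measure_mono fun _ hx ↦ mem_closedBall_zero_iff.2 (norm_le_one_of_mem_unitCube_zero hx)).trans_lt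
    (measure_closedBall_lt_top (x := 0) (r := 1))

theorem setIntegral_unitCube (φ : (ι → ℝ) → ℂ) (m : ι → ℤ) :
    ∫ x in unitCube m, φ x = ∫ x in unitCube 0, φ (x + intVec m) := by
  rw [← preimage_add_intVec_unitCube m]
  exact ((measurePreserving_add_right volume (intVec m)).setIntegral_preimage_emb
    (measurableEmbedding_addRight (intVec m)) φ (unitCube m)).symm

end Cubes

section Periodization

/-- The sum of `h` over a coset of `ℤ^ι`; it is `0` where the sum diverges. -/
def periodization (h : (ι → ℝ) → ℂ) (x : ι → ℝ) : ℂ := ∑' n : ι → ℤ, h (x + intVec n)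

theorem periodization_add_intVec (h : (ι → ℝ) → ℂ) (x : ι → ℝ) (m : ι → ℤ) :
    periodization h (x + intVec m) = periodization h x := by
  unfold periodization
  rw [← (Equiv.addLeft m).tsum_eq fun n ↦ h (x + intVec n)]
  simp only [Equiv.coe_addLeft, intVec_add, add_assoc]

theorem periodization_factorsThrough_toTorus {h : (ι → ℝ) → ℂ} :
    Function.FactorsThrough (periodization h) (toTorus ι) := fun x y hxy ↦ by
  obtain ⟨m, rfl⟩ := exists_eq_add_intVec_of_toTorus_eq hxy
  exact (periodization_add_intVec h x m).symm

variable [Fintype ι]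

/-- The translates of `h` by `ℤ^ι` are dominated by a summable family, uniformly on balls. -/
def LocallyDominated (h : (ι → ℝ) → ℂ) : Prop :=
  ∀ R : ℝ, ∃ u : (ι → ℤ) → ℝ, Summable u ∧ ∀ n x, ‖x‖ ≤ R → ‖h (x + intVec n)‖ ≤ u n

variable {h : (ι → ℝ) → ℂ}

theorem continuous_periodization (hc : Continuous h) (hb : LocallyDominated h) :
    Continuous (periodization h) := by
  refine continuous_iff_continuousAt.2 fun x ↦ ?_
  obtain ⟨u, hu, hux⟩ := hb (‖x‖ + 1)
  have hball : ContinuousOn (periodization h) (Metric.ball x 1) := by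
    refine continuousOn_tsum (fun n ↦ by fun_prop) hu fun n y hy ↦ hux n y ?_
    linarith [norm_le_norm_add_norm_sub x y, mem_ball_iff_norm'.1 hy]
  exact hball.continuousAt (Metric.ball_mem_nhds x one_pos)

theorem integral_mul_eq_setIntegral_mul_periodization (hc : Continuous h) (hi : Integrable h)
    (hb : LocallyDominated h) {e : (ι → ℝ) → ℂ} (hec : Continuous e) (hen : ∀ x, ‖e x‖ = 1)
    (hep : ∀ x m, e (x + intVec m) = e x) :
    ∫ x, e x * h x = ∫ x in unitCube 0, e x * periodization h x := by
  have hint : Integrable fun x ↦ e x * h x :=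
    hi.bdd_mul hec.aestronglyMeasurable (.of_forall fun x ↦ (hen x).le)
  obtain ⟨u, hu, hux⟩ := hb 1
  have hbound : ∀ m, ∀ x ∈ unitCube 0, ‖e x * h (x + intVec m)‖ ≤ u m := fun m x hx ↦ by
    rw [norm_mul, hen, one_mul]
    exact hux m x (norm_le_one_of_mem_unitCube_zero hx)
  have hsum : HasSum (fun m ↦ ∫ x in unitCube 0, e x * h (x + intVec m))
      (∫ x in unitCube 0, ∑' m, e x * h (x + intVec m)) := by
    refine hasSum_integral_of_summable_integral_norm (fun m ↦ ?_) ?_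
    · refine Measure.integrableOn_of_bounded volume_unitCube_zero_lt_top.ne (M := u m) ?_ ?_
      · exact (hec.mul (by fun_prop)).aestronglyMeasurable
      · exact (ae_restrict_iff' (measurableSet_unitCube 0)).2 (.of_forall (hbound m))
    · refine Summable.of_nonneg_of_le (fun m ↦ integral_nonneg fun x ↦ norm_nonneg _)
        (fun m ↦ ?_) (hu.mul_right (volume.real (unitCube (0 : ι → ℤ))))
      exact (Real.le_norm_self _).trans <| norm_setIntegral_le_of_norm_le_const
        volume_unitCube_zero_lt_top fun x hx ↦ (norm_norm _).trans_le (hbound m x hx)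
  calc ∫ x, e x * h x = ∑' m, ∫ x in unitCube m, e x * h x := by
        rw [← integral_iUnion measurableSet_unitCube pairwise_disjoint_unitCube
          hint.integrableOn, iUnion_unitCube, setIntegral_univ]
    _ = ∑' m, ∫ x in unitCube 0, e x * h (x + intVec m) := by
        refine tsum_congr fun m ↦ ?_
        simp only [setIntegral_unitCube (fun x ↦ e x * h x) m, hep]
    _ = ∫ x in unitCube 0, e x * periodization h x := by
        simp only [hsum.tsum_eq, tsum_mul_left, periodization]

/-- The descent of `periodization h` to the torus. -/
def torusPeriodization (hc : Continuous h) (hb : LocallyDominated h) : C(UnitAddTorus ι, ℂ) :=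
  Topology.IsQuotientMap.lift (f := toTorus ι) isOpenQuotientMap_toTorus.isQuotientMap
    ⟨periodization h, continuous_periodization hc hb⟩ periodization_factorsThrough_toTorus

theorem torusPeriodization_toTorus (hc : Continuous h) (hb : LocallyDominated h) (x : ι → ℝ) :
    torusPeriodization hc hb (toTorus ι x) = periodization h x :=
  congrArg (fun k ↦ k x) (Topology.IsQuotientMap.lift_comp (f := toTorus ι)
    isOpenQuotientMap_toTorus.isQuotientMap ⟨periodization h, continuous_periodization hc hb⟩
    periodization_factorsThrough_toTorus)

end Periodization

variable [Fintype ι]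

/-- The character `x ↦ e^{-2πi n·x}` of `ℝ^ι`. -/
def latticeChar (n : ι → ℤ) (x : ι → ℝ) : ℂ :=
  Complex.exp (-(2 * Real.pi * Complex.I * ∑ i, (n i : ℂ) * x i))

theorem continuous_latticeChar (n : ι → ℤ) : Continuous (latticeChar n) := by
  unfold latticeChar; fun_prop

theorem norm_latticeChar (n : ι → ℤ) (x : ι → ℝ) : ‖latticeChar n x‖ = 1 := by
  rw [latticeChar, show -(2 * Real.pi * Complex.I * ∑ i, (n i : ℂ) * x i) =
    ((-(2 * Real.pi * ∑ i, (n i : ℝ) * x i) : ℝ) : ℂ) * Complex.I by push_cast; ring]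
  exact Complex.norm_exp_ofReal_mul_I _

theorem latticeChar_add_intVec (n : ι → ℤ) (x : ι → ℝ) (m : ι → ℤ) :
    latticeChar n (x + intVec m) = latticeChar n x := by
  refine Complex.exp_eq_exp_iff_exists_int.2 ⟨-∑ i, n i * m i, ?_⟩
  simp only [intVec, Pi.add_apply]
  push_cast
  simp only [mul_add, Finset.sum_add_distrib]
  ring

theorem mFourier_neg_toTorus (n : ι → ℤ) (x : ι → ℝ) :
    mFourier (-n) (toTorus ι x) = latticeChar n x := by
  simp only [mFourier, toTorus, ContinuousMap.coe_mk, Pi.map_apply, fourier_coe_apply, latticeChar]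
  rw [← Complex.exp_sum, Finset.mul_sum, ← Finset.sum_neg_distrib]
  refine congrArg _ (Finset.sum_congr rfl fun i _ ↦ ?_)
  simp only [Pi.neg_apply, Int.cast_neg, Complex.ofReal_one, div_one]
  ring

variable {h : (ι → ℝ) → ℂ}

theorem mFourierCoeff_torusPeriodization (hc : Continuous h) (hi : Integrable h)
    (hb : LocallyDominated h) (n : ι → ℤ) :
    mFourierCoeff (torusPeriodization hc hb) n = ∫ x, latticeChar n x * h x := by
  have hcube : {x : ι → ℝ | ∀ i, x i ∈ Ioc ((0 : ι → ℝ) i) ((0 : ι → ℝ) i + 1)} = unitCube 0 := by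
    ext x; simp [unitCube]
  rw [integral_mul_eq_setIntegral_mul_periodization hc hi hb (continuous_latticeChar n)
    (norm_latticeChar n) (latticeChar_add_intVec n), mFourierCoeff_eq_integral _ n 0, hcube]
  refine setIntegral_congr_fun (measurableSet_unitCube 0) fun x _ ↦ ?_
  exact congrArg₂ (· * ·) (mFourier_neg_toTorus n x) (torusPeriodization_toTorus hc hb x)

theorem tsum_intVec_eq_tsum_integral_latticeChar (hc : Continuous h) (hi : Integrable h)
    (hb : LocallyDominated h) (hs : Summable fun n ↦ ∫ x, latticeChar n x * h x) :
    ∑' n, h (intVec n) = ∑' n, ∫ x, latticeChar n x * h x := by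
  have hcoeff := mFourierCoeff_torusPeriodization hc hi hb
  have hseries := hasSum_mFourier_series_apply_of_summable (f := torusPeriodization hc hb)
    (by rwa [funext hcoeff]) (toTorus ι 0)
  have hchar : ∀ n : ι → ℤ, mFourier n (toTorus ι 0) = 1 := fun n ↦ by
    simpa [latticeChar] using mFourier_neg_toTorus (-n) 0
  calc ∑' n, h (intVec n) = torusPeriodization hc hb (toTorus ι 0) := by
        simp only [torusPeriodization_toTorus, periodization, zero_add]
    _ = ∑' n, ∫ x, latticeChar n x * h x := by
        simp only [← hseries.tsum_eq, hcoeff, hchar, smul_eq_mul, mul_one]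

end PoissonSummation

/-! ### Even unimodular lattices -/

section EvenUnimodular

open Module

variable {E : Type*} [NormedAddCommGroup E] [InnerProductSpace ℝ E]

/-- Even unimodular lattices in a Euclidean space: all norms `‖v‖²` are even integers, and the
lattice contains its dual. -/
structure EvenUnimodular (L : Submodule ℤ E) : Prop where
  even : ∀ v ∈ L, ∃ k : ℤ, ‖v‖ ^ 2 = 2 * k
  dual : ∀ x : E, (∀ v ∈ L, ∃ k : ℤ, inner ℝ x v = k) → x ∈ L

namespace EvenUnimodular

variable {L : Submodule ℤ E}

theorem exists_inner_eq_intCast (hL : EvenUnimodular L) {u v : E} (hu : u ∈ L) (hv : v ∈ L) :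
    ∃ k : ℤ, inner ℝ u v = k := by
  obtain ⟨a, ha⟩ := hL.even u hu
  obtain ⟨b, hb⟩ := hL.even v hv
  obtain ⟨c, hc⟩ := hL.even (u + v) (L.add_mem hu hv)
  refine ⟨c - a - b, ?_⟩
  push_cast
  linarith [norm_add_sq_real u v]

theorem two_le_norm_sq (hL : EvenUnimodular L) {v : E} (hv : v ∈ L) (h0 : v ≠ 0) :
    2 ≤ ‖v‖ ^ 2 := by
  obtain ⟨k, hk⟩ := hL.even v hv
  have hpos : 0 < ‖v‖ ^ 2 := by positivity
  rw [hk] at hpos ⊢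
  norm_cast at hpos ⊢
  omega

theorem discreteTopology (hL : EvenUnimodular L) : DiscreteTopology L := by
  refine discreteTopology_of_isOpen_singleton_zero (Metric.isOpen_iff.2 fun x hx ↦ ?_)
  obtain rfl := Set.mem_singleton_iff.1 hx
  refine ⟨1, one_pos, fun y hy ↦ by_contra fun hne ↦ ?_⟩
  have hlt : ‖(y : E)‖ < 1 := by simpa [dist_eq_norm] using hy
  nlinarith [hL.two_le_norm_sq y.2 (by simpa using hne), norm_nonneg (y : E)]

theorem eq_zero_of_forall_inner_eq_zero (hL : EvenUnimodular L) {x : E}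
    (hx : ∀ v ∈ L, inner ℝ x v = 0) : x = 0 := by
  by_contra hne
  have hmem : (1 / ‖x‖) • x ∈ L :=
    hL.dual _ fun v hv ↦ ⟨0, by rw [inner_smul_left, hx v hv, mul_zero, Int.cast_zero]⟩
  have hnorm : ‖(1 / ‖x‖) • x‖ = 1 := by simp [norm_smul, hne]
  have hge := hL.two_le_norm_sq hmem (norm_ne_zero_iff.1 (by rw [hnorm]; exact one_ne_zero))
  rw [hnorm] at hge
  norm_num at hge

variable [FiniteDimensional ℝ E]

theorem isZLattice (hL : EvenUnimodular L) [DiscreteTopology L] : IsZLattice ℝ L where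
  span_top := by
    rw [← Submodule.orthogonal_eq_bot_iff, Submodule.eq_bot_iff]
    refine fun x hx ↦ hL.eq_zero_of_forall_inner_eq_zero fun v hv ↦ ?_
    rw [real_inner_comm]
    exact (Submodule.mem_orthogonal _ _).1 hx v (Submodule.subset_span hv)

end EvenUnimodular

end EvenUnimodular

section LatticePoisson

open MeasureTheory Module
open scoped FourierTransform

variable {E : Type*} [NormedAddCommGroup E]

/-- `g(x) = O((1 + ‖x‖)^{-k})`. -/
def HasDecay (k : ℕ) (g : E → ℂ) : Prop :=
  ∃ C : ℝ, ∀ x, ‖g x‖ ≤ C * (1 + ‖x‖)⁻¹ ^ k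

variable [InnerProductSpace ℝ E] [FiniteDimensional ℝ E] {k : ℕ} {g : E → ℂ} {L : Submodule ℤ E}

theorem summable_one_add_norm_inv_pow [DiscreteTopology L] [IsZLattice ℝ L]
    (hk : finrank ℝ E < k) : Summable fun v : L ↦ (1 + ‖(v : E)‖)⁻¹ ^ k := by
  classical
  have hpow := ZLattice.summable_norm_pow_inv L k (by rwa [ZLattice.rank ℝ L])
  have hzero : Summable fun v : L ↦ if v = 0 then (1 : ℝ) else 0 :=
    summable_of_ne_finset_zero (s := {0}) fun v hv ↦ if_neg (by simpa using hv)
  refine Summable.of_nonneg_of_le (fun v ↦ by positivity) (fun v ↦ ?_) (hpow.add hzero)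
  rcases eq_or_ne v 0 with rfl | hv
  · simp
  · have hpos : 0 < ‖(v : E)‖ := by simpa using hv
    rw [if_neg hv, add_zero]
    gcongr
    simp

theorem HasDecay.summable (hg : HasDecay k g) [DiscreteTopology L] [IsZLattice ℝ L]
    (hk : finrank ℝ E < k) : Summable fun v : L ↦ g v := by
  obtain ⟨C, hC⟩ := hg
  exact .of_norm_bounded ((summable_one_add_norm_inv_pow hk).mul_left C) fun v ↦ hC v

section Coordinates

variable {ι : Type*} [Fintype ι] [DiscreteTopology L] [IsZLattice ℝ L]

/-- Real coordinates on `E` with respect to a `ℤ`-basis of the lattice `L`. -/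
def latticeCoords (b : Basis ι ℤ L) : (ι → ℝ) ≃L[ℝ] E := (b.ofZLatticeBasis ℝ L).equivFunL.symm

theorem latticeCoords_apply (b : Basis ι ℤ L) (x : ι → ℝ) :
    latticeCoords b x = ∑ i, x i • (b i : E) := by
  refine ((b.ofZLatticeBasis ℝ L).equivFun_symm_apply x).trans ?_
  simp only [Basis.ofZLatticeBasis_apply]

theorem latticeCoords_intVec (b : Basis ι ℤ L) (n : ι → ℤ) :
    latticeCoords b (intVec n) = (b.equivFun.symm n : L) := by
  simp [latticeCoords_apply, Basis.equivFun_symm_apply, intVec, Int.cast_smul_eq_zsmul]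

theorem HasDecay.locallyDominated (hg : HasDecay k g) (hk : finrank ℝ E < k) (b : Basis ι ℤ L) :
    LocallyDominated fun x ↦ g (latticeCoords b x) := fun R ↦ by
  obtain ⟨C, hC⟩ := hg
  set K : ℝ := ‖(latticeCoords b : (ι → ℝ) →L[ℝ] E)‖
  refine ⟨fun n ↦ C * (1 + K * |R|) ^ k * (1 + ‖(b.equivFun.symm n : E)‖)⁻¹ ^ k,
    (b.equivFun.symm.toEquiv.summable_iff.2 (summable_one_add_norm_inv_pow hk)).mul_left _,
    fun n x hx ↦ (hC _).trans ?_⟩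
  have hC0 : 0 ≤ C := by simpa using (norm_nonneg _).trans (hC 0)
  beta_reduce
  rw [map_add, latticeCoords_intVec, mul_assoc, ← mul_pow]
  set v : E := (b.equivFun.symm n : E)
  have hBx : ‖latticeCoords b x‖ ≤ K * |R| :=
    ((latticeCoords b : (ι → ℝ) →L[ℝ] E).le_opNorm x).trans
      (by gcongr; exact hx.trans (le_abs_self R))
  have hv : ‖v‖ ≤ ‖latticeCoords b x + v‖ + ‖latticeCoords b x‖ := by
    simpa using norm_sub_le (latticeCoords b x + v) (latticeCoords b x)
  gcongr
  rw [← div_eq_mul_inv, inv_eq_one_div, div_le_div_iff₀ (by positivity) (by positivity)]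
  have hK : 0 ≤ K * |R| := by positivity
  nlinarith [norm_nonneg (latticeCoords b x + v)]

end Coordinates

namespace EvenUnimodular

variable {ι : Type*} [Fintype ι] [DiscreteTopology L] [IsZLattice ℝ L]

theorem exists_mem_inner_latticeCoords_eq (hL : EvenUnimodular L) (b : Basis ι ℤ L) (n : ι → ℤ) :
    ∃ w : L, ∀ x, inner ℝ (latticeCoords b x) (w : E) = ∑ i, (n i : ℝ) * x i := by
  let φ : StrongDual ℝ E := LinearMap.toContinuousLinearMap
    (∑ i, (n i : ℝ) • (b.ofZLatticeBasis ℝ L).coord i)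
  have hφ : ∀ x, inner ℝ (latticeCoords b x) ((InnerProductSpace.toDual ℝ E).symm φ) =
      ∑ i, (n i : ℝ) * x i := fun x ↦ by
    rw [real_inner_comm, InnerProductSpace.toDual_symm_apply]
    simp only [φ, LinearMap.coe_toContinuousLinearMap', LinearMap.sum_apply, LinearMap.smul_apply,
      smul_eq_mul]
    refine Finset.sum_congr rfl fun i _ ↦ congrArg _ ?_
    exact congrFun ((b.ofZLatticeBasis ℝ L).equivFun.apply_symm_apply x) i
  refine ⟨⟨_, hL.dual _ fun v hv ↦ ?_⟩, hφ⟩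
  obtain ⟨m, hm⟩ := b.equivFun.symm.surjective ⟨v, hv⟩
  refine ⟨∑ i, n i * m i, ?_⟩
  rw [real_inner_comm, show v = latticeCoords b (intVec m) by rw [latticeCoords_intVec, hm], hφ]
  simp [intVec]

theorem exists_equiv_inner_latticeCoords (hL : EvenUnimodular L) (b : Basis ι ℤ L) :
    ∃ e : (ι → ℤ) ≃ L, ∀ n x, inner ℝ (latticeCoords b x) (e n : E) = ∑ i, (n i : ℝ) * x i := by
  classical
  choose w hw using hL.exists_mem_inner_latticeCoords_eq b
  refine ⟨Equiv.ofBijective w ⟨fun n n' hnn' ↦ funext fun i ↦ ?_, fun v ↦ ?_⟩, hw⟩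
  · have hi := (hw n (Pi.single i 1)).symm.trans (hnn' ▸ hw n' (Pi.single i 1))
    simpa [Pi.single_apply] using hi
  · choose n hn using fun i ↦ hL.exists_inner_eq_intCast (b i).2 v.2
    refine ⟨n, Subtype.ext (ext_inner_left ℝ fun y ↦ ?_)⟩
    obtain ⟨x, rfl⟩ := (latticeCoords b).surjective y
    rw [hw]
    simp only [latticeCoords_apply, sum_inner, inner_smul_left, hn, conj_trivial, mul_comm]

end EvenUnimodular

variable [MeasurableSpace E] [BorelSpace E]

theorem HasDecay.integrable (hg : HasDecay k g) (hk : finrank ℝ E < k) (hc : Continuous g) :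
    Integrable g := by
  obtain ⟨C, hC⟩ := hg
  have hdom : Integrable fun x : E ↦ C * (1 + ‖x‖)⁻¹ ^ k := by
    simpa [Real.rpow_neg, add_nonneg] using
      (integrable_one_add_norm (μ := volume) (r := k) (by exact_mod_cast hk)).const_mul C
  exact hdom.mono' hc.aestronglyMeasurable (.of_forall hC)

theorem exists_map_volume_eq_smul {F : Type*} [NormedAddCommGroup F] [NormedSpace ℝ F]
    [MeasureSpace F] [BorelSpace F] [(volume : Measure F).IsAddHaarMeasure] (B : F ≃L[ℝ] E) :
    ∃ c : NNReal, Measure.map B volume = c • (volume : Measure E) :=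
  have : (Measure.map B volume).IsAddHaarMeasure := B.isAddHaarMeasure_map _
  ⟨_, Measure.isAddLeftInvariant_eq_smul _ volume⟩

-- The constant is the covolume up to normalisation, hence `1`; later uses only compare two sums.
theorem EvenUnimodular.exists_tsum_eq_mul_tsum_fourier (hL : EvenUnimodular L)
    (hk : finrank ℝ E < k) : ∃ κ : ℂ, ∀ g : E → ℂ, Continuous g → HasDecay k g →
      (Summable fun v : L ↦ 𝓕 g (v : E)) → ∑' v : L, g v = κ * ∑' v : L, 𝓕 g (v : E) := by
  have := hL.discreteTopology
  have := hL.isZLattice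
  let b := Module.Free.chooseBasis ℤ L
  let B := latticeCoords b
  obtain ⟨c, hc⟩ := exists_map_volume_eq_smul B
  obtain ⟨e, he⟩ := hL.exists_equiv_inner_latticeCoords b
  refine ⟨c, fun g hgc hg hgs ↦ ?_⟩
  have hintegral : ∀ φ : E → ℂ, ∫ x, φ (B x) = c * ∫ y, φ y := fun φ ↦ by
    have hmap := integral_map_equiv B.toHomeomorph.toMeasurableEquiv φ (μ := volume)
    rw [show Measure.map B.toHomeomorph.toMeasurableEquiv volume = c • volume from hc,
      integral_smul_nnreal_measure, NNReal.smul_def] at hmap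
    simpa using hmap.symm
  have hcoeff : ∀ n, ∫ x, latticeChar n x * g (B x) = c * 𝓕 g (e n : E) := fun n ↦ by
    rw [Real.fourier_eq', ← hintegral]
    refine integral_congr_ae (.of_forall fun x ↦ congrArg (Complex.exp · * g (B x)) ?_)
    simp only [B, he]
    push_cast
    ring
  have hint : Integrable fun x ↦ g (B x) :=
    (integrable_map_equiv B.toHomeomorph.toMeasurableEquiv g).1 <| by
      rw [show Measure.map B.toHomeomorph.toMeasurableEquiv volume = c • volume from hc]
      exact (hg.integrable hk hgc).smul_measure_nnreal
  have hpoisson := tsum_intVec_eq_tsum_integral_latticeChar (hgc.comp B.continuous) hint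
    (hg.locallyDominated hk b)
    (by simpa only [Function.comp_apply, hcoeff] using (e.summable_iff.2 hgs).mul_left (c : ℂ))
  simp only [Function.comp_apply, hcoeff, tsum_mul_left, B, latticeCoords_intVec] at hpoisson
  rw [e.tsum_eq fun v : L ↦ 𝓕 g (v : E)] at hpoisson
  rw [← hpoisson]
  exact (b.equivFun.symm.toEquiv.tsum_eq fun v : L ↦ g v).symm

end LatticePoisson

/-! ### Fourier transforms of Gaussians -/

section GaussianFourier

open MeasureTheory Module
open scoped FourierTransform

theorem exists_exp_neg_mul_sq_le {β : ℝ} (hβ : 0 < β) (k : ℕ) :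
    ∃ C : ℝ, ∀ t : ℝ, 0 ≤ t → Real.exp (-β * t ^ 2) ≤ C * (1 + t)⁻¹ ^ k := by
  refine ⟨Real.exp β * k.factorial * 2 ^ k / β ^ k, fun t ht ↦ ?_⟩
  have hpoly : (1 + t) ^ k ≤ 2 ^ k * (1 + t ^ 2) ^ k := by
    rw [← mul_pow]
    gcongr
    nlinarith [sq_nonneg (1 - t)]
  have hexp : (β * (1 + t ^ 2)) ^ k ≤ Real.exp (β * (1 + t ^ 2)) * k.factorial := by
    rw [← div_le_iff₀ (by positivity)]
    exact Real.pow_div_factorial_le_exp _ (by positivity) k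
  have hsplit : Real.exp (-β * t ^ 2) * Real.exp (β * (1 + t ^ 2)) = Real.exp β := by
    rw [← Real.exp_add]
    ring_nf
  rw [inv_pow, ← div_eq_mul_inv, le_div_iff₀ (by positivity), le_div_iff₀ (by positivity)]
  calc Real.exp (-β * t ^ 2) * (1 + t) ^ k * β ^ k
      ≤ Real.exp (-β * t ^ 2) * (2 ^ k * (1 + t ^ 2) ^ k) * β ^ k := by gcongr
    _ = Real.exp (-β * t ^ 2) * 2 ^ k * (β * (1 + t ^ 2)) ^ k := by rw [mul_pow]; ring
    _ ≤ Real.exp (-β * t ^ 2) * 2 ^ k * (Real.exp (β * (1 + t ^ 2)) * k.factorial) := by gcongr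
    _ = Real.exp β * k.factorial * 2 ^ k := by rw [← hsplit]; ring

section Growth

variable {E : Type*} [NormedAddCommGroup E]

/-- `P(x) = O((1 + ‖x‖)^d)`: the growth of a polynomial weight of degree `d`. -/
def HasGrowth (d : ℕ) (P : E → ℂ) : Prop := ∃ K : ℝ, ∀ x, ‖P x‖ ≤ K * (1 + ‖x‖) ^ d

theorem hasGrowth_one : HasGrowth 0 fun _ : E ↦ 1 := ⟨1, by simp⟩

theorem hasGrowth_norm : HasGrowth 1 fun x : E ↦ (‖x‖ : ℂ) := ⟨1, by simp⟩

theorem HasGrowth.mul {d d' : ℕ} {P Q : E → ℂ} (hP : HasGrowth d P) (hQ : HasGrowth d' Q) :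
    HasGrowth (d + d') fun x ↦ P x * Q x := by
  obtain ⟨K, hK⟩ := hP
  obtain ⟨K', hK'⟩ := hQ
  refine ⟨K * K', fun x ↦ ?_⟩
  calc ‖P x * Q x‖ = ‖P x‖ * ‖Q x‖ := norm_mul _ _
    _ ≤ (K * (1 + ‖x‖) ^ d) * (K' * (1 + ‖x‖) ^ d') :=
        mul_le_mul (hK x) (hK' x) (norm_nonneg _) ((norm_nonneg _).trans (hK x))
    _ = K * K' * (1 + ‖x‖) ^ (d + d') := by ring

theorem hasGrowth_inner [InnerProductSpace ℝ E] (p : E) :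
    HasGrowth 1 fun x ↦ ((inner ℝ p x : ℝ) : ℂ) := by
  refine ⟨‖p‖, fun x ↦ ?_⟩
  rw [Complex.norm_real, Real.norm_eq_abs, pow_one]
  exact (abs_real_inner_le_norm p x).trans (by gcongr; linarith)

/-- The Gaussian `e^{-b‖x‖²}` with complex parameter `b`. -/
def gaussian (b : ℂ) (x : E) : ℂ := Complex.exp (-b * ‖x‖ ^ 2)

theorem norm_gaussian (b : ℂ) (x : E) : ‖gaussian b x‖ = Real.exp (-b.re * ‖x‖ ^ 2) := by
  rw [gaussian, Complex.norm_exp, ← Complex.ofReal_pow, Complex.re_mul_ofReal, Complex.neg_re]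

@[fun_prop]
theorem continuous_gaussian (b : ℂ) : Continuous (gaussian b : E → ℂ) := by
  unfold gaussian; fun_prop

theorem HasGrowth.hasDecay_mul_gaussian {d : ℕ} {P : E → ℂ} (hP : HasGrowth d P) {b : ℂ}
    (hb : 0 < b.re) (k : ℕ) : HasDecay k fun x ↦ P x * gaussian b x := by
  obtain ⟨K, hK⟩ := hP
  obtain ⟨C, hC⟩ := exists_exp_neg_mul_sq_le hb (d + k)
  have hK0 : 0 ≤ K := by simpa using (norm_nonneg _).trans (hK 0)
  refine ⟨K * C, fun x ↦ ?_⟩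
  calc ‖P x * gaussian b x‖
      ≤ K * (1 + ‖x‖) ^ d * (C * (1 + ‖x‖)⁻¹ ^ (d + k)) := by
        rw [norm_mul, norm_gaussian]
        gcongr
        exacts [hK x, hC _ (norm_nonneg x)]
    _ = K * C * (1 + ‖x‖)⁻¹ ^ k := by
        rw [pow_add, inv_pow, inv_pow]
        field_simp

end Growth

variable {E : Type*} [NormedAddCommGroup E] [InnerProductSpace ℝ E]

theorem hasFDerivAt_gaussian (b : ℂ) (x : E) :
    HasFDerivAt (gaussian b : E → ℂ)
      ((-2 * b * gaussian b x) • Complex.ofRealCLM.comp (innerSL ℝ x)) x := by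
  have hsq := (Complex.ofRealCLM.hasFDerivAt (x := ‖x‖ ^ 2)).comp x
    (hasStrictFDerivAt_norm_sq x).hasFDerivAt
  convert! (hsq.const_mul (-b)).cexp using 1 <;> ext y
  · simp [gaussian]
  · simp [gaussian]
    ring

theorem hasFDerivAt_inner_mul_gaussian (b : ℂ) (p x : E) :
    HasFDerivAt (fun x : E ↦ ((inner ℝ p x : ℝ) : ℂ) * gaussian b x)
      (((inner ℝ p x : ℝ) : ℂ) • ((-2 * b * gaussian b x) • Complex.ofRealCLM.comp (innerSL ℝ x)) +
        gaussian b x • Complex.ofRealCLM.comp (innerSL ℝ p)) x :=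
  ((Complex.ofRealCLM.hasFDerivAt (x := inner ℝ p x)).comp x (innerSL ℝ p).hasFDerivAt).mul
    (hasFDerivAt_gaussian b x)

variable [FiniteDimensional ℝ E] [MeasurableSpace E] [BorelSpace E]

theorem HasGrowth.integrable_mul_gaussian {d : ℕ} {P : E → ℂ} (hP : HasGrowth d P)
    (hPc : Continuous P) {b : ℂ} (hb : 0 < b.re) : Integrable fun x ↦ P x * gaussian b x :=
  (hP.hasDecay_mul_gaussian hb (finrank ℝ E + 1)).integrable (Nat.lt_succ_self _) (by fun_prop)

theorem HasGrowth.integrable_norm_mul_norm_mul_gaussian {d : ℕ} {P : E → ℂ} (hP : HasGrowth d P)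
    (hPc : Continuous P) {b : ℂ} (hb : 0 < b.re) :
    Integrable fun x ↦ ‖x‖ * ‖P x * gaussian b x‖ := by
  simpa only [norm_mul, Complex.norm_real, norm_norm, mul_assoc] using
    ((hasGrowth_norm.mul hP).integrable_mul_gaussian (by fun_prop) hb).norm

theorem fourier_inner_mul {f : E → ℂ} (hf : Integrable f) (hf' : Integrable fun x ↦ ‖x‖ * ‖f x‖)
    {w : E} {D : E →L[ℝ] ℂ} (hD : HasFDerivAt (𝓕 f) D w) (p : E) :
    𝓕 (fun x ↦ ((inner ℝ p x : ℝ) : ℂ) * f x) w = Complex.I / (2 * Real.pi) * D p := by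
  have hint : Integrable (VectorFourier.fourierSMulRight (innerSL ℝ) f) := by
    refine (hf'.const_mul (2 * Real.pi)).mono' hf.aestronglyMeasurable.fourierSMulRight
      (.of_forall fun x ↦ le_of_eq ?_)
    rw [VectorFourier.norm_fourierSMulRight, innerSL_apply_norm, mul_assoc]
  have hDp : D p = 𝓕 (fun x ↦ -(2 * Real.pi * Complex.I) * ((inner ℝ p x : ℝ) * f x)) w := by
    rw [hD.unique (Real.hasFDerivAt_fourier hf hf' w), Real.fourier_continuousLinearMap_apply hint]
    refine congrArg (fun F : E → ℂ ↦ 𝓕 F w) (funext fun x ↦ ?_)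
    rw [VectorFourier.fourierSMulRight_apply, innerSL_apply_apply, real_inner_comm, smul_eq_mul,
      Complex.real_smul]
  rw [hDp, Real.fourier_eq', Real.fourier_eq', ← integral_const_mul]
  have hpi : (Real.pi : ℂ) ≠ 0 := mod_cast Real.pi_ne_zero
  refine integral_congr_ae (.of_forall fun x ↦ ?_)
  simp only [smul_eq_mul]
  field_simp
  linear_combination inner ℝ p x * f x * Complex.I_sq

theorem fourier_gaussian {b : ℂ} (hb : 0 < b.re) (w : E) :
    𝓕 (gaussian b : E → ℂ) w =
      (Real.pi / b) ^ (finrank ℝ E / 2 : ℂ) * gaussian (Real.pi ^ 2 / b) w := by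
  refine (fourier_gaussian_innerProductSpace hb w).trans ?_
  rw [gaussian, neg_mul, neg_mul, neg_div, mul_div_right_comm]

theorem fourier_inner_mul_gaussian {b : ℂ} (hb : 0 < b.re) (p w : E) :
    𝓕 (fun x : E ↦ ((inner ℝ p x : ℝ) : ℂ) * gaussian b x) w =
      -(Complex.I * Real.pi / b) * ((inner ℝ p w : ℝ) * 𝓕 (gaussian b : E → ℂ) w) := by
  have hpi : (Real.pi : ℂ) ≠ 0 := mod_cast Real.pi_ne_zero
  have hderiv := (hasFDerivAt_gaussian (Real.pi ^ 2 / b) w).const_mul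
    ((Real.pi / b) ^ (finrank ℝ E / 2 : ℂ))
  simp only [← fourier_gaussian hb] at hderiv
  have hint := (hasGrowth_one (E := E)).integrable_mul_gaussian continuous_const hb
  have hint' := (hasGrowth_one (E := E)).integrable_norm_mul_norm_mul_gaussian continuous_const hb
  simp only [one_mul] at hint hint'
  rw [fourier_inner_mul hint hint' hderiv, fourier_gaussian hb]
  simp [real_inner_comm]
  field_simp

theorem fourier_inner_mul_inner_mul_gaussian {b : ℂ} (hb : 0 < b.re) {p q : E}
    (hpq : inner ℝ p q = 0) (w : E) :
    𝓕 (fun x : E ↦ ((inner ℝ q x : ℝ) : ℂ) * ((inner ℝ p x : ℝ) * gaussian b x)) w =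
      -(Real.pi / b) ^ 2 *
        ((inner ℝ q w : ℝ) * ((inner ℝ p w : ℝ) * 𝓕 (gaussian b : E → ℂ) w)) := by
  have hpi : (Real.pi : ℂ) ≠ 0 := mod_cast Real.pi_ne_zero
  have hderiv := ((hasFDerivAt_inner_mul_gaussian (Real.pi ^ 2 / b) p w).const_mul
    ((Real.pi / b) ^ (finrank ℝ E / 2 : ℂ))).const_mul (-(Complex.I * Real.pi / b))
  simp only [mul_left_comm _ ((inner ℝ p _ : ℝ) : ℂ), ← fourier_gaussian hb] at hderiv
  simp only [mul_left_comm ((inner ℝ p _ : ℝ) : ℂ), ← fourier_inner_mul_gaussian hb p] at hderiv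
  rw [fourier_inner_mul ((hasGrowth_inner p).integrable_mul_gaussian (by fun_prop) hb)
    ((hasGrowth_inner p).integrable_norm_mul_norm_mul_gaussian (by fun_prop) hb) hderiv,
    fourier_gaussian hb]
  simp [real_inner_comm, hpq]
  field_simp
  linear_combination ((Real.pi / b) ^ (finrank ℝ E / 2 : ℂ) * inner ℝ p w *
    gaussian (Real.pi ^ 2 / b) w * inner ℝ q w * b⁻¹ ^ 2) * Complex.I_sq

end GaussianFourier

/-! ### Theta series -/

section ThetaSeries

open Module UpperHalfPlane
open scoped FourierTransform MatrixGroups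

variable {E : Type*} [NormedAddCommGroup E] [InnerProductSpace ℝ E]

open Classical in
/-- The finite set of vectors `v ∈ L` with `‖v‖² = 2n`; it is empty if there are infinitely many. -/
def shell (L : Submodule ℤ E) (n : ℕ) : Finset E :=
  if h : {v : E | v ∈ L ∧ ‖v‖ ^ 2 = 2 * n}.Finite then h.toFinset else ∅

/-- Half the norm `‖v‖²`, rounded down; on an even lattice no rounding takes place. -/
def halfNormSq (v : E) : ℕ := ⌊‖v‖ ^ 2 / 2⌋₊

variable {L : Submodule ℤ E}

theorem EvenUnimodular.norm_sq_eq_two_mul_halfNormSq (hL : EvenUnimodular L) {v : E} (hv : v ∈ L) :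
    ‖v‖ ^ 2 = 2 * halfNormSq v := by
  obtain ⟨k, hk⟩ := hL.even v hv
  have hk0 : 0 ≤ k := by
    have hcast : (0 : ℝ) ≤ k := by linarith [sq_nonneg ‖v‖]
    exact_mod_cast hcast
  lift k to ℕ using hk0
  simp [halfNormSq, hk]

section Parameter

/-- The parameter `b = -πiτ`, for which `e^{-b‖v‖²} = q^{‖v‖²/2}` with `q = e^{2πiτ}`. -/
def thetaParam (τ : ℍ) : ℂ := -(Real.pi * Complex.I * τ)

theorem thetaParam_re_pos (τ : ℍ) : 0 < (thetaParam τ).re := by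
  simp only [thetaParam, Complex.neg_re, Complex.mul_re, Complex.ofReal_re, Complex.I_re, mul_zero,
    Complex.ofReal_im, Complex.I_im, mul_one, sub_self, zero_mul, Complex.mul_im, add_zero,
    zero_sub, neg_neg, coe_im]
  exact mul_pos Real.pi_pos τ.im_pos

theorem pi_div_thetaParam (τ : ℍ) : Real.pi / thetaParam τ = Complex.I / τ := by
  have hτ : (τ : ℂ) ≠ 0 := ne_zero τ
  have hpi : (Real.pi : ℂ) ≠ 0 := mod_cast Real.pi_ne_zero
  rw [thetaParam]
  field_simp
  rw [Complex.I_sq]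

theorem coe_S_smul (τ : ℍ) : ((ModularGroup.S • τ : ℍ) : ℂ) = -(τ : ℂ)⁻¹ := by
  rw [modular_S_smul]
  simp [inv_neg]

theorem S_smul_I : ModularGroup.S • I = I := UpperHalfPlane.ext (by rw [coe_S_smul]; simp)

theorem pi_sq_div_thetaParam (τ : ℍ) :
    Real.pi ^ 2 / thetaParam τ = thetaParam (ModularGroup.S • τ) := by
  rw [sq, mul_div_assoc, pi_div_thetaParam, thetaParam, coe_S_smul]
  ring

end Parameter

/-- The theta series of `L` with weight `P`. -/
def thetaSeries (L : Submodule ℤ E) (P : E → ℂ) (τ : ℍ) : ℂ :=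
  ∑' v : L, P v * gaussian (thetaParam τ) (v : E)

theorem EvenUnimodular.gaussian_thetaParam (hL : EvenUnimodular L) (τ : ℍ) {v : E} (hv : v ∈ L) :
    gaussian (thetaParam τ) v = Function.Periodic.qParam 1 (τ : ℂ) ^ halfNormSq v := by
  have hnorm : (‖v‖ : ℂ) ^ 2 = 2 * (halfNormSq v : ℂ) := by
    exact_mod_cast congrArg ((↑) : ℝ → ℂ) (hL.norm_sq_eq_two_mul_halfNormSq hv)
  rw [gaussian, hnorm, Function.Periodic.qParam, ← Complex.exp_nat_mul, thetaParam]
  congr 1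
  simp only [Complex.ofReal_one, div_one]
  ring

variable [FiniteDimensional ℝ E]

theorem EvenUnimodular.finite_norm_le (hL : EvenUnimodular L) (R : ℝ) :
    {v : E | v ∈ L ∧ ‖v‖ ≤ R}.Finite := by
  have : DiscreteTopology L.toAddSubgroup := hL.discreteTopology
  refine (Metric.finite_isBounded_inter_isClosed (s := (L : Set E)) ⟨hL.discreteTopology⟩
    (Metric.isBounded_closedBall (x := 0) (r := R))
    (AddSubgroup.isClosed_of_discrete (H := L.toAddSubgroup))).subset ?_
  exact fun v hv ↦ ⟨by simpa using hv.2, hv.1⟩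

theorem EvenUnimodular.mem_shell (hL : EvenUnimodular L) {n : ℕ} {v : E} :
    v ∈ shell L n ↔ v ∈ L ∧ ‖v‖ ^ 2 = 2 * n := by
  have hfin : {v : E | v ∈ L ∧ ‖v‖ ^ 2 = 2 * n}.Finite :=
    (hL.finite_norm_le (2 * n + 1)).subset fun v hv ↦
      ⟨hv.1, by nlinarith [norm_nonneg v, show ‖v‖ ^ 2 = 2 * n from hv.2]⟩
  simp [shell, dif_pos hfin]

theorem EvenUnimodular.shell_zero (hL : EvenUnimodular L) : shell L 0 = {0} := by
  ext v
  simp only [hL.mem_shell, Nat.cast_zero, mul_zero, Finset.mem_singleton, sq_eq_zero_iff,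
    norm_eq_zero, and_iff_right_iff_imp]
  rintro rfl
  exact L.zero_mem

variable {P : E → ℂ} {d : ℕ}

theorem EvenUnimodular.summable_thetaSeries (hL : EvenUnimodular L) (hP : HasGrowth d P) (τ : ℍ) :
    Summable fun v : L ↦ P v * gaussian (thetaParam τ) (v : E) := by
  have := hL.discreteTopology
  have := hL.isZLattice
  exact (hP.hasDecay_mul_gaussian (thetaParam_re_pos τ) (finrank ℝ E + 1)).summable
    (Nat.lt_succ_self _)

/-- The lattice vectors of half norm `n` are those of the shell. -/
def EvenUnimodular.fiberEquivShell (hL : EvenUnimodular L) (n : ℕ) :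
    {v : L // halfNormSq (v : E) = n} ≃ {v : E // v ∈ shell L n} where
  toFun v := ⟨v.1, hL.mem_shell.2 ⟨v.1.2, by rw [hL.norm_sq_eq_two_mul_halfNormSq v.1.2, v.2]⟩⟩
  invFun v := ⟨⟨v.1, (hL.mem_shell.1 v.2).1⟩, by
    obtain ⟨hmem, hnorm⟩ := hL.mem_shell.1 v.2
    rw [hL.norm_sq_eq_two_mul_halfNormSq hmem] at hnorm
    exact_mod_cast mul_left_cancel₀ two_ne_zero hnorm⟩
  left_inv _ := rfl
  right_inv _ := rfl

theorem EvenUnimodular.hasSum_thetaSeries (hL : EvenUnimodular L) (hP : HasGrowth d P) (τ : ℍ) :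
    HasSum (fun n ↦ (∑ v ∈ shell L n, P v) • Function.Periodic.qParam 1 (τ : ℂ) ^ n)
      (thetaSeries L P τ) := by
  have hsum := (hL.summable_thetaSeries hP τ).hasSum
  rw [← (Equiv.sigmaFiberEquiv fun v : L ↦ halfNormSq (v : E)).hasSum_iff] at hsum
  refine hsum.sigma fun n ↦ ?_
  rw [← (hL.fiberEquivShell n).symm.hasSum_iff, Finset.sum_smul, ← Finset.sum_attach]
  convert! hasSum_fintype fun v : {v : E // v ∈ shell L n} ↦
    P v • Function.Periodic.qParam 1 (τ : ℂ) ^ n using 2 with v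
  have hv : halfNormSq (v : E) = n := ((hL.fiberEquivShell n).symm v).2
  change P v * gaussian (thetaParam τ) (v : E) = _
  rw [hL.gaussian_thetaParam τ (hL.mem_shell.1 v.2).1, hv, smul_eq_mul]

theorem EvenUnimodular.thetaSeries_one_I_ne_zero (hL : EvenUnimodular L) :
    thetaSeries L (fun _ ↦ 1) I ≠ 0 := by
  have hreal : ∀ v : L, (1 : ℂ) * gaussian (thetaParam I) (v : E) =
      ((Real.exp (-Real.pi * ‖(v : E)‖ ^ 2) : ℝ) : ℂ) := fun v ↦ by
    rw [gaussian, thetaParam, coe_I, mul_assoc, Complex.I_mul_I]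
    simp
  have hsum := hL.summable_thetaSeries hasGrowth_one I
  simp only [thetaSeries, hreal] at hsum ⊢
  rw [← Complex.ofReal_tsum, Complex.ofReal_ne_zero]
  exact ((Complex.summable_ofReal.1 hsum).tsum_pos (fun v ↦ (Real.exp_pos _).le) 0
    (Real.exp_pos _)).ne'

variable [MeasurableSpace E] [BorelSpace E]

/-- `P` is an eigenfunction of weight `k` for the Fourier transform: the transform of `P` times the
Gaussian at `τ` is `τ^{-k} P` times the Gaussian at `-1/τ`. -/
def IsThetaWeight (P : E → ℂ) (k : ℕ) : Prop :=
  ∀ (τ : ℍ) (w : E), 𝓕 (fun x ↦ P x * gaussian (thetaParam τ) x) w =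
    ((τ : ℂ) ^ k)⁻¹ * (P w * gaussian (thetaParam (ModularGroup.S • τ)) w)

theorem fourier_gaussian_thetaParam {m : ℕ} (hd : finrank ℝ E = 8 * m) (τ : ℍ) (w : E) :
    𝓕 (gaussian (thetaParam τ) : E → ℂ) w =
      ((τ : ℂ) ^ (4 * m))⁻¹ * gaussian (thetaParam (ModularGroup.S • τ)) w := by
  rw [fourier_gaussian (thetaParam_re_pos τ), pi_div_thetaParam, pi_sq_div_thetaParam, hd,
    show ((8 * m : ℕ) : ℂ) / 2 = ((4 * m : ℕ) : ℂ) by push_cast; ring, Complex.cpow_natCast,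
    div_pow, pow_mul Complex.I, Complex.I_pow_four, one_pow, one_div]

theorem isThetaWeight_one {m : ℕ} (hd : finrank ℝ E = 8 * m) :
    IsThetaWeight (fun _ : E ↦ 1) (4 * m) := fun τ w ↦ by
  simpa using fourier_gaussian_thetaParam hd τ w

theorem isThetaWeight_inner_mul_inner {m : ℕ} (hd : finrank ℝ E = 8 * m) {p q : E}
    (hpq : inner ℝ p q = 0) :
    IsThetaWeight (fun x ↦ ((inner ℝ q x : ℝ) : ℂ) * (inner ℝ p x : ℝ)) (4 * m + 2) := fun τ w ↦ by
  simp only [mul_assoc]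
  rw [fourier_inner_mul_inner_mul_gaussian (thetaParam_re_pos τ) hpq,
    fourier_gaussian_thetaParam hd, pi_div_thetaParam, div_pow, Complex.I_sq, pow_add]
  have hτ : (τ : ℂ) ≠ 0 := ne_zero τ
  field_simp

theorem EvenUnimodular.exists_pow_mul_thetaSeries_eq (hL : EvenUnimodular L) :
    ∃ κ : ℂ, ∀ {P : E → ℂ} {d k : ℕ}, Continuous P → HasGrowth d P → IsThetaWeight P k →
      ∀ τ : ℍ, (τ : ℂ) ^ k * thetaSeries L P τ =
        κ * thetaSeries L P (ModularGroup.S • τ) := by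
  obtain ⟨κ, hκ⟩ := hL.exists_tsum_eq_mul_tsum_fourier (Nat.lt_succ_self (finrank ℝ E))
  refine ⟨κ, fun {P d k} hPc hP hF τ ↦ ?_⟩
  have hsum : Summable fun v : L ↦ 𝓕 (fun x ↦ P x * gaussian (thetaParam τ) x) (v : E) := by
    simp only [hF τ]
    exact (hL.summable_thetaSeries hP _).mul_left _
  have hτ : (τ : ℂ) ≠ 0 := ne_zero τ
  rw [thetaSeries, hκ _ (by fun_prop) (hP.hasDecay_mul_gaussian (thetaParam_re_pos τ) _) hsum]
  simp only [hF τ, tsum_mul_left, thetaSeries]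
  field_simp

-- The Poisson constant is `1`, as one sees from the weight `P = 1` at the fixed point `τ = i`.
theorem EvenUnimodular.thetaSeries_S_smul (hL : EvenUnimodular L) {m : ℕ}
    (hd : finrank ℝ E = 8 * m) {k : ℕ} (hPc : Continuous P) (hP : HasGrowth d P)
    (hF : IsThetaWeight P k) (τ : ℍ) :
    thetaSeries L P (ModularGroup.S • τ) = (τ : ℂ) ^ k * thetaSeries L P τ := by
  obtain ⟨κ, hκ⟩ := hL.exists_pow_mul_thetaSeries_eq
  have hI := hκ continuous_const hasGrowth_one (isThetaWeight_one hd) I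
  rw [S_smul_I, coe_I, pow_mul, Complex.I_pow_four, one_pow] at hI
  rw [hκ hPc hP hF, ← mul_right_cancel₀ hL.thetaSeries_one_I_ne_zero hI, one_mul]

theorem EvenUnimodular.exists_modularForm_coeff_eq_sum_shell (hL : EvenUnimodular L) {m : ℕ}
    (hd : finrank ℝ E = 8 * m) {k : ℕ} (hPc : Continuous P) (hP : HasGrowth d P)
    (hF : IsThetaWeight P k) : ∃ F : ModularForm 𝒮ℒ k,
      ∀ n, (qExpansion 1 F).coeff n = ∑ v ∈ shell L n, P v :=
  exists_modularForm_of_hasSum_qParam (k := k) (hL.hasSum_thetaSeries hP) fun τ ↦ by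
    rw [zpow_natCast]
    exact hL.thetaSeries_S_smul hd hPc hP hF τ

theorem EvenUnimodular.card_shell_of_rootless (hL : EvenUnimodular L) (hd : finrank ℝ E = 24)
    (hr : ∀ v ∈ L, ‖v‖ ^ 2 ≠ 2) :
    (shell L 2).card = 196560 ∧ (shell L 3).card = 16773120 ∧ (shell L 4).card = 398034000 := by
  obtain ⟨F, hF⟩ := hL.exists_modularForm_coeff_eq_sum_shell (m := 3) hd continuous_const
    hasGrowth_one (isThetaWeight_one (m := 3) hd)
  simp only [Finset.sum_const, nsmul_eq_mul, mul_one] at hF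
  have hone : shell L 1 = ∅ := Finset.eq_empty_of_forall_notMem fun v hv ↦
    hr v (hL.mem_shell.1 hv).1 (by simpa using (hL.mem_shell.1 hv).2)
  have hext := eq_extremalForm (F := F) (by simp [hF, hL.shell_zero]) (by simp [hF, hone])
  obtain ⟨h2, h3, h4⟩ := coeff_qExpansion_extremalForm
  simp only [hext] at hF
  rw [hF] at h2 h3 h4
  exact ⟨by exact_mod_cast h2, by exact_mod_cast h3, by exact_mod_cast h4⟩

theorem EvenUnimodular.sum_shell_inner_mul_inner (hL : EvenUnimodular L) (hd : finrank ℝ E = 24)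
    {p q : E} (hpq : inner ℝ p q = 0) (n : ℕ) :
    ∑ v ∈ shell L n, inner ℝ q v * inner ℝ p v = (0 : ℝ) := by
  obtain ⟨F, hF⟩ := hL.exists_modularForm_coeff_eq_sum_shell (m := 3) hd (by fun_prop)
    ((hasGrowth_inner q).mul (hasGrowth_inner p)) (isThetaWeight_inner_mul_inner (m := 3) hd hpq)
  have hzero := qExpansion_eq_zero_of_weight_fourteen F (by simp [hF, hL.shell_zero])
  have hn := hF n
  rw [hzero, map_zero] at hn
  exact_mod_cast hn.symm

end ThetaSeries

/-! ### Even unimodular lattices modulo two -/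

section ModTwo

open Module

variable {E : Type*} [NormedAddCommGroup E] [InnerProductSpace ℝ E] {L : Submodule ℤ E}

/-- Congruence of vectors modulo the sublattice `2L`. -/
def CongrModTwo (L : Submodule ℤ E) (u v : E) : Prop := ∃ w ∈ L, u - v = (2 : ℤ) • w

theorem norm_sq_eq_four_mul_of_eq_two_zsmul {u w : E} (h : u = (2 : ℤ) • w) :
    ‖u‖ ^ 2 = 4 * ‖w‖ ^ 2 := by
  rw [h, two_smul, ← two_smul ℝ, norm_smul, mul_pow]
  norm_num

theorem EvenUnimodular.four_le_norm_sq (hL : EvenUnimodular L) (hr : ∀ v ∈ L, ‖v‖ ^ 2 ≠ 2) {v : E}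
    (hv : v ∈ L) (h0 : v ≠ 0) : 4 ≤ ‖v‖ ^ 2 := by
  obtain ⟨k, hk⟩ := hL.even v hv
  have hge := hL.two_le_norm_sq hv h0
  have hne := hr v hv
  rw [hk] at hge hne ⊢
  norm_cast at hge hne ⊢
  omega

theorem EvenUnimodular.eq_or_eq_neg_or_orthogonal_of_congrModTwo (hL : EvenUnimodular L)
    (hr : ∀ v ∈ L, ‖v‖ ^ 2 ≠ 2) {u v : E} (hv : v ∈ L) (huv : CongrModTwo L u v)
    (hu8 : ‖u‖ ^ 2 ≤ 8) (hv8 : ‖v‖ ^ 2 ≤ 8) :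
    u = v ∨ u = -v ∨ ‖u‖ ^ 2 = 8 ∧ ‖v‖ ^ 2 = 8 ∧ inner ℝ u v = 0 := by
  obtain ⟨w, hw, hsub⟩ := huv
  have hadd : u + v = (2 : ℤ) • (w + v) := by
    rw [smul_add, ← hsub, two_smul ℤ v]
    abel
  rcases eq_or_ne u v with heq | hne
  · exact Or.inl heq
  rcases eq_or_ne u (-v) with heq | hne'
  · exact Or.inr (Or.inl heq)
  have hw0 : w ≠ 0 := by
    rintro rfl
    exact hne (sub_eq_zero.1 (by simpa using hsub))
  have hwv0 : w + v ≠ 0 := fun h ↦ hne' (eq_neg_of_add_eq_zero_left (by rw [hadd, h, smul_zero]))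
  have hsub4 := hL.four_le_norm_sq hr hw hw0
  have hadd4 := hL.four_le_norm_sq hr (L.add_mem hw hv) hwv0
  have hsubn := norm_sq_eq_four_mul_of_eq_two_zsmul hsub
  have haddn := norm_sq_eq_four_mul_of_eq_two_zsmul hadd
  rw [norm_sub_sq_real] at hsubn
  rw [norm_add_sq_real] at haddn
  refine Or.inr (Or.inr ⟨?_, ?_, ?_⟩) <;> linarith

section Frame

variable [FiniteDimensional ℝ E]

theorem card_le_finrank_of_pairwise_orthogonal {T : Finset E} (h0 : ∀ v ∈ T, v ≠ 0)
    (hT : (T : Set E).Pairwise fun u v ↦ inner ℝ u v = 0) : T.card ≤ finrank ℝ E := by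
  have hli : LinearIndependent ℝ fun v : T ↦ (v : E) :=
    linearIndependent_of_ne_zero_of_inner_eq_zero (fun v ↦ h0 _ v.2)
      fun u v huv ↦ hT u.2 v.2 (Subtype.coe_injective.ne huv)
  simpa using hli.fintype_card_le_finrank

theorem card_le_two_mul_finrank_of_eq_or_eq_neg_or_orthogonal {F : Finset E}
    (h0 : ∀ v ∈ F, v ≠ 0) (hF : ∀ u ∈ F, ∀ v ∈ F, u = v ∨ u = -v ∨ inner ℝ u v = 0) :
    F.card ≤ 2 * finrank ℝ E := by
  classical
  obtain ⟨T, hTmax⟩ := (F.powerset.filter fun T : Finset E ↦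
    (T : Set E).Pairwise fun u v ↦ inner ℝ u v = 0).exists_maximal ⟨∅, by simp⟩
  obtain ⟨hTF, hT⟩ : T ⊆ F ∧ (T : Set E).Pairwise fun u v ↦ inner ℝ u v = 0 := by
    simpa using hTmax.prop
  have hsub : F ⊆ T ∪ T.image fun v ↦ -v := fun u hu ↦ by
    by_contra hcon
    rw [Finset.mem_union, not_or, Finset.mem_image] at hcon
    have horth : ∀ v ∈ T, inner ℝ u v = 0 := fun v hv ↦ by
      rcases hF u hu v (hTF hv) with rfl | heq | h
      · exact absurd hv hcon.1
      · exact absurd ⟨v, hv, heq.symm⟩ hcon.2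
      · exact h
    have hins : (insert u T : Set E).Pairwise fun u v ↦ inner ℝ u v = 0 :=
      hT.insert fun v hv _ ↦ ⟨horth v hv, by rw [real_inner_comm]; exact horth v hv⟩
    exact hcon.1 (hTmax.le_of_ge (by simpa [Finset.insert_subset_iff, hu, hTF] using hins)
      (Finset.subset_insert u T) (Finset.mem_insert_self u T))
  have hcard := card_le_finrank_of_pairwise_orthogonal (fun v hv ↦ h0 v (hTF hv)) hT
  calc F.card ≤ _ := Finset.card_le_card hsub
    _ ≤ T.card + (T.image fun v ↦ -v).card := Finset.card_union_le _ _
    _ ≤ T.card + T.card := Nat.add_le_add_left Finset.card_image_le _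
    _ ≤ 2 * finrank ℝ E := by omega

end Frame

variable [FiniteDimensional ℝ E]

theorem EvenUnimodular.exists_modTwo_map (hL : EvenUnimodular L) :
    ∃ f : E → Fin (finrank ℝ E) → ZMod 2,
      ∀ u ∈ L, ∀ v ∈ L, f u = f v → CongrModTwo L u v := by
  classical
  have := hL.discreteTopology
  have := hL.isZLattice
  let b := finBasisOfFinrankEq ℤ L (ZLattice.rank ℝ L)
  refine ⟨fun v ↦ if h : v ∈ L then fun i ↦ (b.repr ⟨v, h⟩ i : ZMod 2) else 0,
    fun u hu v hv huv ↦ ?_⟩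
  have hdvd : ∀ i, ∃ k, b.repr ⟨u, hu⟩ i - b.repr ⟨v, hv⟩ i = 2 * k := fun i ↦ by
    have hi := congrFun huv i
    simp only [dif_pos hu, dif_pos hv] at hi
    exact (ZMod.intCast_zmod_eq_zero_iff_dvd _ 2).1 (by rw [Int.cast_sub, hi, sub_self])
  choose k hk using hdvd
  have hrepr : (⟨u, hu⟩ - ⟨v, hv⟩ : L) = (2 : ℤ) • ∑ i, k i • b i := b.repr.injective <| by
    ext i
    rw [map_sub, map_smul, Finsupp.sub_apply, hk, Finsupp.smul_apply, b.repr_sum_self, smul_eq_mul]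
  exact ⟨_, Submodule.coe_mem (∑ i, k i • b i), by simpa using congrArg ((↑) : L → E) hrepr⟩

section Counting

variable {κ : Type*} [DecidableEq κ] {f : E → κ}

theorem EvenUnimodular.card_shell_le_two_mul_card_image (hL : EvenUnimodular L)
    (hr : ∀ v ∈ L, ‖v‖ ^ 2 ≠ 2) (hf : ∀ u ∈ L, ∀ v ∈ L, f u = f v → CongrModTwo L u v) {n : ℕ}
    (hn : n < 4) : (shell L n).card ≤ 2 * ((shell L n).image f).card := by
  classical
  refine Finset.card_le_mul_card_image _ _ fun c hc ↦ ?_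
  obtain ⟨v, hv, rfl⟩ := Finset.mem_image.1 hc
  refine (Finset.card_le_card (t := {v, -v}) fun u hu ↦ ?_).trans Finset.card_le_two
  obtain ⟨hu, huv⟩ := Finset.mem_filter.1 hu
  rw [hL.mem_shell] at hu hv
  have hn' : (n : ℝ) < 4 := by exact_mod_cast hn
  rcases hL.eq_or_eq_neg_or_orthogonal_of_congrModTwo hr hv.1 (hf u hu.1 v hv.1 huv)
    (by linarith) (by linarith) with h | h | h
  · simp [h]
  · simp [h]
  · linarith [h.1]

theorem EvenUnimodular.card_shell_four_le_mul_card_image (hL : EvenUnimodular L)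
    (hr : ∀ v ∈ L, ‖v‖ ^ 2 ≠ 2) (hf : ∀ u ∈ L, ∀ v ∈ L, f u = f v → CongrModTwo L u v) :
    (shell L 4).card ≤ 2 * finrank ℝ E * ((shell L 4).image f).card := by
  refine Finset.card_le_mul_card_image _ _ fun c _ ↦
    card_le_two_mul_finrank_of_eq_or_eq_neg_or_orthogonal (fun v hv ↦ ?_) fun u hu v hv ↦ ?_
  · rintro rfl
    simpa using (hL.mem_shell.1 (Finset.mem_filter.1 hv).1).2
  · obtain ⟨hu, huc⟩ := Finset.mem_filter.1 hu
    obtain ⟨hv, hvc⟩ := Finset.mem_filter.1 hv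
    rw [hL.mem_shell] at hu hv
    push_cast at hu hv
    have hcases := hL.eq_or_eq_neg_or_orthogonal_of_congrModTwo hr hv.1
      (hf u hu.1 v hv.1 (huc.trans hvc.symm)) (by linarith) (by linarith)
    tauto

theorem EvenUnimodular.disjoint_image_shell (hL : EvenUnimodular L)
    (hr : ∀ v ∈ L, ‖v‖ ^ 2 ≠ 2) (hf : ∀ u ∈ L, ∀ v ∈ L, f u = f v → CongrModTwo L u v) {m n : ℕ}
    (hm : m ≤ 4) (hn : n ≤ 4) (hmn : m ≠ n) :
    Disjoint ((shell L m).image f) ((shell L n).image f) := by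
  simp only [Finset.disjoint_left, Finset.mem_image, not_exists, not_and]
  rintro _ ⟨u, hu, rfl⟩ v hv hvu
  rw [hL.mem_shell] at hu hv
  have hm' : (m : ℝ) ≤ 4 := by exact_mod_cast hm
  have hn' : (n : ℝ) ≤ 4 := by exact_mod_cast hn
  refine hmn (Nat.cast_injective (R := ℝ) ?_)
  rcases hL.eq_or_eq_neg_or_orthogonal_of_congrModTwo hr hu.1 (hf v hv.1 u hu.1 hvu)
    (by linarith) (by linarith) with rfl | rfl | h
  · linarith
  · linarith [norm_neg u ▸ hv.2]
  · linarith [h.1, h.2.1]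

end Counting

variable [MeasurableSpace E] [BorelSpace E]

-- The vectors of norm `0`, `4`, `6` and `8` represent at least
-- `1 + 196560 / 2 + 16773120 / 2 + 398034000 / 48 = 2 ^ 24` classes modulo `2L`.
theorem EvenUnimodular.exists_congrModTwo_norm_sq_le (hL : EvenUnimodular L)
    (hd : finrank ℝ E = 24) (hr : ∀ v ∈ L, ‖v‖ ^ 2 ≠ 2) {u : E} (hu : u ∈ L) :
    ∃ v ∈ L, ‖v‖ ^ 2 ≤ 8 ∧ CongrModTwo L u v := by
  obtain ⟨f, hf⟩ := hL.exists_modTwo_map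
  let U : Finset (Fin (finrank ℝ E) → ZMod 2) :=
    ({0, 2, 3, 4} : Finset ℕ).biUnion fun n ↦ (shell L n).image f
  have hle : ∀ n ∈ ({0, 2, 3, 4} : Finset ℕ), n ≤ 4 := by decide
  have hUcard : U.card = ∑ n ∈ ({0, 2, 3, 4} : Finset ℕ), ((shell L n).image f).card :=
    Finset.card_biUnion fun m hm n hn ↦ hL.disjoint_image_shell hr hf (hle m hm) (hle n hn)
  have hU : U = Finset.univ := by
    obtain ⟨h2, h3, h4⟩ := hL.card_shell_of_rootless hd hr
    have h0 : ((shell L 0).image f).card = 1 := by rw [hL.shell_zero]; simp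
    have hc2 := hL.card_shell_le_two_mul_card_image hr hf (n := 2) (by norm_num)
    have hc3 := hL.card_shell_le_two_mul_card_image hr hf (n := 3) (by norm_num)
    have hc4 := hL.card_shell_four_le_mul_card_image hr hf
    refine Finset.eq_univ_of_card U (le_antisymm (Finset.card_le_univ U) ?_)
    rw [Fintype.card_fun, Fintype.card_fin, ZMod.card, hUcard]
    simp only [Finset.mem_insert, Finset.mem_singleton, Nat.reduceEqDiff,
      or_self, not_false_eq_true, Finset.sum_insert, Finset.sum_singleton, hd] at hc4 ⊢
    omega
  obtain ⟨n, hn, hfu⟩ := Finset.mem_biUnion.1 (hU ▸ Finset.mem_univ (f u))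
  obtain ⟨v, hv, hvu⟩ := Finset.mem_image.1 hfu
  obtain ⟨hvL, hvn⟩ := hL.mem_shell.1 hv
  have hn4 : (n : ℝ) ≤ 4 := by exact_mod_cast hle n hn
  exact ⟨v, hvL, by linarith, hf u hu v hvL hvu.symm⟩

end ModTwo

/-! ### Root systems with a cyclic height -/

section RootHeights

variable {E : Type*} [NormedAddCommGroup E] [InnerProductSpace ℝ E]

/-- A finite simply laced root system whose roots, of norm `2`, form a spherical `2`-design: the sum
of the squares `⟪v, x⟫²` over the roots is `C‖x‖²`. -/
structure IsRootDesign (Φ : Finset E) (C : ℝ) : Prop where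
  norm_sq : ∀ v ∈ Φ, ‖v‖ ^ 2 = 2
  neg_mem : ∀ v ∈ Φ, -v ∈ Φ
  inner_int : ∀ v ∈ Φ, ∀ w ∈ Φ, ∃ k : ℤ, inner ℝ v w = k
  sub_mem : ∀ v ∈ Φ, ∀ b ∈ Φ, inner ℝ v b = (1 : ℝ) → b - v ∈ Φ
  design : ∀ x : E, ∑ v ∈ Φ, inner ℝ v x ^ 2 = C * ‖x‖ ^ 2

/-- A grading of a root system by `ℤ/k` in which no root has degree `0`, given by the
representatives `t v ∈ {1, …, k - 1}` of the degrees. -/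
structure IsCyclicHeight (Φ : Finset E) (k : ℤ) (t : E → ℤ) : Prop where
  one_le : ∀ v ∈ Φ, 1 ≤ t v
  lt : ∀ v ∈ Φ, t v < k
  neg : ∀ v ∈ Φ, t (-v) = k - t v
  dvd : ∀ v ∈ Φ, ∀ b ∈ Φ, inner ℝ v b = (1 : ℝ) → k ∣ t v + t (b - v) - t b

theorem eq_or_eq_neg_or_inner_of_norm_sq_eq_two {v b : E} (hv : ‖v‖ ^ 2 = 2) (hb : ‖b‖ ^ 2 = 2)
    {k : ℤ} (hk : inner ℝ v b = k) :
    v = b ∨ v = -b ∨ k = 0 ∨ k = 1 ∨ k = -1 := by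
  have hsub := norm_sub_sq_real v b
  have hadd := norm_add_sq_real v b
  rw [hk, hv, hb] at hsub hadd
  have hle : k ≤ 2 := by
    have : (k : ℝ) ≤ 2 := by linarith [sq_nonneg ‖v - b‖]
    exact_mod_cast this
  have hge : -2 ≤ k := by
    have : (-2 : ℝ) ≤ k := by linarith [sq_nonneg ‖v + b‖]
    exact_mod_cast this
  obtain rfl | rfl | hcases : k = 2 ∨ k = -2 ∨ k = 0 ∨ k = 1 ∨ k = -1 := by omega
  · norm_num [sub_eq_zero] at hsub
    exact Or.inl hsub
  · norm_num [add_eq_zero_iff_eq_neg] at hadd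
    exact Or.inr (Or.inl hadd)
  · exact Or.inr (Or.inr hcases)

open Classical in
/-- The roots `v` with `⟪v, b⟫ = 1`, that is, those for which `b - v` is again a root. -/
def unitPairing (Φ : Finset E) (b : E) : Finset E := Φ.filter fun v ↦ inner ℝ v b = (1 : ℝ)

open Classical in
/-- The roots `v` such that `b = v + (b - v)` with both summands of smaller height. -/
def heightSummands (Φ : Finset E) (t : E → ℤ) (b : E) : Finset E :=
  (unitPairing Φ b).filter fun v ↦ t v + t (b - v) = t b

/-- The sum of all roots, weighted by their heights. -/
def heightVector (Φ : Finset E) (t : E → ℤ) : E := ∑ v ∈ Φ, (t v : ℝ) • v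

variable {Φ : Finset E} {C : ℝ} {k : ℤ} {t : E → ℤ} {b v : E}

theorem mem_unitPairing : v ∈ unitPairing Φ b ↔ v ∈ Φ ∧ inner ℝ v b = (1 : ℝ) := by
  simp [unitPairing]

theorem mem_heightSummands :
    v ∈ heightSummands Φ t b ↔ v ∈ unitPairing Φ b ∧ t v + t (b - v) = t b := by
  simp [heightSummands]

namespace IsRootDesign

theorem sub_mem_unitPairing (hΦ : IsRootDesign Φ C) (hb : b ∈ Φ) (hv : v ∈ unitPairing Φ b) :
    b - v ∈ unitPairing Φ b := by
  rw [mem_unitPairing] at hv ⊢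
  refine ⟨hΦ.sub_mem v hv.1 b hb hv.2, ?_⟩
  rw [inner_sub_left, real_inner_self_eq_norm_sq, hΦ.norm_sq b hb, hv.2]
  norm_num

open Classical in
theorem comp_inner_eq (hΦ : IsRootDesign Φ C) (hb : b ∈ Φ) (hv : v ∈ Φ) {h : ℝ → ℝ}
    (h0 : h 0 = 0) :
    h (inner ℝ v b) = (if v = b then h 2 else 0) + (if v = -b then h (-2) else 0) +
      (if inner ℝ v b = (1 : ℝ) then h 1 else 0) +
      (if inner ℝ v b = (-1 : ℝ) then h (-1) else 0) := by
  have hbb : inner ℝ b b = (2 : ℝ) := by rw [real_inner_self_eq_norm_sq, hΦ.norm_sq b hb]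
  have hbnb : b ≠ -b := fun h ↦ by
    have hinner := congrArg (inner ℝ b) h
    rw [inner_neg_right, hbb] at hinner
    norm_num at hinner
  obtain ⟨k, hk⟩ := hΦ.inner_int v hv b hb
  rcases eq_or_eq_neg_or_inner_of_norm_sq_eq_two (hΦ.norm_sq v hv) (hΦ.norm_sq b hb) hk with
    rfl | rfl | hcases
  · rw [hbb]
    norm_num [hbnb]
  · rw [inner_neg_left, hbb]
    norm_num [hbnb.symm]
  · have hne : v ≠ b := by
      rintro rfl
      rw [hbb] at hk
      norm_cast at hk
      omega
    have hne' : v ≠ -b := by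
      rintro rfl
      rw [inner_neg_left, hbb] at hk
      norm_cast at hk
      omega
    rcases hcases with rfl | rfl | rfl <;> norm_num [hk, hne, hne', h0]

theorem sum_mul_comp_inner (hΦ : IsRootDesign Φ C) (hb : b ∈ Φ) (g : E → ℝ) {h : ℝ → ℝ}
    (h0 : h 0 = 0) :
    ∑ v ∈ Φ, g v * h (inner ℝ v b) =
      g b * h 2 + g (-b) * h (-2) + ∑ v ∈ unitPairing Φ b, (g v * h 1 + g (-v) * h (-1)) := by
  classical
  have hneg : ∑ v ∈ Φ, (if inner ℝ v b = (-1 : ℝ) then g v * h (-1) else 0) =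
      ∑ v ∈ Φ, if inner ℝ v b = (1 : ℝ) then g (-v) * h (-1) else 0 :=
    Finset.sum_nbij' (-·) (-·) hΦ.neg_mem hΦ.neg_mem (by simp) (by simp) fun v _ ↦ by
      simp [inner_neg_left, neg_eq_iff_eq_neg]
  rw [Finset.sum_congr rfl fun v hv ↦ by rw [hΦ.comp_inner_eq hb hv h0]]
  simp only [mul_add, mul_ite, mul_zero, Finset.sum_add_distrib, Finset.sum_ite_eq', hb,
    hΦ.neg_mem b hb, if_true, hneg]
  simp only [unitPairing, Finset.sum_filter]
  ring

theorem card_unitPairing (hΦ : IsRootDesign Φ C) (hb : b ∈ Φ) :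
    ((unitPairing Φ b).card : ℝ) = C - 4 := by
  have hdesign := hΦ.design b
  have hsum := hΦ.sum_mul_comp_inner hb (fun _ ↦ 1) (h := fun x ↦ x ^ 2) (by simp)
  simp only [one_mul, hdesign, hΦ.norm_sq b hb] at hsum
  norm_num at hsum
  linarith

theorem inner_eq_zero_of_forall_nonneg (hΦ : IsRootDesign Φ C) {x : E}
    (h : ∀ b ∈ Φ, 0 ≤ inner ℝ x b) (hb : b ∈ Φ) : inner ℝ x b = 0 := by
  have hneg := h (-b) (hΦ.neg_mem b hb)
  rw [inner_neg_right] at hneg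
  linarith [h b hb]

end IsRootDesign

namespace IsCyclicHeight

theorem pos (ht : IsCyclicHeight Φ k t) (hb : b ∈ Φ) : 0 < k := by
  linarith [ht.one_le b hb, ht.lt b hb]

open Classical in
theorem add_sub_height (ht : IsCyclicHeight Φ k t) (hΦ : IsRootDesign Φ C) (hb : b ∈ Φ)
    (hv : v ∈ unitPairing Φ b) :
    t v + t (b - v) - k = t b - k * (if t v + t (b - v) = t b then 1 else 0) := by
  obtain ⟨hvΦ, hvb⟩ := mem_unitPairing.1 hv
  have hwΦ := (mem_unitPairing.1 (hΦ.sub_mem_unitPairing hb hv)).1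
  obtain ⟨j, hj⟩ := ht.dvd v hvΦ b hb hvb
  have hv1 := ht.one_le v hvΦ
  have hvk := ht.lt v hvΦ
  have hw1 := ht.one_le _ hwΦ
  have hwk := ht.lt _ hwΦ
  have hb1 := ht.one_le b hb
  have hbk := ht.lt b hb
  have hj0 : -1 < j := by nlinarith
  have hj2 : j < 2 := by nlinarith
  obtain rfl | rfl : j = 0 ∨ j = 1 := by omega
  · rw [if_pos (by linarith)]
    linarith
  · rw [if_neg (by linarith)]
    linarith

theorem inner_heightVector (ht : IsCyclicHeight Φ k t) (hΦ : IsRootDesign Φ C) (hb : b ∈ Φ) :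
    inner ℝ (heightVector Φ t) b = C * t b - 2 * k - k * (heightSummands Φ t b).card := by
  classical
  have hsymm : ∑ v ∈ unitPairing Φ b, (t v : ℝ) = ∑ v ∈ unitPairing Φ b, (t (b - v) : ℝ) :=
    Finset.sum_nbij' (b - ·) (b - ·) (fun v ↦ hΦ.sub_mem_unitPairing hb)
      (fun v ↦ hΦ.sub_mem_unitPairing hb) (by simp) (by simp) (by simp)
  have hpair : ∑ v ∈ unitPairing Φ b, (t v * (1 : ℝ) + t (-v) * (-1 : ℝ)) =
      ∑ v ∈ unitPairing Φ b, ((t b : ℝ) - k * (if t v + t (b - v) = t b then 1 else 0)) :=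
    calc _ = ∑ v ∈ unitPairing Φ b, ((t v : ℝ) + t v - k) :=
          Finset.sum_congr rfl fun v hv ↦ by
            rw [ht.neg v (mem_unitPairing.1 hv).1]
            push_cast
            ring
      _ = ∑ v ∈ unitPairing Φ b, ((t v : ℝ) + t (b - v) - k) := by
          simp only [Finset.sum_sub_distrib, Finset.sum_add_distrib, ← hsymm]
      _ = _ := Finset.sum_congr rfl fun v hv ↦ by exact_mod_cast ht.add_sub_height hΦ hb hv
  have hsum := hΦ.sum_mul_comp_inner hb (fun v ↦ (t v : ℝ)) (h := id) rfl
  simp only [id, hpair, ht.neg b hb, Finset.sum_sub_distrib, Finset.sum_const, nsmul_eq_mul,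
    hΦ.card_unitPairing hb, ← Finset.mul_sum, Finset.sum_boole] at hsum
  simp only [heightVector, sum_inner, real_inner_smul_left, hsum, heightSummands]
  push_cast
  ring

theorem induction_on (ht : IsCyclicHeight Φ k t) (hΦ : IsRootDesign Φ C) {p : E → Prop}
    (base : ∀ b ∈ Φ, heightSummands Φ t b = ∅ → p b) (add : ∀ u v, p u → p v → p (u + v)) :
    ∀ b ∈ Φ, p b := by
  suffices h : ∀ (n : ℕ), ∀ b ∈ Φ, (t b).toNat = n → p b from fun b hb ↦ h _ b hb rfl
  intro n
  induction n using Nat.strong_induction_on with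
  | _ n ih =>
    rintro b hb rfl
    rcases (heightSummands Φ t b).eq_empty_or_nonempty with hempty | ⟨v, hv⟩
    · exact base b hb hempty
    · obtain ⟨hvA, hsum⟩ := mem_heightSummands.1 hv
      have hvΦ := (mem_unitPairing.1 hvA).1
      have hwΦ := (mem_unitPairing.1 (hΦ.sub_mem_unitPairing hb hvA)).1
      have hv1 := ht.one_le v hvΦ
      have hw1 := ht.one_le _ hwΦ
      simpa using add v (b - v) (ih _ (by omega) v hvΦ rfl) (ih _ (by omega) _ hwΦ rfl)

theorem heightSummands_eq_empty (ht : IsCyclicHeight Φ k t) (hΦ : IsRootDesign Φ C) (hb : b ∈ Φ)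
    (hb1 : t b = 1) : heightSummands Φ t b = ∅ := by
  refine Finset.eq_empty_of_forall_notMem fun v hv ↦ ?_
  obtain ⟨hvA, hsum⟩ := mem_heightSummands.1 hv
  have hv1 := ht.one_le v (mem_unitPairing.1 hvA).1
  have hw1 := ht.one_le _ (mem_unitPairing.1 (hΦ.sub_mem_unitPairing hb hvA)).1
  omega

variable {ι : Type*} {s : Finset ι} {f : ι → E} {c : ι → ℝ}

theorem design_const_eq_two_mul (ht : IsCyclicHeight Φ k t) (hΦ : IsRootDesign Φ C)
    (hf : ∀ i ∈ s, f i ∈ Φ ∧ t (f i) = 1) (hc : ∑ i ∈ s, c i ≠ 0)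
    (hrel : ∑ i ∈ s, c i • f i = 0) : C = 2 * k := by
  have hmul : inner ℝ (heightVector Φ t) (∑ i ∈ s, c i • f i) = (∑ i ∈ s, c i) * (C - 2 * k) := by
    rw [inner_sum, Finset.sum_mul]
    refine Finset.sum_congr rfl fun i hi ↦ ?_
    rw [inner_smul_right, ht.inner_heightVector hΦ (hf i hi).1,
      ht.heightSummands_eq_empty hΦ (hf i hi).1 (hf i hi).2, (hf i hi).2]
    simp
  rw [hrel, inner_zero_right] at hmul
  exact sub_eq_zero.1 ((mul_eq_zero.1 hmul.symm).resolve_left hc)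

theorem height_eq_one_of_heightSummands_eq_empty (ht : IsCyclicHeight Φ k t)
    (hΦ : IsRootDesign Φ (2 * k)) (hb : b ∈ Φ) (hempty : heightSummands Φ t b = ∅) : t b = 1 := by
  have hnonneg : ∀ b ∈ Φ, 0 ≤ inner ℝ (heightVector Φ t) b := by
    refine ht.induction_on hΦ (fun b hb hempty ↦ ?_) fun u v hu hv ↦ ?_
    · have hk : (0 : ℝ) < k := by exact_mod_cast ht.pos hb
      have hb1 : (1 : ℝ) ≤ t b := by exact_mod_cast ht.one_le b hb
      rw [ht.inner_heightVector hΦ hb, hempty, Finset.card_empty, Nat.cast_zero]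
      nlinarith
    · rw [inner_add_right]
      exact add_nonneg hu hv
  have hzero := hΦ.inner_eq_zero_of_forall_nonneg hnonneg hb
  rw [ht.inner_heightVector hΦ hb, hempty, Finset.card_empty, Nat.cast_zero, mul_zero, sub_zero]
    at hzero
  have hk : (k : ℝ) ≠ 0 := by exact_mod_cast (ht.pos hb).ne'
  have hb1 : (t b : ℝ) = 1 := mul_left_cancel₀ (mul_ne_zero two_ne_zero hk) (by linarith)
  exact_mod_cast hb1

-- A relation between the roots of height one forces `C = 2k`. Then every root is a sum of roots of
-- height one, so `⟪b, y⟫ ≤ 0` for all roots `b`, and equality holds because `-b` is a root, too.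
theorem eq_zero_of_forall_inner_nonpos (ht : IsCyclicHeight Φ k t) (hΦ : IsRootDesign Φ C)
    (hf : ∀ i ∈ s, f i ∈ Φ ∧ t (f i) = 1) (hc : ∑ i ∈ s, c i ≠ 0)
    (hrel : ∑ i ∈ s, c i • f i = 0) {y : E} (hy : ∀ b ∈ Φ, t b = 1 → inner ℝ b y ≤ 0) : y = 0 := by
  obtain rfl := ht.design_const_eq_two_mul hΦ hf hc hrel
  obtain ⟨i₀, hi₀, -⟩ := Finset.exists_ne_zero_of_sum_ne_zero hc
  have hk : (k : ℝ) ≠ 0 := by exact_mod_cast (ht.pos (hf i₀ hi₀).1).ne'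
  have hnonneg : ∀ b ∈ Φ, 0 ≤ inner ℝ (-y) b := by
    refine ht.induction_on hΦ (fun b hb hempty ↦ ?_) fun u v hu hv ↦ ?_
    · rw [inner_neg_left, real_inner_comm, neg_nonneg]
      exact hy b hb (ht.height_eq_one_of_heightSummands_eq_empty hΦ hb hempty)
    · rw [inner_add_right]
      exact add_nonneg hu hv
  have hzero : ∀ b ∈ Φ, inner ℝ b y = 0 := fun b hb ↦ by
    simpa [inner_neg_left, real_inner_comm] using hΦ.inner_eq_zero_of_forall_nonneg hnonneg hb
  have hdesign := hΦ.design y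
  rw [Finset.sum_eq_zero fun v hv ↦ by rw [hzero v hv, zero_pow two_ne_zero]] at hdesign
  simpa [hk] using hdesign.symm

end IsCyclicHeight

end RootHeights

/-! ### Neighbors -/

section Neighbor

open Module

-- Modulo `ℤ`, the map `φ` factors through `δ`, whose image is a finite cyclic group.
theorem exists_int_forall_exists_sub_mul_eq_intCast {M : Type*} [AddCommGroup M] {δ φ : M →+ ℝ}
    {k : ℤ} (hk : k ≠ 0) (hδ : ∀ m, ∃ n : ℤ, k * δ m = n)
    (hφ : ∀ m, (∃ n : ℤ, δ m = n) → ∃ n : ℤ, φ m = n) :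
    ∃ e : ℤ, ∀ m, ∃ n : ℤ, φ m - e * δ m = n := by
  let I : AddSubgroup ℤ := ((AddMonoidHom.mulLeft (k : ℝ)).comp
    (δ.coprod (Int.castAddHom ℝ))).range.comap (Int.castAddHom ℝ)
  have hI : ∀ n, n ∈ I ↔ ∃ m, ∃ j : ℤ, k * (δ m + j) = n := fun n ↦ by
    simp [I, AddSubgroup.mem_comap, AddMonoidHom.mem_range]
  obtain ⟨g, hg⟩ := Int.subgroup_cyclic I
  have hgI : ∀ n, n ∈ I ↔ ∃ s : ℤ, s * g = n := fun n ↦ by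
    simp [hg, AddSubgroup.mem_closure_singleton]
  obtain ⟨h, hh⟩ := (hgI k).1 ((hI k).2 ⟨0, 1, by simp⟩)
  obtain ⟨m₁, j₁, hm₁⟩ := (hI g).1 ((hgI g).2 ⟨1, one_mul g⟩)
  have hkg : (h : ℝ) * g = k := by exact_mod_cast hh
  have hk0 : (k : ℝ) ≠ 0 := Int.cast_ne_zero.2 hk
  obtain ⟨e, he⟩ := hφ (h • m₁) ⟨1 - h * j₁, by
    rw [map_zsmul, zsmul_eq_mul]
    push_cast
    apply mul_left_cancel₀ hk0
    linear_combination (h : ℝ) * hm₁ + hkg⟩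
  rw [map_zsmul, zsmul_eq_mul] at he
  refine ⟨e, fun m ↦ ?_⟩
  obtain ⟨n, hn⟩ := hδ m
  obtain ⟨s, hs⟩ := (hgI n).1 ((hI n).2 ⟨m, 0, by simpa using hn⟩)
  have hsg : (s : ℝ) * g = n := by exact_mod_cast hs
  obtain ⟨l, hl⟩ := hφ (m - s • m₁) ⟨s * j₁, by
    rw [map_sub, map_zsmul, zsmul_eq_mul]
    push_cast
    apply mul_left_cancel₀ hk0
    linear_combination hn - hsg - (s : ℝ) * hm₁⟩
  rw [map_sub, map_zsmul, zsmul_eq_mul] at hl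
  refine ⟨l, ?_⟩
  have heδ : (e : ℝ) * δ m = s * φ m₁ := by
    apply mul_left_cancel₀ hk0
    linear_combination (e : ℝ) * hn - (e : ℝ) * hsg - (s : ℝ) * g * he + (s : ℝ) * φ m₁ * hkg
  linear_combination hl - heδ

variable {E : Type*} [NormedAddCommGroup E] [InnerProductSpace ℝ E] {L : Submodule ℤ E} {c v : E}

/-- The pairs `(v, a)` with `v + ac ∈ L` and `⟪v, c⟫ + a‖c‖²/2 ∈ ℤ`. The first components form
the neighbor of `L` at `c`; the second component is determined modulo a period, and is called the
level of `v`. -/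
def levelGroup (L : Submodule ℤ E) (c : E) : AddSubgroup (E × ℤ) where
  carrier := {p | p.1 + p.2 • c ∈ L ∧ ∃ j : ℤ, inner ℝ p.1 c + p.2 * (‖c‖ ^ 2 / 2) = j}
  zero_mem' := ⟨by simp, 0, by simp⟩
  add_mem' := by
    rintro ⟨u, a⟩ ⟨v, b⟩ ⟨hu, i, hi⟩ ⟨hv, j, hj⟩
    refine ⟨?_, i + j, ?_⟩
    · have hsum : u + v + (a + b) • c = u + a • c + (v + b • c) := by rw [add_smul]; abel
      exact hsum ▸ L.add_mem hu hv
    · simp only [Prod.fst_add, Prod.snd_add, inner_add_left, Int.cast_add]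
      linear_combination hi + hj
  neg_mem' := by
    rintro ⟨u, a⟩ ⟨hu, i, hi⟩
    refine ⟨?_, -i, ?_⟩
    · have hneg : -u + -a • c = -(u + a • c) := by rw [neg_smul]; abel
      exact hneg ▸ L.neg_mem hu
    · simp only [Prod.fst_neg, Prod.snd_neg, inner_neg_left, Int.cast_neg]
      linear_combination -hi

/-- The neighbor of the lattice `L` at the point `c`. -/
def neighbor (L : Submodule ℤ E) (c : E) : Submodule ℤ E :=
  AddSubgroup.toIntSubmodule ((levelGroup L c).map (AddMonoidHom.fst E ℤ))

theorem mem_levelGroup {a : ℤ} : (v, a) ∈ levelGroup L c ↔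
    v + a • c ∈ L ∧ ∃ j : ℤ, inner ℝ v c + a * (‖c‖ ^ 2 / 2) = j := Iff.rfl

theorem mem_neighbor : v ∈ neighbor L c ↔ ∃ a, (v, a) ∈ levelGroup L c := by
  change v ∈ (levelGroup L c).map (AddMonoidHom.fst E ℤ) ↔ _
  simp

theorem EvenUnimodular.even_neighbor (hL : EvenUnimodular L) (hv : v ∈ neighbor L c) :
    ∃ k : ℤ, ‖v‖ ^ 2 = 2 * k := by
  obtain ⟨a, hmem, j, hj⟩ := mem_neighbor.1 hv
  obtain ⟨n, hn⟩ := hL.even _ hmem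
  refine ⟨n - a * j, ?_⟩
  rw [← Int.cast_smul_eq_zsmul ℝ, norm_add_sq_real, real_inner_smul_right, norm_smul, mul_pow,
    Real.norm_eq_abs, sq_abs] at hn
  push_cast
  linear_combination hn - 2 * (a : ℝ) * hj

theorem EvenUnimodular.mem_neighbor_of_forall_inner (hL : EvenUnimodular L) {k : ℤ} (hk : k ≠ 0)
    (hkc : (0, k) ∈ levelGroup L c) {y : E}
    (hy : ∀ v ∈ neighbor L c, ∃ n : ℤ, inner ℝ y v = n) : y ∈ neighbor L c := by
  obtain ⟨hkL, jk, hjk⟩ := hkc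
  let δ : L × ℤ →+ ℝ := AddMonoidHom.mk' (fun p ↦ inner ℝ (p.1 : E) c - p.2 * (‖c‖ ^ 2 / 2))
    fun p q ↦ by simp only [Prod.fst_add, Prod.snd_add, Submodule.coe_add, inner_add_left,
      Int.cast_add]; ring
  let φ : L × ℤ →+ ℝ := AddMonoidHom.mk' (fun p ↦ inner ℝ y (p.1 : E) - p.2 * inner ℝ y c)
    fun p q ↦ by simp only [Prod.fst_add, Prod.snd_add, Submodule.coe_add, inner_add_right,
      Int.cast_add]; ring
  have hδ : ∀ p, ∃ n : ℤ, k * δ p = n := fun p ↦ by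
    obtain ⟨n, hn⟩ := hL.exists_inner_eq_intCast p.1.2 hkL
    simp only [zero_add, ← Int.cast_smul_eq_zsmul ℝ, real_inner_smul_right,
      inner_zero_left] at hn hjk
    refine ⟨n - p.2 * jk, ?_⟩
    simp only [δ, AddMonoidHom.mk'_apply]
    push_cast
    linear_combination hn - (p.2 : ℝ) * hjk
  have hφ : ∀ p, (∃ n : ℤ, δ p = n) → ∃ n : ℤ, φ p = n := by
    rintro ⟨x, a⟩ ⟨j, hj⟩
    simp only [δ, AddMonoidHom.mk'_apply] at hj
    obtain ⟨n, hn⟩ := hy (x - a • c) (mem_neighbor.2 ⟨a, mem_levelGroup.2 ⟨by simp, j, by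
      rw [inner_sub_left, ← Int.cast_smul_eq_zsmul ℝ, real_inner_smul_left,
        real_inner_self_eq_norm_sq]
      linear_combination hj⟩⟩)
    refine ⟨n, ?_⟩
    rwa [inner_sub_right, ← Int.cast_smul_eq_zsmul ℝ, real_inner_smul_right] at hn
  obtain ⟨e, he⟩ := exists_int_forall_exists_sub_mul_eq_intCast hk hδ hφ
  refine mem_neighbor.2 ⟨-e, mem_levelGroup.2 ⟨hL.dual _ fun v hv ↦ ?_, ?_⟩⟩
  · obtain ⟨n, hn⟩ := he (⟨v, hv⟩, 0)
    refine ⟨n, ?_⟩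
    simp only [δ, φ, AddMonoidHom.mk'_apply] at hn
    rw [inner_add_left, ← Int.cast_smul_eq_zsmul ℝ, real_inner_smul_left, real_inner_comm v c]
    push_cast at hn ⊢
    linear_combination hn
  · obtain ⟨n, hn⟩ := he (0, -1)
    refine ⟨n, ?_⟩
    simp only [δ, φ, AddMonoidHom.mk'_apply, Submodule.coe_zero, inner_zero_left,
      inner_zero_right] at hn
    push_cast at hn ⊢
    linear_combination hn

theorem EvenUnimodular.evenUnimodular_neighbor (hL : EvenUnimodular L) {k : ℤ} (hk : k ≠ 0)
    (hkc : (0, k) ∈ levelGroup L c) : EvenUnimodular (neighbor L c) where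
  even _ hv := hL.even_neighbor hv
  dual _ hy := hL.mem_neighbor_of_forall_inner hk hkc hy

section Level

theorem EvenUnimodular.sub_mem_levelGroup (hL : EvenUnimodular L) (hv : v ∈ L)
    (hvc : ‖v - c‖ ^ 2 = 2) : (v - c, 1) ∈ levelGroup L c := by
  obtain ⟨n, hn⟩ := hL.even v hv
  refine mem_levelGroup.2 ⟨by simpa using hv, n - 1, ?_⟩
  rw [norm_sub_sq_real, hn] at hvc
  rw [inner_sub_left, real_inner_self_eq_norm_sq]
  push_cast
  linear_combination -hvc / 2

theorem exists_period_levelGroup {k : ℤ} (hk : k ≠ 0) (hkc : (0, k) ∈ levelGroup L c) :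
    ∃ k₀ : ℤ, 0 < k₀ ∧ ∀ n : ℤ, (0, n) ∈ levelGroup L c ↔ k₀ ∣ n := by
  obtain ⟨g, hg⟩ := Int.subgroup_cyclic ((levelGroup L c).comap (AddMonoidHom.inr E ℤ))
  have hdvd : ∀ n : ℤ, (0, n) ∈ levelGroup L c ↔ g ∣ n := fun n ↦ by
    rw [← AddMonoidHom.inr_apply, ← AddSubgroup.mem_comap, hg, AddSubgroup.mem_closure_singleton,
      dvd_iff_exists_eq_mul_left]
    simp [eq_comm]
  refine ⟨|g|, abs_pos.2 ?_, fun n ↦ by rw [hdvd, abs_dvd]⟩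
  rintro rfl
  exact hk (zero_dvd_iff.1 ((hdvd k).1 hkc))

variable {k₀ : ℤ} {t : E → ℤ}

theorem exists_level (hk₀ : 0 < k₀) (hper : ∀ n : ℤ, (0, n) ∈ levelGroup L c ↔ k₀ ∣ n) :
    ∃ t : E → ℤ, ∀ v ∈ neighbor L c, (v, t v) ∈ levelGroup L c ∧ 0 ≤ t v ∧ t v < k₀ := by
  have hex : ∀ v, ∃ a : ℤ, v ∈ neighbor L c → (v, a) ∈ levelGroup L c ∧ 0 ≤ a ∧ a < k₀ := fun v ↦ by
    by_cases hv : v ∈ neighbor L c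
    · obtain ⟨a, ha⟩ := mem_neighbor.1 hv
      refine ⟨a % k₀, fun _ ↦ ⟨?_, Int.emod_nonneg _ hk₀.ne', Int.emod_lt_of_pos _ hk₀⟩⟩
      simpa using (levelGroup L c).sub_mem ha ((hper (a - a % k₀)).2 Int.dvd_self_sub_emod)
    · exact ⟨0, fun h ↦ absurd h hv⟩
  exact ⟨fun v ↦ (hex v).choose, fun v ↦ (hex v).choose_spec⟩

theorem dvd_level_sub_level (hper : ∀ n : ℤ, (0, n) ∈ levelGroup L c ↔ k₀ ∣ n) {a b : ℤ}
    (ha : (v, a) ∈ levelGroup L c) (hb : (v, b) ∈ levelGroup L c) : k₀ ∣ a - b := by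
  simpa [← hper] using (levelGroup L c).sub_mem ha hb

end Level

variable {ι : Type*} {s : Finset ι} {f : ι → E}

section Barycenter

variable {w : ι → ℝ}

theorem sum_mul_norm_sub_sq (hrel : ∑ i ∈ s, w i • (f i - c) = 0) (x : E) :
    ∑ i ∈ s, w i * ‖x - f i‖ ^ 2 =
      (∑ i ∈ s, w i) * ‖x - c‖ ^ 2 + ∑ i ∈ s, w i * ‖f i - c‖ ^ 2 := by
  have hinner : ∑ i ∈ s, w i * inner ℝ (x - c) (f i - c) = 0 := by
    simp only [← real_inner_smul_right, ← inner_sum, hrel, inner_zero_right]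
  have hterm : ∀ i, w i * ‖x - f i‖ ^ 2 = w i * ‖x - c‖ ^ 2 + w i * ‖f i - c‖ ^ 2 -
      2 * (w i * inner ℝ (x - c) (f i - c)) := fun i ↦ by
    rw [← sub_sub_sub_cancel_right x (f i) c, norm_sub_sq_real]
    ring
  simp only [hterm, Finset.sum_sub_distrib, Finset.sum_add_distrib, ← Finset.mul_sum, hinner,
    ← Finset.sum_mul]
  ring

theorem norm_sub_sq_of_equidistant {p : E} {r R : ℝ} (hw : ∑ i ∈ s, w i ≠ 0)
    (hrel : ∑ i ∈ s, w i • (f i - c) = 0) (hc : ∀ i ∈ s, ‖f i - c‖ ^ 2 = r)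
    (hp : ∀ i ∈ s, ‖p - f i‖ ^ 2 = R) : ‖p - c‖ ^ 2 = R - r := by
  have hsum : ∀ {g : ι → ℝ} {a : ℝ}, (∀ i ∈ s, g i = a) →
      ∑ i ∈ s, w i * g i = (∑ i ∈ s, w i) * a := fun hg ↦ by
    rw [Finset.sum_mul]
    exact Finset.sum_congr rfl fun i hi ↦ by rw [hg i hi]
  have haxis := sum_mul_norm_sub_sq hrel p
  rw [hsum hp, hsum hc, ← mul_add] at haxis
  linarith [mul_left_cancel₀ hw haxis]

end Barycenter

variable {m : ι → ℤ}

theorem EvenUnimodular.sum_weights_mem_levelGroup (hL : EvenUnimodular L) (hf : ∀ i ∈ s, f i ∈ L)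
    (hc : ∀ i ∈ s, ‖f i - c‖ ^ 2 = 2) (hrel : ∑ i ∈ s, (m i : ℝ) • (f i - c) = 0) :
    (0, ∑ i ∈ s, m i) ∈ levelGroup L c := by
  have hmem : ∑ i ∈ s, m i • (f i - c, (1 : ℤ)) ∈ levelGroup L c := (levelGroup L c).sum_mem
    fun i hi ↦ (levelGroup L c).zsmul_mem (hL.sub_mem_levelGroup (hf i hi) (hc i hi)) _
  convert! hmem
  · simp [Prod.fst_sum, ← hrel, Int.cast_smul_eq_zsmul ℝ]
  · simp [Prod.snd_sum]

variable [FiniteDimensional ℝ E]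

section Height

variable {k₀ : ℤ} {t : E → ℤ}

theorem isCyclicHeight_level (hN : EvenUnimodular (neighbor L c)) (hr : ∀ v ∈ L, ‖v‖ ^ 2 ≠ 2)
    (hper : ∀ n : ℤ, (0, n) ∈ levelGroup L c ↔ k₀ ∣ n)
    (ht : ∀ v ∈ neighbor L c, (v, t v) ∈ levelGroup L c ∧ 0 ≤ t v ∧ t v < k₀) :
    IsCyclicHeight (shell (neighbor L c) 1) k₀ t := by
  have hmem : ∀ v ∈ shell (neighbor L c) 1, v ∈ neighbor L c ∧ ‖v‖ ^ 2 = 2 := fun v hv ↦ by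
    simpa using hN.mem_shell.1 hv
  have hone : ∀ v ∈ neighbor L c, ‖v‖ ^ 2 = 2 → 1 ≤ t v := fun v hv hv2 ↦ by
    obtain ⟨hlev, h0, -⟩ := ht v hv
    have hne : t v ≠ 0 := fun hzero ↦ hr v (by simpa [hzero] using (mem_levelGroup.1 hlev).1) hv2
    omega
  refine ⟨fun v hv ↦ hone v (hmem v hv).1 (hmem v hv).2, fun v hv ↦ (ht v (hmem v hv).1).2.2,
    fun v hv ↦ ?_, fun v hv b hb _ ↦ ?_⟩
  · obtain ⟨hvN, hv2⟩ := hmem v hv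
    have hnN := (neighbor L c).neg_mem hvN
    have hdvd := dvd_level_sub_level hper ((levelGroup L c).add_mem (ht v hvN).1 (ht _ hnN).1)
      (b := 0) (by rw [add_neg_cancel]; exact (levelGroup L c).zero_mem)
    rw [sub_zero] at hdvd
    obtain ⟨s, hs⟩ := hdvd
    have hv1 := hone v hvN hv2
    have hn1 := hone _ hnN (by rw [norm_neg, hv2])
    have hvk := (ht v hvN).2.2
    have hnk := (ht _ hnN).2.2
    have hs0 : 0 < s := by nlinarith
    have hs2 : s < 2 := by nlinarith
    obtain rfl : s = 1 := by omega
    linarith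
  · obtain ⟨hvN, -⟩ := hmem v hv
    obtain ⟨hbN, -⟩ := hmem b hb
    have hsum := (levelGroup L c).add_mem (ht v hvN).1 (ht _ ((neighbor L c).sub_mem hbN hvN)).1
    rw [Prod.mk_add_mk, add_sub_cancel] at hsum
    exact dvd_level_sub_level hper hsum (ht b hbN).1

end Height

variable [MeasurableSpace E] [BorelSpace E]

-- Polarization: the bilinear sum vanishes on the orthogonal pair `x ± ‖x‖e` for a unit vector `e`.
theorem EvenUnimodular.exists_sum_shell_inner_sq_eq (hL : EvenUnimodular L)
    (hd : finrank ℝ E = 24) (n : ℕ) :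
    ∃ C : ℝ, ∀ x : E, ∑ v ∈ shell L n, inner ℝ v x ^ 2 = C * ‖x‖ ^ 2 := by
  have : Nontrivial E := nontrivial_of_finrank_pos (R := ℝ) (by rw [hd]; norm_num)
  obtain ⟨e, he⟩ := exists_norm_eq E zero_le_one
  refine ⟨∑ v ∈ shell L n, inner ℝ v e ^ 2, fun x ↦ ?_⟩
  have horth : inner ℝ (x + ‖x‖ • e) (x - ‖x‖ • e) = 0 := by
    rw [inner_add_left, inner_sub_right, inner_sub_right, real_inner_smul_left,
      real_inner_smul_left, real_inner_smul_right, real_inner_smul_right,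
      real_inner_self_eq_norm_sq, real_inner_self_eq_norm_sq, he, real_inner_comm x e]
    ring
  rw [Finset.sum_mul, ← sub_eq_zero, ← Finset.sum_sub_distrib,
    ← hL.sum_shell_inner_mul_inner hd horth n]
  refine Finset.sum_congr rfl fun v _ ↦ ?_
  rw [inner_add_left, inner_sub_left, real_inner_smul_left, real_inner_comm x v,
    real_inner_comm e v]
  ring

theorem EvenUnimodular.exists_isRootDesign (hL : EvenUnimodular L) (hd : finrank ℝ E = 24) :
    ∃ C : ℝ, IsRootDesign (shell L 1) C := by
  have hmem : ∀ v, v ∈ shell L 1 ↔ v ∈ L ∧ ‖v‖ ^ 2 = 2 := fun v ↦ by simp [hL.mem_shell]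
  obtain ⟨C, hC⟩ := hL.exists_sum_shell_inner_sq_eq hd 1
  refine ⟨C, ⟨fun v hv ↦ ((hmem v).1 hv).2, fun v hv ↦ ?_, fun v hv w hw ↦ ?_,
    fun v hv b hb hvb ↦ ?_, hC⟩⟩
  · rw [hmem] at hv ⊢
    exact ⟨L.neg_mem hv.1, by rw [norm_neg, hv.2]⟩
  · exact hL.exists_inner_eq_intCast ((hmem v).1 hv).1 ((hmem w).1 hw).1
  · rw [hmem] at hv hb ⊢
    refine ⟨L.sub_mem hb.1 hv.1, ?_⟩
    rw [norm_sub_sq_real, real_inner_comm, hvb, hv.2, hb.2]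
    norm_num

-- The roots of the neighbor of `L` at `c`, graded by their levels, contain the vectors `f i - c` as
-- roots of height one, and any root `b` of height one has `⟪b, p - c⟫ ≤ 0` because `b + c ∈ L`.
theorem EvenUnimodular.eq_center_of_equidistant (hL : EvenUnimodular L)
    (hd : finrank ℝ E = 24) (hr : ∀ v ∈ L, ‖v‖ ^ 2 ≠ 2) (hf : ∀ i ∈ s, f i ∈ L)
    (hc : ∀ i ∈ s, ‖f i - c‖ ^ 2 = 2) (hm : ∑ i ∈ s, m i ≠ 0)
    (hrel : ∑ i ∈ s, (m i : ℝ) • (f i - c) = 0) {p : E} {R : ℝ}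
    (hp : ∀ i ∈ s, ‖p - f i‖ ^ 2 = R) (hmin : ∀ v ∈ L, R ≤ ‖p - v‖ ^ 2) : p = c := by
  have hlev := hL.sum_weights_mem_levelGroup hf hc hrel
  have hN := hL.evenUnimodular_neighbor hm hlev
  obtain ⟨C, hC⟩ := hN.exists_isRootDesign hd
  obtain ⟨k₀, hk₀, hper⟩ := exists_period_levelGroup hm hlev
  obtain ⟨t, ht⟩ := exists_level hk₀ hper
  have hheight := isCyclicHeight_level hN hr hper ht
  have hw : ∑ i ∈ s, (m i : ℝ) ≠ 0 := by exact_mod_cast hm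
  have hpc := norm_sub_sq_of_equidistant hw hrel hc hp
  have hone : ∀ i ∈ s, f i - c ∈ shell (neighbor L c) 1 ∧ t (f i - c) = 1 := fun i hi ↦ by
    have hlev := hL.sub_mem_levelGroup (hf i hi) (hc i hi)
    have hvN := mem_neighbor.2 ⟨1, hlev⟩
    have hvΦ : f i - c ∈ shell (neighbor L c) 1 :=
      hN.mem_shell.2 ⟨hvN, by simpa using hc i hi⟩
    have hle := hheight.one_le _ hvΦ
    have hlt := hheight.lt _ hvΦ
    have hzero := Int.eq_zero_of_dvd_of_nonneg_of_lt (by omega) (by omega)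
      (dvd_level_sub_level hper (ht _ hvN).1 hlev)
    exact ⟨hvΦ, by omega⟩
  refine sub_eq_zero.1 (hheight.eq_zero_of_forall_inner_nonpos hC hone hw hrel fun b hb hb1 ↦ ?_)
  obtain ⟨hbN, hb2⟩ := hN.mem_shell.1 hb
  have hbc := hmin _ (mem_levelGroup.1 (ht b hbN).1).1
  rw [hb1, one_smul, add_comm, ← sub_sub, norm_sub_sq_real, hpc, hb2, real_inner_comm] at hbc
  push_cast at hbc
  linarith

end Neighbor

/-! ### Deep holes -/

section NullVector

open Matrix Filter Topology

variable {ι : Type*} [Fintype ι] {A : Matrix ι ι ℤ}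

theorem even_dotProduct_mulVec (hA : A.IsSymm) (hdiag : ∀ i, Even (A i i)) (x : ι → ℤ) :
    Even (x ⬝ᵥ A *ᵥ x) := by
  rw [even_iff_two_dvd, ← Nat.cast_two, ← ZMod.intCast_zmod_eq_zero_iff_dvd]
  simp only [dotProduct, mulVec, Finset.mul_sum, ← Finset.sum_product', Finset.univ_product_univ]
  push_cast
  refine Finset.sum_involution (fun p _ ↦ p.swap) (fun p _ ↦ ?_) (fun p _ hp hswap ↦ hp ?_)
    (fun p _ ↦ Finset.mem_univ _) fun p _ ↦ p.swap_swap
  · rw [Prod.fst_swap, Prod.snd_swap, hA.apply]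
    linear_combination CharTwo.add_self_eq_zero (x p.1 * (A p.2 p.1 * x p.2) : ZMod 2)
  · obtain ⟨i, j⟩ := p
    obtain rfl : j = i := congrArg Prod.fst hswap
    have hzero : ((A j j : ℤ) : ZMod 2) = 0 := by
      simpa using (ZMod.intCast_zmod_eq_zero_iff_dvd _ 2).2 (hdiag j).two_dvd
    simp [hzero]

theorem exists_int_dotProduct_mulVec_neg {x : ι → ℝ} (hx : 0 ≤ x)
    (hneg : x ⬝ᵥ A.map (↑) *ᵥ x < 0) : ∃ y : ι → ℤ, 0 ≤ y ∧ y ⬝ᵥ A *ᵥ y < 0 := by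
  have hlim : Tendsto (fun M : ℝ ↦ fun i ↦ (⌊x i * M⌋₊ : ℝ) / M) atTop (𝓝 x) :=
    tendsto_pi_nhds.2 fun i ↦ tendsto_nat_floor_mul_div_atTop (hx i)
  have hcont : Continuous fun y : ι → ℝ ↦ y ⬝ᵥ A.map (↑) *ᵥ y :=
    continuous_id.dotProduct (continuous_const.matrix_mulVec continuous_id)
  obtain ⟨M, hMneg, hM⟩ := (((hcont.tendsto x).comp hlim).eventually (gt_mem_nhds hneg)).and
    (eventually_gt_atTop 0) |>.exists
  refine ⟨fun i ↦ ⌊x i * M⌋₊, fun i ↦ Int.natCast_nonneg _, ?_⟩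
  have hscale : (fun i ↦ (⌊x i * M⌋₊ : ℝ) / M) = M⁻¹ • fun i ↦ (⌊x i * M⌋₊ : ℝ) := by
    ext i
    rw [Pi.smul_apply, smul_eq_mul, inv_mul_eq_div]
  rw [Function.comp_apply, hscale, mulVec_smul, smul_dotProduct, dotProduct_smul, smul_smul,
    smul_eq_mul] at hMneg
  replace hMneg := neg_of_mul_neg_right hMneg (by positivity)
  rw [← @Int.cast_lt ℝ]
  simpa [dotProduct, mulVec] using hMneg

theorem dotProduct_mulVec_sub_single [DecidableEq ι] (hA : A.IsSymm) (x : ι → ℤ) (i : ι) :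
    (x - Pi.single i 1) ⬝ᵥ A *ᵥ (x - Pi.single i 1) =
      x ⬝ᵥ A *ᵥ x - 2 * (A *ᵥ x) i + A i i := by
  have hcomm : x ⬝ᵥ A *ᵥ Pi.single i 1 = (A *ᵥ x) i := by
    rw [dotProduct_mulVec, ← mulVec_transpose, hA.eq, dotProduct_single_one]
  rw [mulVec_sub, sub_dotProduct, dotProduct_sub, dotProduct_sub, hcomm, single_one_dotProduct,
    single_one_dotProduct, mulVec_single_one, col_apply]
  ring

variable {x : ι → ℤ}

theorem two_mul_mulVec_le_of_minimal (hA : A.IsSymm) (hdiag : ∀ i, A i i = 2)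
    (hx : Minimal (fun y : ι → ℤ ↦ 0 < y ∧ y ⬝ᵥ A *ᵥ y ≤ 0) x) {i : ι} (hi : 0 < x i) :
    2 * (A *ᵥ x) i ≤ x ⬝ᵥ A *ᵥ x := by
  classical
  have hsub := dotProduct_mulVec_sub_single hA x i
  have hle : 0 ≤ x - Pi.single i 1 := fun j ↦ by
    rcases eq_or_ne j i with rfl | hj
    · simpa using Int.add_one_le_iff.2 hi
    · simpa [hj] using hx.prop.1.le j
  rcases hle.eq_or_lt with hzero | hpos
  · have hxi : x = Pi.single i 1 := (sub_eq_zero.1 hzero.symm)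
    have hval := hx.prop.2
    rw [hxi, single_one_dotProduct, mulVec_single_one, col_apply, hdiag] at hval
    norm_num at hval
  have hlt : ¬ (x - Pi.single i 1) ⬝ᵥ A *ᵥ (x - Pi.single i 1) ≤ 0 := fun hnonpos ↦ by
    simpa using hx.le_of_le ⟨hpos, hnonpos⟩ (by simp [Pi.single_nonneg]) i
  obtain ⟨n, hn⟩ := even_dotProduct_mulVec hA (fun i ↦ (hdiag i).symm ▸ even_two)
    (x - Pi.single i 1)
  rw [hdiag] at hsub
  omega

-- Summing `2(Ax)ᵢ ≤ q(x)` with weights `xᵢ` gives `2q(x) ≤ (∑ xᵢ)q(x)`, so only `∑ xᵢ ≤ 2` is left.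
theorem dotProduct_mulVec_eq_zero_of_minimal (hA : A.IsSymm) (hdiag : ∀ i, A i i = 2)
    (hge : ∀ i j, -2 ≤ A i j) (hx : Minimal (fun y : ι → ℤ ↦ 0 < y ∧ y ⬝ᵥ A *ᵥ y ≤ 0) x) :
    x ⬝ᵥ A *ᵥ x = 0 := by
  classical
  refine le_antisymm hx.prop.2 ?_
  obtain ⟨hx0, i, hi⟩ := Pi.lt_def.1 hx.prop.1
  have hsum : 2 * (x ⬝ᵥ A *ᵥ x) ≤ (∑ j, x j) * (x ⬝ᵥ A *ᵥ x) := by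
    nth_rewrite 1 [dotProduct]
    rw [Finset.mul_sum, Finset.sum_mul]
    refine Finset.sum_le_sum fun j _ ↦ ?_
    rcases (hx0 j).eq_or_lt with hj | hj
    · simp [← hj]
    · rw [mul_left_comm]
      exact mul_le_mul_of_nonneg_left (two_mul_mulVec_le_of_minimal hA hdiag hx hj) hj.le
  by_contra! hneg
  have hle : ∑ j, x j ≤ 2 := by nlinarith
  have hmulVec : 4 * x i - 2 * ∑ j, x j ≤ (A *ᵥ x) i := by
    have hterm : ∀ j, -2 * x j + (if j = i then 4 * x i else 0) ≤ A i j * x j := fun j ↦ by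
      split_ifs with hj
      · rw [hj, hdiag]
        linarith
      · simpa using mul_le_mul_of_nonneg_right (hge i j) (hx0 j)
    have hall := Finset.sum_le_sum fun j (_ : j ∈ Finset.univ) ↦ hterm j
    rw [Finset.sum_add_distrib, Finset.sum_ite_eq' Finset.univ i, if_pos (Finset.mem_univ i),
      ← Finset.mul_sum] at hall
    change _ ≤ ∑ j, A i j * x j
    linarith
  have hupper := two_mul_mulVec_le_of_minimal hA hdiag hx hi
  simp only [Pi.zero_apply] at hi
  linarith

/- A symmetric matrix with diagonal `2` and entries at least `-2` that is not positive semidefinite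
on the nonnegative orthant contains an affine Dynkin diagram; `x` is its null root. -/
theorem exists_pos_mulVec_eq_zero_of_dotProduct_neg (hA : A.IsSymm) (hdiag : ∀ i, A i i = 2)
    (hge : ∀ i j, -2 ≤ A i j) {y : ι → ℝ} (hy : 0 ≤ y) (hneg : y ⬝ᵥ A.map (↑) *ᵥ y < 0) :
    ∃ x : ι → ℤ, 0 < x ∧ ∀ i, x i ≠ 0 → (A *ᵥ x) i = 0 := by
  classical
  obtain ⟨z, hz, hzneg⟩ := exists_int_dotProduct_mulVec_neg hy hneg
  have hz0 : z ≠ 0 := by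
    rintro rfl
    simp at hzneg
  have hfin : {x | x ∈ Set.Icc 0 z ∧ 0 < x ∧ x ⬝ᵥ A *ᵥ x ≤ 0}.Finite :=
    (Set.finite_Icc 0 z).subset fun x hx ↦ hx.1
  obtain ⟨x, -, hx⟩ := hfin.exists_le_minimal
    ⟨⟨hz, le_rfl⟩, hz.lt_of_ne hz0.symm, hzneg.le⟩
  have hmin : Minimal (fun x : ι → ℤ ↦ 0 < x ∧ x ⬝ᵥ A *ᵥ x ≤ 0) x := ⟨hx.prop.2, fun y hy hyx ↦
    hx.le_of_le ⟨⟨hy.1.le, hyx.trans hx.prop.1.2⟩, hy⟩ hyx⟩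
  have hx0 : 0 ≤ x := hmin.prop.1.le
  have hzero := dotProduct_mulVec_eq_zero_of_minimal hA hdiag hge hmin
  have hterm : ∀ i ∈ Finset.univ, x i * (A *ᵥ x) i ≤ 0 := fun i _ ↦ by
    rcases (hx0 i).eq_or_lt with hi | hi
    · simp [← hi]
    · exact mul_nonpos_of_nonneg_of_nonpos hi.le
        (by linarith [two_mul_mulVec_le_of_minimal hA hdiag hmin hi])
  exact ⟨x, hmin.prop.1, fun i hi ↦ (mul_eq_zero.1 ((Finset.sum_eq_zero_iff_of_nonpos hterm).1
    hzero i (Finset.mem_univ i))).resolve_left hi⟩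

end NullVector

section DeepHole

open Module Filter Topology

variable {E : Type*} [NormedAddCommGroup E] {L : Submodule ℤ E} {p : E} {R : ℝ}

/-- `p` is a deepest hole of `L` of radius `R`: no point of `L` is closer to `p` than `R`, and every
point of `E` has a point of `L` at distance at most `R`. Its vertices are the points of `L` at
distance exactly `R` from `p`. -/
structure IsDeepHole (L : Submodule ℤ E) (p : E) (R : ℝ) : Prop where
  le_norm_sub : ∀ v ∈ L, R ≤ ‖p - v‖
  exists_norm_sub_le : ∀ q, ∃ v ∈ L, ‖q - v‖ ≤ R

theorem exists_isDeepHole [NormedSpace ℝ E] [FiniteDimensional ℝ E] [DiscreteTopology L]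
    [IsZLattice ℝ L] : ∃ p R, IsDeepHole L p R := by
  let b := (Free.chooseBasis ℤ L).ofZLatticeBasis ℝ L
  have hfloor : ∀ q, (ZSpan.floor b q : E) ∈ L := fun q ↦
    ((Free.chooseBasis ℤ L).ofZLatticeBasis_span ℝ).le (ZSpan.floor b q).2
  obtain ⟨p, -, hp⟩ := (ZSpan.fundamentalDomain_isBounded b).isCompact_closure.exists_isMaxOn
    ⟨_, subset_closure (ZSpan.fract_mem_fundamentalDomain b 0)⟩
    (Metric.continuous_infDist_pt (L : Set E)).continuousOn
  have hclosed : IsClosed (L : Set E) := AddSubgroup.isClosed_of_discrete (H := L.toAddSubgroup)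
  refine ⟨p, Metric.infDist p L, fun v hv ↦ ?_, fun q ↦ ?_⟩
  · rw [← dist_eq_norm]
    exact Metric.infDist_le_dist_of_mem hv
  · obtain ⟨v, hv, hdist⟩ := hclosed.exists_infDist_eq_dist ⟨0, L.zero_mem⟩ (ZSpan.fract b q)
    refine ⟨v + ZSpan.floor b q, L.add_mem hv (hfloor q), ?_⟩
    rw [add_comm, ← sub_sub, ← ZSpan.fract_apply, ← dist_eq_norm, ← hdist]
    exact hp (subset_closure (ZSpan.fract_mem_fundamentalDomain b q))

variable [InnerProductSpace ℝ E]

theorem EvenUnimodular.finite_norm_sub_le [FiniteDimensional ℝ E] (hL : EvenUnimodular L) (p : E)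
    (R : ℝ) : {v : E | v ∈ L ∧ ‖p - v‖ ≤ R}.Finite :=
  (hL.finite_norm_le (‖p‖ + R)).subset fun v hv ↦ ⟨hv.1, by
    linarith [norm_sub_norm_le v p, norm_sub_rev v p, hv.2]⟩

theorem eventually_forall_mem_lt_norm_add_smul_sub [FiniteDimensional ℝ E] (hL : EvenUnimodular L)
    (hmin : ∀ v ∈ L, R ≤ ‖p - v‖) {d : E}
    (hd : ∀ v ∈ L, ‖p - v‖ = R → 0 < inner ℝ (p - v) d) :
    ∀ᶠ ε : ℝ in 𝓝[>] 0, ∀ v ∈ L, R < ‖p + ε • d - v‖ := by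
  have hnear : ∀ᶠ ε : ℝ in 𝓝[>] 0, ∀ v ∈ {v | v ∈ L ∧ ‖p - v‖ ≤ R + 1}, R < ‖p + ε • d - v‖ := by
    refine (Filter.eventually_all_finite (hL.finite_norm_sub_le p (R + 1))).2 fun v hv ↦ ?_
    rcases (hmin v hv.1).eq_or_lt with hR | hR
    · filter_upwards [self_mem_nhdsWithin] with ε hε
      have hpos := mul_pos (Set.mem_Ioi.1 hε) (hd v hv.1 hR.symm)
      refine lt_of_pow_lt_pow_left₀ 2 (norm_nonneg _) ?_
      rw [add_sub_right_comm, norm_add_sq_real, real_inner_smul_right, hR]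
      nlinarith [sq_nonneg ‖ε • d‖]
    · have hcont : ContinuousAt (fun ε : ℝ ↦ ‖p + ε • d - v‖) 0 := by fun_prop
      exact (hcont.eventually (lt_mem_nhds (by simpa using hR))).filter_mono nhdsWithin_le_nhds
  have hsmall : ∀ᶠ ε : ℝ in 𝓝[>] 0, ‖ε • d‖ < 1 := by
    have hcont : ContinuousAt (fun ε : ℝ ↦ ‖ε • d‖) 0 := by fun_prop
    exact (hcont.eventually (gt_mem_nhds (by simp))).filter_mono nhdsWithin_le_nhds
  filter_upwards [hnear, hsmall] with ε hnear hε v hv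
  by_cases hle : ‖p - v‖ ≤ R + 1
  · exact hnear v ⟨hv, hle⟩
  · have htri := norm_sub_le (p + ε • d - v) (ε • d)
    rw [add_sub_right_comm, add_sub_cancel_right, ← add_sub_right_comm] at htri
    linarith

theorem IsDeepHole.mem_convexHull [FiniteDimensional ℝ E] (hp : IsDeepHole L p R)
    (hL : EvenUnimodular L) : p ∈ convexHull ℝ {v | v ∈ L ∧ ‖p - v‖ = R} := by
  have hfin : {v | v ∈ L ∧ ‖p - v‖ = R}.Finite :=
    (hL.finite_norm_sub_le p R).subset fun v hv ↦ ⟨hv.1, hv.2.le⟩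
  by_contra hhull
  obtain ⟨f, u, hfp, hfS⟩ := geometric_hahn_banach_point_closed (convex_convexHull ℝ _)
    (hfin.isCompact_convexHull (𝕜 := ℝ)).isClosed hhull
  obtain ⟨ε, hε⟩ := (eventually_forall_mem_lt_norm_add_smul_sub hL hp.le_norm_sub
    (d := -(InnerProductSpace.toDual ℝ E).symm f) fun v hv hR ↦ by
      rw [real_inner_comm, inner_neg_left, InnerProductSpace.toDual_symm_apply, map_sub]
      linarith [hfS v (subset_convexHull ℝ _ ⟨hv, hR⟩)]).exists
  obtain ⟨v, hv, hle⟩ := hp.exists_norm_sub_le _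
  exact (hε v hv).not_ge hle

theorem norm_sub_sq_le_norm_sub_add_sq {v w x : E} {r : ℝ} (hv : ‖p - v‖ ^ 2 = r)
    (hw : ‖p - w‖ ^ 2 = r) (hwx : r ≤ ‖p - (w + x)‖ ^ 2) (hvx : r ≤ ‖p - (v - x)‖ ^ 2) :
    ‖v - w‖ ^ 2 ≤ ‖v - w - (2 : ℤ) • x‖ ^ 2 := by
  rw [← sub_sub, norm_sub_sq_real, hw] at hwx
  rw [sub_sub_eq_add_sub, add_sub_right_comm, norm_add_sq_real, hv] at hvx
  have hinner : inner ℝ (v - w) x = inner ℝ (p - w) x - inner ℝ (p - v) x := by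
    rw [← inner_sub_left, sub_sub_sub_cancel_left]
  rw [← Int.cast_smul_eq_zsmul ℝ, norm_sub_sq_real (v - w), real_inner_smul_right, norm_smul,
    mul_pow, hinner]
  norm_num
  linarith

section NullCenter

variable {ι : Type*} {s : Finset ι} {f : ι → E} {w : ι → ℝ}

theorem sum_sum_mul_two_sub_norm_sub_sq (hw : ∑ i ∈ s, w i = 1) (hp : ∑ i ∈ s, w i • f i = p)
    {r : ℝ} (hr : ∀ i ∈ s, ‖p - f i‖ ^ 2 = r) :
    ∑ i ∈ s, w i * ∑ j ∈ s, (2 - ‖f i - f j‖ ^ 2 / 2) * w j = 2 - r := by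
  have hrel : ∑ i ∈ s, w i • (f i - p) = 0 := by
    simp only [smul_sub, Finset.sum_sub_distrib, ← Finset.sum_smul, hw, hp, one_smul, sub_self]
  have hr' : ∀ i ∈ s, ‖f i - p‖ ^ 2 = r := fun i hi ↦ by rw [norm_sub_rev, hr i hi]
  have hconst : ∑ j ∈ s, w j * ‖f j - p‖ ^ 2 = r := by
    rw [Finset.sum_congr rfl fun j hj ↦ by rw [hr' j hj], ← Finset.sum_mul, hw, one_mul]
  have hrow : ∀ i ∈ s, ∑ j ∈ s, (2 - ‖f i - f j‖ ^ 2 / 2) * w j = 2 - r := fun i hi ↦ by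
    have haxis := sum_mul_norm_sub_sq hrel (f i)
    rw [hw, hr' i hi, hconst] at haxis
    have hsplit : ∀ j, (2 - ‖f i - f j‖ ^ 2 / 2) * w j = 2 * w j - w j * ‖f i - f j‖ ^ 2 / 2 :=
      fun j ↦ by ring
    simp only [hsplit, Finset.sum_sub_distrib, ← Finset.mul_sum, ← Finset.sum_div, hw, haxis]
    ring
  rw [Finset.sum_congr rfl fun i hi ↦ by rw [hrow i hi], ← Finset.sum_mul, hw, one_mul]

theorem norm_sub_sq_eq_two_of_null {c : E} (hw : ∑ i ∈ s, w i ≠ 0)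
    (hrel : ∑ i ∈ s, w i • (f i - c) = 0)
    (hnull : ∀ i ∈ s, w i ≠ 0 → ∑ j ∈ s, (2 - ‖f i - f j‖ ^ 2 / 2) * w j = 0) {i : ι} (hi : i ∈ s)
    (hwi : w i ≠ 0) : ‖f i - c‖ ^ 2 = 2 := by
  set k := ∑ i ∈ s, w i with hk
  set q := ∑ j ∈ s, w j * ‖f j - c‖ ^ 2 with hq
  have hrow : ∀ i ∈ s, w i ≠ 0 → k * ‖f i - c‖ ^ 2 = 4 * k - q := fun i hi hwi ↦ by
    have hsplit : ∀ j, (2 - ‖f i - f j‖ ^ 2 / 2) * w j = 2 * w j - w j * ‖f i - f j‖ ^ 2 / 2 :=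
      fun j ↦ by ring
    have hzero := hnull i hi hwi
    simp only [hsplit, Finset.sum_sub_distrib, ← Finset.mul_sum, ← Finset.sum_div,
      sum_mul_norm_sub_sq hrel (f i)] at hzero
    linarith
  have hkq : k * q = k * (4 * k - q) := by
    rw [hq, Finset.mul_sum, hk, Finset.sum_mul, ← hk, ← hq]
    refine Finset.sum_congr rfl fun j hj ↦ ?_
    by_cases hwj : w j = 0
    · simp [hwj]
    · linear_combination w j * hrow j hj hwj
  have hq2 : q = 4 * k - q := mul_left_cancel₀ hw hkq
  exact mul_left_cancel₀ hw (by linarith [hrow i hi hwi])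

end NullCenter

theorem EvenUnimodular.exists_int_eq_two_sub_norm_sub_sq (hL : EvenUnimodular L) {v w : E}
    (hv : v ∈ L) (hw : w ∈ L) : ∃ n : ℤ, (n : ℝ) = 2 - ‖v - w‖ ^ 2 / 2 := by
  obtain ⟨n, hn⟩ := hL.even _ (L.sub_mem hv hw)
  exact ⟨2 - n, by push_cast; linarith⟩

open Matrix in
theorem EvenUnimodular.exists_null_weights (hL : EvenUnimodular L) {S : Finset E}
    (hS : ∀ v ∈ S, v ∈ L) (hdist : ∀ v ∈ S, ∀ w ∈ S, ‖v - w‖ ^ 2 ≤ 8) (hR : 2 < R)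
    (hpR : ∀ v ∈ S, ‖p - v‖ ^ 2 = R) (hp : p ∈ convexHull ℝ (S : Set E)) :
    ∃ x : S → ℤ, 0 < x ∧ ∀ v, x v ≠ 0 → ∑ w : S, (2 - ‖(v - w : E)‖ ^ 2 / 2) * x w = 0 := by
  choose A hA using fun v w : S ↦ hL.exists_int_eq_two_sub_norm_sub_sq (hS v v.2) (hS w w.2)
  obtain ⟨l, hl0, hl1, hlp⟩ := Finset.mem_convexHull'.1 hp
  have hneg : (fun v : S ↦ l v) ⬝ᵥ (Matrix.of A).map (↑) *ᵥ (fun v : S ↦ l v) < 0 := by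
    have hval := sum_sum_mul_two_sub_norm_sub_sq (s := S.attach) (f := fun v ↦ (v : E))
      (w := fun v ↦ l v) (by rwa [Finset.sum_attach S l])
      (by rwa [Finset.sum_attach S fun v ↦ l v • v]) fun v _ ↦ hpR v v.2
    simp only [dotProduct, mulVec, map_apply, of_apply, hA]
    exact hval.trans_lt (by linarith)
  obtain ⟨x, hx, hnull⟩ := exists_pos_mulVec_eq_zero_of_dotProduct_neg (A := Matrix.of A)
    (Matrix.ext fun v w ↦ Int.cast_injective (α := ℝ) (by simp [hA, norm_sub_rev]))
    (fun v ↦ Int.cast_injective (α := ℝ) (by simp [hA])) (fun v w ↦ by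
      rw [of_apply, ← @Int.cast_le ℝ, hA]
      push_cast
      linarith [hdist v v.2 w w.2]) (fun v ↦ hl0 v v.2) hneg
  refine ⟨x, hx, fun v hv ↦ ?_⟩
  simp only [← hA]
  exact_mod_cast hnull v hv

variable [FiniteDimensional ℝ E] [MeasurableSpace E] [BorelSpace E]

theorem IsDeepHole.norm_sub_sq_le_eight (hp : IsDeepHole L p R) (hL : EvenUnimodular L)
    (hd : finrank ℝ E = 24) (hr : ∀ v ∈ L, ‖v‖ ^ 2 ≠ 2) {v w : E} (hv : v ∈ L) (hw : w ∈ L)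
    (hvR : ‖p - v‖ = R) (hwR : ‖p - w‖ = R) : ‖v - w‖ ^ 2 ≤ 8 := by
  have hR : 0 ≤ R := hvR ▸ norm_nonneg _
  have hmin : ∀ u ∈ L, R ^ 2 ≤ ‖p - u‖ ^ 2 := fun u hu ↦
    pow_le_pow_left₀ hR (hp.le_norm_sub u hu) 2
  obtain ⟨u, -, hu8, x, hx, hux⟩ := hL.exists_congrModTwo_norm_sq_le hd hr (L.sub_mem hv hw)
  obtain rfl : u = v - w - (2 : ℤ) • x := by rw [← hux]; abel
  exact (norm_sub_sq_le_norm_sub_add_sq (by rw [hvR]) (by rw [hwR]) (hmin _ (L.add_mem hw hx))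
    (hmin _ (L.sub_mem hv hx))).trans hu8

theorem EvenUnimodular.sq_le_two_of_isDeepHole (hL : EvenUnimodular L) (hd : finrank ℝ E = 24)
    (hr : ∀ v ∈ L, ‖v‖ ^ 2 ≠ 2) (hp : IsDeepHole L p R) : R ^ 2 ≤ 2 := by
  classical
  by_contra! hR
  have hR0 : 0 ≤ R := by
    obtain ⟨v, -, hv⟩ := hp.exists_norm_sub_le p
    exact (norm_nonneg _).trans hv
  have hfin : {v | v ∈ L ∧ ‖p - v‖ = R}.Finite :=
    (hL.finite_norm_sub_le p R).subset fun v hv ↦ ⟨hv.1, hv.2.le⟩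
  lift {v | v ∈ L ∧ ‖p - v‖ = R} to Finset E using hfin with S hS
  have hSL : ∀ v ∈ S, v ∈ L ∧ ‖p - v‖ = R := fun v hv ↦ hS.le hv
  have hpR : ∀ v ∈ S, ‖p - v‖ ^ 2 = R ^ 2 := fun v hv ↦ by rw [(hSL v hv).2]
  obtain ⟨x, hx, hnull⟩ := hL.exists_null_weights (fun v hv ↦ (hSL v hv).1)
    (fun v hv w hw ↦ hp.norm_sub_sq_le_eight hL hd hr (hSL v hv).1 (hSL w hw).1 (hSL v hv).2
      (hSL w hw).2) hR hpR (hS ▸ hp.mem_convexHull hL)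
  obtain ⟨hx0, v₀, hv₀⟩ := Pi.lt_def.1 hx
  have hsum : ∑ v, (x v : ℝ) ≠ 0 := by
    exact_mod_cast (Finset.sum_pos' (fun v _ ↦ hx0 v) ⟨v₀, Finset.mem_univ v₀, hv₀⟩).ne'
  let c : E := (∑ v, (x v : ℝ))⁻¹ • ∑ v, (x v : ℝ) • (v : E)
  have hrel : ∑ v, (x v : ℝ) • ((v : E) - c) = 0 := by
    rw [Finset.sum_congr rfl fun v _ ↦ smul_sub _ _ _, Finset.sum_sub_distrib, ← Finset.sum_smul,
      smul_inv_smul₀ hsum, sub_self]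
  have hc : ∀ v : S, x v ≠ 0 → ‖(v : E) - c‖ ^ 2 = 2 := fun v hv ↦
    norm_sub_sq_eq_two_of_null hsum hrel (fun v _ hv ↦ hnull v (by exact_mod_cast hv))
      (Finset.mem_univ v) (by exact_mod_cast hv)
  have hpc : p = c := hL.eq_center_of_equidistant hd hr (s := {v | x v ≠ 0})
    (f := fun v : S ↦ (v : E)) (m := x) (fun v _ ↦ (hSL v v.2).1) (by simpa using hc)
    (by simpa [Finset.sum_filter_ne_zero] using by exact_mod_cast hsum)
    ((Finset.sum_filter_of_ne fun v _ ↦ mt fun h ↦ by simp [h]).trans hrel)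
    (fun v _ ↦ hpR v v.2) fun v hv ↦ pow_le_pow_left₀ hR0 (hp.le_norm_sub v hv) 2
  have hv₀c := hc v₀ hv₀.ne'
  rw [← hpc, norm_sub_rev, hpR v₀ v₀.2] at hv₀c
  exact hR.ne' hv₀c

theorem EvenUnimodular.exists_norm_sub_sq_le_two (hL : EvenUnimodular L) (hd : finrank ℝ E = 24)
    (hr : ∀ v ∈ L, ‖v‖ ^ 2 ≠ 2) (q : E) : ∃ v ∈ L, ‖q - v‖ ^ 2 ≤ 2 := by
  have := hL.discreteTopology
  have := hL.isZLattice
  obtain ⟨p, R, hp⟩ := exists_isDeepHole (L := L)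
  obtain ⟨v, hv, hvR⟩ := hp.exists_norm_sub_le q
  exact ⟨v, hv, (pow_le_pow_left₀ (norm_nonneg _) hvR 2).trans
    (hL.sq_le_two_of_isDeepHole hd hr hp)⟩

end DeepHole

/-! ### Eisenstein integers -/

section Eisenstein

theorem omega_re : ω.re = -(1 / 2) := by
  rw [ω, show 2 * (Real.pi : ℂ) * Complex.I / 3 = ((Real.pi - Real.pi / 3 : ℝ) : ℂ) * Complex.I by
    push_cast; ring, Complex.exp_ofReal_mul_I_re, Real.cos_pi_sub, Real.cos_pi_div_three]

theorem omega_im : ω.im = √3 / 2 := by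
  rw [ω, show 2 * (Real.pi : ℂ) * Complex.I / 3 = ((Real.pi - Real.pi / 3 : ℝ) : ℂ) * Complex.I by
    push_cast; ring, Complex.exp_ofReal_mul_I_im, Real.sin_pi_sub, Real.sin_pi_div_three]

theorem omega_sq : ω ^ 2 = -1 - ω := by
  have h3 : √3 * √3 = 3 := Real.mul_self_sqrt (by norm_num)
  refine Complex.ext ?_ ?_ <;> simp only [pow_two, Complex.mul_re, Complex.mul_im, Complex.sub_re,
    Complex.sub_im, Complex.neg_re, Complex.neg_im, Complex.one_re, Complex.one_im, omega_re,
    omega_im]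
  · linear_combination (-1 / 4) * h3
  · ring

theorem conj_omega : conj ω = -1 - ω := by
  refine Complex.ext ?_ ?_ <;> norm_num [omega_re, omega_im]

theorem omega_mul_conj : ω * conj ω = 1 := by
  linear_combination ω * conj_omega - omega_sq

theorem theta_eq : θ = 1 + 2 * ω := by
  rw [θ, conj_omega]
  ring

theorem theta_re : θ.re = 0 := by
  norm_num [theta_eq, omega_re]

theorem theta_im : θ.im = √3 := by
  simp only [theta_eq, Complex.add_im, Complex.one_im, Complex.mul_im, Complex.re_ofNat,
    Complex.im_ofNat, omega_im]
  ring

theorem theta_sq : θ ^ 2 = -3 := by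
  rw [theta_eq]
  linear_combination 4 * omega_sq

theorem theta_ne_zero : θ ≠ 0 := fun h ↦ by simpa [h] using theta_sq

theorem conj_theta : conj θ = -θ := by
  refine Complex.ext ?_ ?_ <;> simp [theta_re]

theorem normSq_theta : Complex.normSq θ = 3 := by
  simp [Complex.normSq_apply, theta_re, theta_im]

/-- The ring `ℰ = ℤ[ω]` of Eisenstein integers, as a subring of `ℂ`. -/
def eisenstein : Subring ℂ where
  carrier := {z | EisP z}
  zero_mem' := ⟨0, 0, by simp⟩
  one_mem' := ⟨1, 0, by simp⟩
  add_mem' := by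
    rintro _ _ ⟨a, b, rfl⟩ ⟨c, d, rfl⟩
    exact ⟨a + c, b + d, by push_cast; ring⟩
  neg_mem' := by
    rintro _ ⟨a, b, rfl⟩
    exact ⟨-a, -b, by push_cast; ring⟩
  mul_mem' := by
    rintro _ _ ⟨a, b, rfl⟩ ⟨c, d, rfl⟩
    exact ⟨a * c - b * d, a * d + b * c - b * d, by
      push_cast; linear_combination (b : ℂ) * d * omega_sq⟩

theorem omega_mem_eisenstein : ω ∈ eisenstein := ⟨0, 1, by simp⟩

theorem theta_mem_eisenstein : θ ∈ eisenstein := ⟨1, 2, by simp [theta_eq]⟩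

theorem conj_mem_eisenstein {z : ℂ} (hz : z ∈ eisenstein) : conj z ∈ eisenstein := by
  obtain ⟨a, b, rfl⟩ := hz
  exact ⟨a - b, -b, by simp [conj_omega]; ring⟩

theorem intCast_add_mul_omega_inj {a b c d : ℤ} :
    (a : ℂ) + b * ω = c + d * ω ↔ a = c ∧ b = d := by
  refine ⟨fun h ↦ ?_, by rintro ⟨rfl, rfl⟩; rfl⟩
  have hbd : b = d := by simpa [omega_im] using congrArg Complex.im h
  subst hbd
  exact ⟨by exact_mod_cast add_right_cancel h, rfl⟩

theorem exists_intCast_eq_of_ofReal_mem_eisenstein {x : ℝ} (hx : (x : ℂ) ∈ eisenstein) :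
    ∃ n : ℤ, x = n := by
  obtain ⟨a, b, h⟩ := hx
  obtain rfl : b = 0 := by simpa [omega_im] using congrArg Complex.im h
  exact ⟨a, by simpa using congrArg Complex.re h⟩

theorem normSq_intCast_add_mul_omega (a b : ℤ) :
    Complex.normSq (a + b * ω) = (a ^ 2 - a * b + b ^ 2 : ℤ) := by
  have h3 : √3 * √3 = 3 := Real.mul_self_sqrt (by norm_num)
  simp only [Complex.normSq_apply, Complex.add_re, Complex.add_im, Complex.mul_re, Complex.mul_im,
    Complex.intCast_re, Complex.intCast_im, omega_re, omega_im]
  push_cast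
  linear_combination (b : ℝ) ^ 2 / 4 * h3

theorem exists_normSq_eq_natCast {z : ℂ} (hz : z ∈ eisenstein) :
    ∃ n : ℕ, Complex.normSq z = n := by
  obtain ⟨a, b, rfl⟩ := hz
  lift a ^ 2 - a * b + b ^ 2 to ℕ using by nlinarith [sq_nonneg (a - b), sq_nonneg (a + b)]
    with n hn
  exact ⟨n, by rw [normSq_intCast_add_mul_omega, ← hn, Int.cast_natCast]⟩

theorem sq_sub_mul_add_sq_eq_one {a b : ℤ} (h : a ^ 2 - a * b + b ^ 2 = 1) :
    a = 1 ∧ b = 0 ∨ a = -1 ∧ b = 0 ∨ a = 0 ∧ b = 1 ∨ a = 0 ∧ b = -1 ∨ a = -1 ∧ b = -1 ∨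
      a = 1 ∧ b = 1 := by
  have ha : |a| ≤ 1 := abs_le.2 (by constructor <;> nlinarith [sq_nonneg (a - 2 * b)])
  have hb : |b| ≤ 1 := abs_le.2 (by constructor <;> nlinarith [sq_nonneg (2 * a - b)])
  rw [Int.abs_le_one_iff] at ha hb
  grind

theorem eisUnit_iff {z : ℂ} : EisUnit z ↔ z ∈ eisenstein ∧ Complex.normSq z = 1 := by
  constructor
  · have hω : Complex.normSq ω = 1 := by simpa using normSq_intCast_add_mul_omega 0 1
    have hω2 := pow_mem omega_mem_eisenstein 2
    rintro (rfl | rfl | rfl | rfl | rfl | rfl)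
    exacts [⟨one_mem _, by simp⟩, ⟨neg_mem (one_mem _), by simp⟩, ⟨omega_mem_eisenstein, hω⟩,
      ⟨neg_mem omega_mem_eisenstein, by simp [hω]⟩, ⟨hω2, by simp [hω]⟩,
      ⟨neg_mem hω2, by simp [hω]⟩]
  · rintro ⟨⟨a, b, rfl⟩, h⟩
    rw [normSq_intCast_add_mul_omega] at h
    rw [EisUnit, omega_sq]
    rcases sq_sub_mul_add_sq_eq_one (by exact_mod_cast h) with ⟨rfl, rfl⟩ | ⟨rfl, rfl⟩ |
      ⟨rfl, rfl⟩ | ⟨rfl, rfl⟩ | ⟨rfl, rfl⟩ | ⟨rfl, rfl⟩ <;>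
    simp [sub_eq_add_neg, add_comm ω]

theorem EisUnit.conj_mul_self {u : ℂ} (hu : EisUnit u) : conj u * u = 1 := by
  rw [← Complex.normSq_eq_conj_mul_self, (eisUnit_iff.1 hu).2, Complex.ofReal_one]

/-- The prime ideal `θℰ` of `ℰ`, as an `ℰ`-submodule of `ℂ`; its residue field is `𝔽₃`. -/
def thetaIdeal : Submodule eisenstein ℂ := Submodule.span eisenstein {θ}

theorem mem_thetaIdeal {z : ℂ} : z ∈ thetaIdeal ↔ ∃ w ∈ eisenstein, z = θ * w := by
  simp only [thetaIdeal, Submodule.mem_span_singleton, Subtype.exists, Subring.smul_def,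
    smul_eq_mul, mul_comm _ θ, exists_prop, eq_comm]

variable {x y z : ℂ}

theorem mul_mem_thetaIdeal (hx : x ∈ eisenstein) (hy : y ∈ thetaIdeal) : x * y ∈ thetaIdeal :=
  thetaIdeal.smul_mem ⟨x, hx⟩ hy

theorem theta_mul_mem_thetaIdeal (hx : x ∈ eisenstein) : θ * x ∈ thetaIdeal :=
  mem_thetaIdeal.2 ⟨x, hx, rfl⟩

theorem three_mul_mem_thetaIdeal (hx : x ∈ eisenstein) : 3 * x ∈ thetaIdeal :=
  mem_thetaIdeal.2 ⟨-(θ * x), neg_mem (mul_mem theta_mem_eisenstein hx), by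
    linear_combination x * theta_sq⟩

theorem mem_eisenstein_of_mem_thetaIdeal (hx : x ∈ thetaIdeal) : x ∈ eisenstein := by
  obtain ⟨w, hw, rfl⟩ := mem_thetaIdeal.1 hx
  exact mul_mem theta_mem_eisenstein hw

theorem conj_mem_thetaIdeal (hx : x ∈ thetaIdeal) : conj x ∈ thetaIdeal := by
  obtain ⟨w, hw, rfl⟩ := mem_thetaIdeal.1 hx
  exact mem_thetaIdeal.2 ⟨-conj w, neg_mem (conj_mem_eisenstein hw), by
    rw [map_mul, conj_theta]; ring⟩

theorem intCast_add_mul_omega_mem_thetaIdeal {a b : ℤ} :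
    (a : ℂ) + b * ω ∈ thetaIdeal ↔ 3 ∣ a + b := by
  have hmul (c d : ℤ) : θ * (c + d * ω) = (c - 2 * d : ℤ) + (2 * c - d : ℤ) * ω := by
    rw [theta_eq]
    push_cast
    linear_combination 2 * (d : ℂ) * omega_sq
  constructor
  · intro h
    obtain ⟨_, ⟨c, d, rfl⟩, h⟩ := mem_thetaIdeal.1 h
    obtain ⟨rfl, rfl⟩ := intCast_add_mul_omega_inj.1 (h.trans (hmul c d))
    exact ⟨c - d, by ring⟩
  · rintro ⟨k, hk⟩
    refine mem_thetaIdeal.2 ⟨_, ⟨b - k, b - 2 * k, rfl⟩, ?_⟩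
    rw [hmul, intCast_add_mul_omega_inj]
    constructor <;> linarith

theorem intCast_mem_thetaIdeal {n : ℤ} : (n : ℂ) ∈ thetaIdeal ↔ 3 ∣ n := by
  simpa using intCast_add_mul_omega_mem_thetaIdeal (a := n) (b := 0)

theorem one_sub_omega_mem_thetaIdeal : 1 - ω ∈ thetaIdeal := by
  simpa [sub_eq_add_neg] using intCast_add_mul_omega_mem_thetaIdeal (a := 1) (b := -1)

theorem intCast_add_mul_omega_sub_mem_thetaIdeal {a b n : ℤ} :
    (a : ℂ) + b * ω - n ∈ thetaIdeal ↔ 3 ∣ a + b - n := by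
  rw [show (a : ℂ) + b * ω - n = (a - n : ℤ) + b * ω by push_cast; ring,
    intCast_add_mul_omega_mem_thetaIdeal, show a - n + b = a + b - n by ring]

theorem exists_sub_intCast_mem_thetaIdeal (hz : z ∈ eisenstein) :
    ∃ n : ℤ, z - n ∈ thetaIdeal := by
  obtain ⟨a, b, rfl⟩ := hz
  exact ⟨a + b, intCast_add_mul_omega_sub_mem_thetaIdeal.2 (by simp)⟩

theorem exists_eq_three_mul_of_ofReal_mem_thetaIdeal {x : ℝ} (hx : (x : ℂ) ∈ thetaIdeal) :
    ∃ k : ℤ, x = 3 * k := by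
  obtain ⟨n, rfl⟩ :=
    exists_intCast_eq_of_ofReal_mem_eisenstein (mem_eisenstein_of_mem_thetaIdeal hx)
  obtain ⟨k, rfl⟩ := intCast_mem_thetaIdeal.1 (by simpa using hx)
  exact ⟨k, by push_cast; rfl⟩

theorem sq_emod_three_le_normSq {n : ℤ} (h : z - n ∈ thetaIdeal) :
    ((n ^ 2 % 3 : ℤ) : ℝ) ≤ Complex.normSq z := by
  obtain ⟨a, b, rfl⟩ : z ∈ eisenstein := by
    simpa using add_mem (mem_eisenstein_of_mem_thetaIdeal h) (intCast_mem eisenstein n)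
  obtain ⟨k, hk⟩ := intCast_add_mul_omega_sub_mem_thetaIdeal.1 h
  have hmod : a ^ 2 - a * b + b ^ 2 = n ^ 2 + 3 * ((n + a + b) * k - a * b) := by
    linear_combination (n + a + b) * hk
  have hnonneg : 0 ≤ a ^ 2 - a * b + b ^ 2 := by nlinarith [sq_nonneg (a - b), sq_nonneg (a + b)]
  rw [normSq_intCast_add_mul_omega, Int.cast_le]
  omega

/-- The dual of `ℰ` under the trace form `(x, y) ↦ 2 Re (xy) / 3` is `θℰ`. -/
theorem mem_thetaIdeal_of_trace {k l : ℤ} (hk : 2 / 3 * z.re = k)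
    (hl : 2 / 3 * (ω * z).re = l) : z ∈ thetaIdeal := by
  have h3 : √3 * √3 = 3 := Real.mul_self_sqrt (by norm_num)
  have h3' : √3 ≠ 0 := by positivity
  rw [Complex.mul_re, omega_re, omega_im] at hl
  refine mem_thetaIdeal.2 ⟨_, ⟨-(l + k), -k, rfl⟩, ?_⟩
  rw [theta_eq]
  refine Complex.ext ?_ (mul_left_cancel₀ h3' ?_) <;>
  simp only [Complex.mul_re, Complex.mul_im, Complex.add_re, Complex.add_im, Complex.one_re,
    Complex.one_im, Complex.re_ofNat, Complex.im_ofNat, Complex.intCast_re, Complex.intCast_im,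
    omega_re, omega_im] <;> push_cast
  · linear_combination 3 / 2 * hk - (k : ℝ) / 2 * h3
  · linear_combination (-3) * hl - 3 / 2 * hk + (l + k / 2) * h3

end Eisenstein

/-! ### The ternary Golay code and the complex Leech lattice -/

section Golay

open Matrix

/-- The encoding map of the ternary Golay code, lifted to integral vectors: the codewords are the
reductions modulo `3` of the vectors `golayEncode s`. -/
def golayEncode : (Fin 6 → ℤ) →ₗ[ℤ] (Fin 12 → ℤ) := (of golay)ᵀ.mulVecLin

theorem golayEncode_apply (s : Fin 6 → ℤ) (i : Fin 12) :
    golayEncode s i = ∑ j, golay j i * s j := rfl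

theorem golayEncode_single_one (j : Fin 6) : golayEncode (Pi.single j 1) = golay j := by
  simp [golayEncode]

theorem three_dvd_golayEncode_dotProduct (s t : Fin 6 → ℤ) :
    3 ∣ golayEncode s ⬝ᵥ golayEncode t := by
  have hgram : ∀ j k, (3 : ℤ) ∣ (of golay * (of golay)ᵀ) j k := by decide
  rw [golayEncode, mulVecLin_apply, mulVecLin_apply, mulVec_transpose, ← dotProduct_mulVec,
    mulVec_mulVec]
  have hmulVec (j) : 3 ∣ ((of golay * (of golay)ᵀ) *ᵥ t) j := by
    rw [mulVec, dotProduct]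
    exact Finset.dvd_sum fun k _ ↦ (hgram j k).mul_right _
  exact Finset.dvd_sum fun j _ ↦ (hmulVec j).mul_left _

theorem three_dvd_golayEncode_one_sub_one : ∀ i, (3 : ℤ) ∣ golayEncode 1 i - 1 := by
  simp only [golayEncode_apply]
  decide

theorem three_dvd_sum_golayEncode (s : Fin 6 → ℤ) : 3 ∣ ∑ i, golayEncode s i := by
  have hsum : ∀ j, (3 : ℤ) ∣ ∑ i, golay j i := by decide
  simp only [golayEncode_apply]
  rw [Finset.sum_comm]
  exact Finset.dvd_sum fun j _ ↦ by rw [← Finset.sum_mul]; exact (hsum j).mul_right _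

theorem exists_sum_golayEncode_eq (s : Fin 6 → ℤ) :
    ∃ k : ℤ, ∑ i, (golayEncode s i : ℂ) = 3 * k := by
  obtain ⟨k, hk⟩ := three_dvd_sum_golayEncode s
  exact ⟨k, by exact_mod_cast congrArg (Int.cast (R := ℂ)) hk⟩

/-- The Golay code is self-dual; the first six coordinates of a codeword are its message. -/
theorem exists_three_dvd_sub_golayEncode {c : Fin 12 → ℤ} (hc : ∀ j, 3 ∣ c ⬝ᵥ golay j) :
    ∃ s : Fin 6 → ℤ, ∀ i, 3 ∣ c i - golayEncode s i := by
  refine ⟨![c 0, c 1, c 2, c 3, c 4, c 5], ?_⟩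
  simp only [Fin.forall_fin_succ, dotProduct, golay, golayEncode_apply, Fin.sum_univ_succ] at hc ⊢
  simp at hc ⊢
  omega

theorem six_le_card_golay_ne_zero : ∀ s : Fin 6 → ZMod 3, s ≠ 0 →
    6 ≤ Finset.card {i | ∑ j, (golay j i : ZMod 3) * s j ≠ 0} := by
  decide +kernel

theorem sq_emod_three_eq_one {n : ℤ} (hn : ¬ 3 ∣ n) : n ^ 2 % 3 = 1 := by
  have hmod : n % 3 = 1 ∨ n % 3 = 2 := by omega
  rcases hmod with h | h <;> simp [pow_two, Int.mul_emod, h]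

theorem three_dvd_or_six_le_sum_sq_emod (s : Fin 6 → ℤ) :
    (∀ i, 3 ∣ golayEncode s i) ∨ 6 ≤ ∑ i, golayEncode s i ^ 2 % 3 := by
  by_cases hs : (fun j ↦ (s j : ZMod 3)) = 0
  · refine .inl fun i ↦ ?_
    rw [golayEncode_apply]
    refine Finset.dvd_sum fun j _ ↦ Dvd.dvd.mul_left ?_ _
    exact (ZMod.intCast_zmod_eq_zero_iff_dvd _ 3).1 (congrFun hs j)
  · right
    calc (6 : ℤ)
      _ ≤ Finset.card {i | ∑ j, (golay j i : ZMod 3) * s j ≠ 0} := by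
        exact_mod_cast six_le_card_golay_ne_zero _ hs
      _ = ∑ i, if ∑ j, (golay j i : ZMod 3) * s j ≠ 0 then 1 else 0 := by
        rw [Finset.card_filter]
        push_cast
        rfl
      _ ≤ ∑ i, golayEncode s i ^ 2 % 3 := Finset.sum_le_sum fun i _ ↦ by
        split_ifs with hi
        · refine (sq_emod_three_eq_one fun hdvd ↦ hi ?_).ge
          simpa [golayEncode_apply] using (ZMod.intCast_zmod_eq_zero_iff_dvd _ 3).2 hdvd
        · exact Int.emod_nonneg _ (by norm_num)

end Golay

section Leech

open Matrix

theorem exists_eq_three_mul_add (m : ℤ) :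
    ∃ r k : ℤ, (r = 0 ∨ r = 1 ∨ r = -1) ∧ m = r + 3 * k :=
  ⟨(m + 1) % 3 - 1, (m + 1) / 3, by omega, by omega⟩

theorem mem_leech {u : Fin 12 → ℂ} : u ∈ Leech ↔ ∃ (m : ℤ) (s : Fin 6 → ℤ) (z : Fin 12 → ℂ),
    (∀ i, z i ∈ eisenstein) ∧ (∀ i, u i = m + θ * golayEncode s i + 3 * z i) ∧
      ∑ i, z i - m ∈ thetaIdeal := by
  constructor
  · rintro ⟨m, s, za, zb, -, hu, a, b, hsum⟩
    exact ⟨m, s, fun i ↦ za i + zb i * ω, fun i ↦ ⟨_, _, rfl⟩, hu,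
      mem_thetaIdeal.2 ⟨_, ⟨a, b, rfl⟩, hsum⟩⟩
  · rintro ⟨m, s, z, hz, hu, hsum⟩
    obtain ⟨r, k, hr, rfl⟩ := exists_eq_three_mul_add m
    choose za zb hz using fun i ↦ add_mem (hz i) (intCast_mem eisenstein k)
    have hsum' : ∑ i, (z i + k) - r ∈ thetaIdeal := by
      convert add_mem hsum (three_mul_mem_thetaIdeal (intCast_mem eisenstein (5 * k))) using 1
      simp only [Finset.sum_add_distrib, Finset.sum_const, Finset.card_univ, Fintype.card_fin,
        nsmul_eq_mul]
      push_cast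
      ring
    obtain ⟨_, ⟨a, b, rfl⟩, hab⟩ := mem_thetaIdeal.1 hsum'
    refine ⟨r, s, za, zb, hr, fun i ↦ ?_, a, b, by simpa only [hz] using hab⟩
    rw [hu, ← hz, golayEncode_apply]
    push_cast
    ring

theorem mul_mem_leech {a : ℂ} {u : Fin 12 → ℂ} (ha : a ∈ eisenstein) (hu : u ∈ Leech) :
    a • u ∈ Leech := by
  obtain ⟨m, s, z, hz, hu, hsum⟩ := mem_leech.1 hu
  obtain ⟨n, hn⟩ := exists_sub_intCast_mem_thetaIdeal ha
  obtain ⟨w, hw, haw⟩ := mem_thetaIdeal.1 hn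
  obtain ⟨k, hk⟩ := exists_sub_intCast_mem_thetaIdeal hw
  obtain ⟨y, hy, hwy⟩ := mem_thetaIdeal.1 hk
  choose t ht using three_dvd_golayEncode_one_sub_one
  refine mem_leech.2 ⟨n * m, n • s + (k * m) • 1,
    fun i ↦ a * z i - w * golayEncode s i - (y * m + θ * (k * m * t i)), fun i ↦ ?_, fun i ↦ ?_, ?_⟩
  · have hcoeff : y * m + θ * (k * m * t i) ∈ eisenstein :=
      add_mem (mul_mem hy (intCast_mem _ m)) (mul_mem theta_mem_eisenstein
        (mul_mem (mul_mem (intCast_mem _ k) (intCast_mem _ m)) (intCast_mem _ (t i))))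
    exact sub_mem (sub_mem (mul_mem ha (hz i)) (mul_mem hw (intCast_mem _ _))) hcoeff
  · have hti : (golayEncode 1 i : ℂ) = 1 + 3 * t i := by
      exact_mod_cast sub_eq_iff_eq_add'.1 (ht i)
    simp only [Pi.smul_apply, smul_eq_mul, hu, map_add, map_smul, Pi.add_apply]
    push_cast
    rw [hti]
    linear_combination (m + θ * golayEncode s i) * haw + θ * m * hwy +
      (w * golayEncode s i + m * y) * theta_sq
  · have hcode := intCast_mem_thetaIdeal.2 (three_dvd_sum_golayEncode s)
    convert sub_mem (add_mem (mul_mem_thetaIdeal ha hsum)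
      (mul_mem_thetaIdeal (intCast_mem eisenstein m) hn)) (add_mem (mul_mem_thetaIdeal hw hcode)
      (add_mem (three_mul_mem_thetaIdeal (mul_mem hy (intCast_mem eisenstein (4 * m))))
      (theta_mul_mem_thetaIdeal (intCast_mem eisenstein (k * m * ∑ i, t i))))) using 1
    simp only [Finset.sum_sub_distrib, Finset.sum_add_distrib, ← Finset.mul_sum, Finset.sum_const,
      Finset.card_univ, Fintype.card_fin, nsmul_eq_mul]
    push_cast
    ring

/-- The complex Leech lattice as a module over the Eisenstein integers. -/
def leechLattice : Submodule eisenstein (Fin 12 → ℂ) where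
  carrier := Leech
  zero_mem' := mem_leech.2 ⟨0, 0, 0, fun _ ↦ zero_mem _, by simp, by simp⟩
  add_mem' := by
    intro u v hu hv
    obtain ⟨m, s, z, hz, hu, hsum⟩ := mem_leech.1 hu
    obtain ⟨n, t, w, hw, hv, hsum'⟩ := mem_leech.1 hv
    refine mem_leech.2 ⟨m + n, s + t, z + w, fun i ↦ add_mem (hz i) (hw i), fun i ↦ ?_, ?_⟩
    · simp only [Pi.add_apply, hu, hv, map_add]
      push_cast
      ring
    · convert add_mem hsum hsum' using 1
      simp only [Pi.add_apply, Finset.sum_add_distrib]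
      push_cast
      ring
  smul_mem' := by
    rintro ⟨a, ha⟩ u hu
    exact mul_mem_leech ha hu

variable {u v x : Fin 12 → ℂ}

theorem star_dotProduct_div_three_mem_thetaIdeal (hu : u ∈ Leech) (hv : v ∈ Leech) :
    1 / 3 * (star u ⬝ᵥ v) ∈ thetaIdeal := by
  obtain ⟨m, s, z, hz, hu, hzm⟩ := mem_leech.1 hu
  obtain ⟨n, t, w, hw, hv, hwn⟩ := mem_leech.1 hv
  obtain ⟨k, hk⟩ := exists_sum_golayEncode_eq s
  obtain ⟨l, hl⟩ := exists_sum_golayEncode_eq t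
  obtain ⟨g, hg⟩ := three_dvd_golayEncode_dotProduct s t
  replace hg : ∑ i, (golayEncode s i : ℂ) * golayEncode t i = 3 * g := by
    exact_mod_cast congrArg (Int.cast (R := ℂ)) hg
  have hexpand (i) : star (u i) * v i = m * n + n * -θ * golayEncode s i + m * θ * golayEncode t i +
      3 * (golayEncode s i * golayEncode t i) + 3 * m * w i + 3 * n * star (z i) +
      3 * θ * (star (z i) * golayEncode t i - golayEncode s i * w i) + 9 * (star (z i) * w i) := by
    have hstar : star θ = -θ := conj_theta
    simp only [hu, hv, star_add, star_mul', star_intCast, star_ofNat, hstar]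
    linear_combination (-(golayEncode s i : ℂ) * golayEncode t i) * theta_sq
  have hθ : m * l - n * k + ∑ i, (star (z i) * golayEncode t i - golayEncode s i * w i) ∈
      eisenstein := by
    refine add_mem (by exact_mod_cast intCast_mem eisenstein (m * l - n * k)) (sum_mem fun i _ ↦ ?_)
    exact sub_mem (mul_mem (conj_mem_eisenstein (hz i)) (intCast_mem _ _))
      (mul_mem (intCast_mem _ _) (hw i))
  have h3 : 2 * m * n + g + ∑ i, star (z i) * w i ∈ eisenstein :=
    add_mem (by exact_mod_cast intCast_mem eisenstein (2 * m * n + g))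
      (sum_mem fun i _ ↦ mul_mem (conj_mem_eisenstein (hz i)) (hw i))
  convert add_mem (add_mem (three_mul_mem_thetaIdeal h3) (theta_mul_mem_thetaIdeal hθ))
    (add_mem (mul_mem_thetaIdeal (intCast_mem eisenstein m) hwn)
      (mul_mem_thetaIdeal (intCast_mem eisenstein n) (conj_mem_thetaIdeal hzm))) using 1
  simp only [dotProduct, Pi.star_apply, hexpand, Finset.sum_add_distrib, ← Finset.mul_sum,
    Finset.sum_const, Finset.card_univ, Fintype.card_fin, nsmul_eq_mul, hk, hl, hg, map_sub,
    map_sum, map_intCast, starRingEnd_apply]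
  push_cast
  ring

theorem sum_normSq_ne_one {ι : Type*} [Fintype ι] {w : ι → ℂ} (hw : ∀ i, w i ∈ eisenstein)
    (hsum : ∑ i, w i ∈ thetaIdeal) : ∑ i, Complex.normSq (w i) ≠ 1 := by
  classical
  intro h
  choose n hn using fun i ↦ exists_normSq_eq_natCast (hw i)
  have hone : Finsupp.sum (Finsupp.equivFunOnFinite.symm n) (fun _ k ↦ k) = 1 := by
    rw [Finsupp.sum_fintype _ _ fun _ ↦ rfl]
    simp only [hn] at h
    exact_mod_cast h
  obtain ⟨i, hi⟩ := (Finsupp.sum_eq_one_iff _).1 hone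
  have hn' (j) : n j = if i = j then 1 else 0 := by
    simpa [Finsupp.single_apply] using DFunLike.congr_fun hi j
  have hj (j) (hj : j ≠ i) : w j = 0 := by simpa [hn', hj.symm] using hn j
  rw [Fintype.sum_eq_single i hj] at hsum
  obtain ⟨y, hy, hwi⟩ := mem_thetaIdeal.1 hsum
  obtain ⟨k, hk⟩ := exists_normSq_eq_natCast hy
  have h3 : (1 : ℝ) = 3 * k := by
    rw [← hk, ← normSq_theta, ← map_mul, ← hwi, hn i, hn' i, if_pos rfl, Nat.cast_one]
  have : 1 = 3 * k := by exact_mod_cast h3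
  omega

theorem star_dotProduct_self {ι : Type*} [Fintype ι] (w : ι → ℂ) :
    star w ⬝ᵥ w = (∑ i, Complex.normSq (w i) : ℝ) := by
  simp only [dotProduct, Pi.star_apply, ← starRingEnd_apply, ← Complex.normSq_eq_conj_mul_self,
    Complex.ofReal_sum]

theorem exists_sum_normSq_eq_nine_mul (hu : u ∈ Leech) :
    ∃ k : ℤ, ∑ i, Complex.normSq (u i) = 9 * k := by
  have hmem := star_dotProduct_div_three_mem_thetaIdeal hu hu
  have hnorm : 1 / 3 * (star u ⬝ᵥ u) = ((1 / 3 * ∑ i, Complex.normSq (u i) : ℝ) : ℂ) := by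
    rw [star_dotProduct_self]
    push_cast
    rfl
  obtain ⟨k, hk⟩ := exists_eq_three_mul_of_ofReal_mem_thetaIdeal (hnorm ▸ hmem)
  exact ⟨k, by linarith⟩

theorem card_le_sum_normSq {ι : Type*} [Fintype ι] {w : ι → ℂ} {m : ℤ} (hm : ¬ 3 ∣ m)
    (hw : ∀ i, w i - m ∈ thetaIdeal) : (Fintype.card ι : ℝ) ≤ ∑ i, Complex.normSq (w i) := by
  have hone (i) : (1 : ℝ) ≤ Complex.normSq (w i) := by
    simpa [sq_emod_three_eq_one hm] using sq_emod_three_le_normSq (hw i)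
  simpa using Finset.card_nsmul_le_sum Finset.univ _ 1 fun i _ ↦ hone i

theorem three_mul_sum_sq_emod_le_sum_normSq {ι : Type*} [Fintype ι] (c : ι → ℤ) {w : ι → ℂ}
    (hw : ∀ i, w i ∈ eisenstein) :
    3 * ((∑ i, c i ^ 2 % 3 : ℤ) : ℝ) ≤ ∑ i, Complex.normSq (θ * c i + 3 * w i) := by
  rw [Int.cast_sum, Finset.mul_sum]
  refine Finset.sum_le_sum fun i _ ↦ ?_
  have hfactor : θ * c i + 3 * w i = θ * (c i - θ * w i) := by
    linear_combination w i * theta_sq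
  rw [hfactor, map_mul, normSq_theta]
  refine mul_le_mul_of_nonneg_left (sq_emod_three_le_normSq ?_) (by norm_num)
  rw [sub_sub_cancel_left]
  exact neg_mem (theta_mul_mem_thetaIdeal (hw i))

theorem sum_normSq_ne_nine (hu : u ∈ Leech) : ∑ i, Complex.normSq (u i) ≠ 9 := by
  intro hnine
  obtain ⟨m, s, z, hz, hu, hsum⟩ := mem_leech.1 hu
  by_cases hm : 3 ∣ m
  swap
  · have hcard := card_le_sum_normSq (w := u) hm fun i ↦ by
      convert add_mem (theta_mul_mem_thetaIdeal (intCast_mem eisenstein (golayEncode s i)))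
        (three_mul_mem_thetaIdeal (hz i)) using 1
      rw [hu]
      ring
    norm_num [hnine] at hcard
  obtain ⟨m, rfl⟩ := hm
  push_cast at hu hsum
  rcases three_dvd_or_six_le_sum_sq_emod s with hs | hs
  · choose t ht using hs
    have hw (i) : m + θ * t i + z i ∈ eisenstein :=
      add_mem (add_mem (intCast_mem _ m) (mul_mem theta_mem_eisenstein (intCast_mem _ _))) (hz i)
    refine sum_normSq_ne_one hw ?_ ?_
    · convert add_mem (add_mem hsum (theta_mul_mem_thetaIdeal (intCast_mem eisenstein (∑ i, t i))))
        (three_mul_mem_thetaIdeal (intCast_mem eisenstein (5 * m))) using 1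
      simp only [Finset.sum_add_distrib, ← Finset.mul_sum, Finset.sum_const, Finset.card_univ,
        Fintype.card_fin, nsmul_eq_mul]
      push_cast
      ring
    · have hui (i) : Complex.normSq (u i) = 9 * Complex.normSq (m + θ * t i + z i) := by
        rw [hu, ht, show (9 : ℝ) = Complex.normSq 3 by norm_num [Complex.normSq_ofNat], ← map_mul]
        push_cast
        ring_nf
      simp only [hui, ← Finset.mul_sum] at hnine
      linarith
  · have hle := three_mul_sum_sq_emod_le_sum_normSq (golayEncode s)
      fun i ↦ add_mem (intCast_mem eisenstein m) (hz i)
    have hui (i) : θ * golayEncode s i + 3 * (m + z i) = u i := by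
      rw [hu]
      ring
    simp only [hui, hnine] at hle
    have hs' : (6 : ℝ) ≤ (∑ i, golayEncode s i ^ 2 % 3 : ℤ) := by exact_mod_cast hs
    linarith

theorem three_smul_mem_leech {z : Fin 12 → ℂ} (hz : ∀ i, z i ∈ eisenstein)
    (hsum : ∑ i, z i ∈ thetaIdeal) : (3 : ℂ) • z ∈ Leech :=
  mem_leech.2 ⟨0, 0, z, hz, by simp, by simpa using hsum⟩

theorem theta_smul_golay_mem_leech (j : Fin 6) : (fun i ↦ θ * golay j i : Fin 12 → ℂ) ∈ Leech :=
  mem_leech.2 ⟨0, Pi.single j 1, 0, fun _ ↦ zero_mem _, by simp [golayEncode_single_one], by simp⟩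

theorem pi_single_mem_eisenstein {ι : Type*} [DecidableEq ι] {a : ℂ} (ha : a ∈ eisenstein)
    (i j : ι) : Pi.single (M := fun _ ↦ ℂ) i a j ∈ eisenstein := by
  rw [Pi.single_apply]
  split_ifs
  exacts [ha, zero_mem _]

theorem one_add_single_mem_leech : (1 + Pi.single 0 3 : Fin 12 → ℂ) ∈ Leech :=
  mem_leech.2 ⟨1, 0, Pi.single 0 1, pi_single_mem_eisenstein (one_mem _) 0, by
    simp [Pi.single_apply], by simp⟩

/-- The vectors of `ℂ¹²` whose products with the complex Leech lattice lie in `θℰ`; the Leech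
lattice `Λ` is determined by `Λ = θΛ'`, that is, by being equal to this set. -/
def leechThetaDual : Set (Fin 12 → ℂ) :=
  {x | ∀ u ∈ Leech, 1 / 3 * (star x ⬝ᵥ u) ∈ thetaIdeal}

theorem mem_eisenstein_of_mem_leechThetaDual (hx : x ∈ leechThetaDual) (i : Fin 12) :
    x i ∈ eisenstein := by
  have hmem := hx _ (three_smul_mem_leech (pi_single_mem_eisenstein theta_mem_eisenstein i) (by
    simpa using theta_mul_mem_thetaIdeal (one_mem _)))
  obtain ⟨w, hw, h⟩ := mem_thetaIdeal.1 hmem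
  rw [dotProduct_smul, dotProduct_single, smul_eq_mul, Pi.star_apply] at h
  obtain rfl : star (x i) = w := mul_left_cancel₀ theta_ne_zero (by linear_combination h)
  simpa using conj_mem_eisenstein hw

theorem sub_mem_thetaIdeal_of_mem_leechThetaDual (hx : x ∈ leechThetaDual) (i j : Fin 12) :
    x i - x j ∈ thetaIdeal := by
  have hmem := hx _ (three_smul_mem_leech (z := Pi.single i 1 - Pi.single j 1)
    (fun k ↦ sub_mem (pi_single_mem_eisenstein (one_mem _) i k)
      (pi_single_mem_eisenstein (one_mem _) j k)) (by simp))
  rw [dotProduct_smul, dotProduct_sub, dotProduct_single, dotProduct_single] at hmem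
  simpa using conj_mem_thetaIdeal hmem

theorem sum_conj_mul_golay_mem_thetaIdeal (hx : x ∈ leechThetaDual) {m : ℤ} {y : Fin 12 → ℂ}
    (hxy : ∀ i, x i = m + θ * y i) (j : Fin 6) : ∑ i, conj (y i) * golay j i ∈ thetaIdeal := by
  have hmem := hx _ (theta_smul_golay_mem_leech j)
  obtain ⟨k, hk⟩ := exists_sum_golayEncode_eq (Pi.single j 1)
  rw [golayEncode_single_one] at hk
  have hterm (i) : star (x i) * (θ * golay j i) =
      m * θ * golay j i + 3 * (conj (y i) * golay j i) := by
    rw [← starRingEnd_apply, hxy, map_add, map_mul, map_intCast, conj_theta]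
    linear_combination (-conj (y i) * golay j i) * theta_sq
  simp only [dotProduct, Pi.star_apply, hterm, Finset.sum_add_distrib, ← Finset.mul_sum, hk] at hmem
  convert sub_mem hmem (theta_mul_mem_thetaIdeal (mul_mem (intCast_mem _ m) (intCast_mem _ k)))
    using 1
  ring

theorem exists_eq_add_golayEncode_of_mem_leechThetaDual (hx : x ∈ leechThetaDual) :
    ∃ (m : ℤ) (s : Fin 6 → ℤ) (z : Fin 12 → ℂ),
      (∀ i, z i ∈ eisenstein) ∧ ∀ i, x i = m + θ * golayEncode s i + 3 * z i := by
  obtain ⟨m, hm⟩ := exists_sub_intCast_mem_thetaIdeal (mem_eisenstein_of_mem_leechThetaDual hx 0)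
  have hm' (i) : x i - m ∈ thetaIdeal := by
    simpa using add_mem (sub_mem_thetaIdeal_of_mem_leechThetaDual hx i 0) hm
  choose y hy hxy using fun i ↦ mem_thetaIdeal.1 (hm' i)
  choose c hc using fun i ↦ exists_sub_intCast_mem_thetaIdeal (hy i)
  have hcg (j) : 3 ∣ c ⬝ᵥ golay j := by
    have hcong : ∑ i, golay j i * conj (y i - c i) ∈ thetaIdeal :=
      sum_mem fun i _ ↦ mul_mem_thetaIdeal (intCast_mem _ _) (conj_mem_thetaIdeal (hc i))
    refine intCast_mem_thetaIdeal.1 ?_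
    convert sub_mem (sum_conj_mul_golay_mem_thetaIdeal hx
      (fun i ↦ sub_eq_iff_eq_add'.1 (hxy i)) j) hcong using 1
    simp only [dotProduct, Int.cast_sum, Int.cast_mul, ← Finset.sum_sub_distrib, map_sub,
      map_intCast]
    exact Finset.sum_congr rfl fun i _ ↦ by ring
  obtain ⟨s, hs⟩ := exists_three_dvd_sub_golayEncode hcg
  have hy' (i) : y i - golayEncode s i ∈ thetaIdeal := by
    simpa using add_mem (hc i) (intCast_mem_thetaIdeal.2 (hs i))
  choose w hw hyw using fun i ↦ mem_thetaIdeal.1 (hy' i)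
  refine ⟨m, s, -w, fun i ↦ neg_mem (hw i), fun i ↦ ?_⟩
  simp only [Pi.neg_apply]
  linear_combination hxy i + θ * hyw i + w i * theta_sq

theorem mem_leech_of_mem_leechThetaDual (hx : x ∈ leechThetaDual) : x ∈ Leech := by
  obtain ⟨m, s, z, hz, hxz⟩ := exists_eq_add_golayEncode_of_mem_leechThetaDual hx
  refine mem_leech.2 ⟨m, s, z, hz, hxz, ?_⟩
  obtain ⟨k, hk⟩ := exists_sum_golayEncode_eq s
  have htest : 1 / 3 * ∑ i, x i + x 0 ∈ thetaIdeal := by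
    have hmem := conj_mem_thetaIdeal (hx _ one_add_single_mem_leech)
    rw [dotProduct_add, dotProduct_one, dotProduct_single] at hmem
    convert hmem using 1
    simp only [map_mul, map_add, map_sum, map_div₀, map_one, Pi.star_apply, starRingEnd_apply,
      star_star, star_ofNat]
    ring
  have hx0 : θ * (k + golayEncode s 0) + 3 * (2 * m + z 0) ∈ thetaIdeal :=
    add_mem (theta_mul_mem_thetaIdeal (add_mem (intCast_mem _ _) (intCast_mem _ _)))
      (three_mul_mem_thetaIdeal (add_mem (mul_mem (ofNat_mem _ 2) (intCast_mem _ m)) (hz 0)))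
  convert sub_mem htest hx0 using 1
  simp only [hxz, Finset.sum_add_distrib, ← Finset.mul_sum, Finset.sum_const, Finset.card_univ,
    Fintype.card_fin, nsmul_eq_mul, hk]
  push_cast
  ring

end Leech

/-! ### Covering radius of the complex Leech lattice -/

section RealLeech

open Matrix

/-- The rescaling `u ↦ (√2 / 3) u` turning the complex Leech lattice into an even unimodular
lattice. -/
def leechScaling : (Fin 12 → ℂ) →ₗ[ℂ] EuclideanSpace ℂ (Fin 12) :=
  ((√2 / 3 : ℝ) : ℂ) • (WithLp.linearEquiv 2 ℂ (Fin 12 → ℂ)).symm.toLinearMap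

theorem leechScaling_apply (u : Fin 12 → ℂ) (i : Fin 12) :
    leechScaling u i = ((√2 / 3 : ℝ) : ℂ) * u i := rfl

theorem exists_leechScaling_eq (x : EuclideanSpace ℂ (Fin 12)) : ∃ u, leechScaling u = x := by
  have hscale : ((√2 / 3 : ℝ) : ℂ) ≠ 0 := by
    rw [Complex.ofReal_ne_zero]
    positivity
  refine ⟨((√2 / 3 : ℝ) : ℂ)⁻¹ • x.ofLp, PiLp.ext fun i ↦ ?_⟩
  rw [leechScaling_apply, Pi.smul_apply, smul_eq_mul, mul_inv_cancel_left₀ hscale]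

theorem inner_leechScaling (u v : Fin 12 → ℂ) :
    inner ℝ (leechScaling u) (leechScaling v) = 2 / 9 * (star u ⬝ᵥ v).re := by
  have h2 : √2 * √2 = 2 := Real.mul_self_sqrt (by norm_num)
  rw [PiLp.inner_apply, dotProduct, Complex.re_sum, Finset.mul_sum]
  refine Finset.sum_congr rfl fun i _ ↦ ?_
  simp only [Complex.inner, leechScaling_apply, map_mul, Complex.conj_ofReal, Pi.star_apply,
    ← starRingEnd_apply]
  rw [mul_mul_mul_comm, ← Complex.ofReal_mul, Complex.re_ofReal_mul, mul_comm (v i)]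
  linear_combination ((conj (u i) * v i).re / 9) * h2

theorem norm_sq_leechScaling (u : Fin 12 → ℂ) :
    ‖leechScaling u‖ ^ 2 = 2 / 9 * ∑ i, Complex.normSq (u i) := by
  rw [← real_inner_self_eq_norm_sq, inner_leechScaling, star_dotProduct_self, Complex.ofReal_re]

/-- The Leech lattice as a real lattice of rank `24`. -/
def realLeech : Submodule ℤ (EuclideanSpace ℂ (Fin 12)) :=
  (leechLattice.restrictScalars ℤ).map (leechScaling.restrictScalars ℤ)

theorem mem_realLeech {x : EuclideanSpace ℂ (Fin 12)} :
    x ∈ realLeech ↔ ∃ u ∈ Leech, leechScaling u = x := Iff.rfl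

theorem evenUnimodular_realLeech : EvenUnimodular realLeech where
  even := by
    intro x hx
    obtain ⟨u, hu, rfl⟩ := mem_realLeech.1 hx
    obtain ⟨k, hk⟩ := exists_sum_normSq_eq_nine_mul hu
    exact ⟨k, by rw [norm_sq_leechScaling, hk]; ring⟩
  dual := by
    intro x hx
    obtain ⟨y, rfl⟩ := exists_leechScaling_eq x
    have htrace (v) (hv : v ∈ Leech) : ∃ k : ℤ, 2 / 3 * (1 / 3 * (star y ⬝ᵥ v)).re = k := by
      obtain ⟨k, hk⟩ := hx _ (mem_realLeech.2 ⟨v, hv, rfl⟩)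
      refine ⟨k, ?_⟩
      rw [← hk, inner_leechScaling, show (1 / 3 : ℂ) = (1 / 3 : ℝ) by norm_num,
        Complex.re_ofReal_mul]
      ring
    refine mem_realLeech.2 ⟨y, mem_leech_of_mem_leechThetaDual fun u hu ↦ ?_, rfl⟩
    obtain ⟨k, hk⟩ := htrace u hu
    obtain ⟨l, hl⟩ := htrace _ (mul_mem_leech omega_mem_eisenstein hu)
    rw [dotProduct_smul, smul_eq_mul, mul_left_comm] at hl
    exact mem_thetaIdeal_of_trace hk hl

theorem exists_mem_leech_sum_normSq_sub_le (c : Fin 12 → ℂ) :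
    ∃ u ∈ Leech, ∑ i, Complex.normSq (c i - u i) ≤ 9 := by
  have hrank : Module.finrank ℝ (EuclideanSpace ℂ (Fin 12)) = 24 := by
    simp [finrank_real_of_complex]
  have hroots (v) (hv : v ∈ realLeech) : ‖v‖ ^ 2 ≠ 2 := by
    obtain ⟨u, hu, rfl⟩ := mem_realLeech.1 hv
    rw [norm_sq_leechScaling]
    exact fun h ↦ sum_normSq_ne_nine hu (by linarith)
  obtain ⟨_, hv, hle⟩ :=
    evenUnimodular_realLeech.exists_norm_sub_sq_le_two hrank hroots (leechScaling c)
  obtain ⟨u, hu, rfl⟩ := mem_realLeech.1 hv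
  rw [← map_sub, norm_sq_leechScaling] at hle
  exact ⟨u, hu, by simpa only [Pi.sub_apply] using (by linarith :
    ∑ i, Complex.normSq ((c - u) i) ≤ 9)⟩

end RealLeech

/-! ### The Hermitian form and reflections of `L` -/

section Lattice

open Matrix

variable {u v w r : V} {μ : ℂ}

/-- The projection of `Λ ⊕ H` to the twelve Leech coordinates. -/
def leechPart : V →ₗ[ℂ] (Fin 12 → ℂ) := LinearMap.funLeft ℂ ℂ (Fin.castLE (by norm_num))

theorem herm_eq (u v : V) : herm u v = -(1 / 3 * (star (leechPart u) ⬝ᵥ leechPart v)) -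
    θ * (conj (u 12) * v 13) + θ * (conj (u 13) * v 12) := by
  rw [show herm u v = -(1 / 3) * (star (leechPart u) ⬝ᵥ leechPart v) +
    conj (u 12) * conj θ * v 13 + conj (u 13) * θ * v 12 from rfl, conj_theta]
  ring

theorem herm_add_right (u v w : V) : herm u (v + w) = herm u v + herm u w := by
  simp only [herm_eq, map_add, dotProduct_add, Pi.add_apply]
  ring

theorem herm_smul_right (a : ℂ) (u v : V) : herm u (a • v) = a * herm u v := by
  simp only [herm_eq, map_smul, dotProduct_smul, Pi.smul_apply, smul_eq_mul]
  ring

theorem herm_sub_right (u v w : V) : herm u (v - w) = herm u v - herm u w := by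
  rw [eq_sub_iff_add_eq, ← herm_add_right, sub_add_cancel]

theorem conj_herm (u v : V) : conj (herm u v) = herm v u := by
  have hdot : conj (star (leechPart u) ⬝ᵥ leechPart v) = star (leechPart v) ⬝ᵥ leechPart u :=
    (star_dotProduct _ _).symm
  simp only [herm_eq, map_add, map_sub, map_neg, map_mul, map_div₀, map_one, map_ofNat, hdot,
    conj_theta, Complex.conj_conj]
  ring

theorem herm_smul_left (a : ℂ) (u v : V) : herm (a • u) v = conj a * herm u v := by
  rw [← conj_herm, herm_smul_right, map_mul, conj_herm]

theorem herm_sub_left (u v w : V) : herm (u - v) w = herm u w - herm v w := by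
  rw [← conj_herm, herm_sub_right, map_sub, conj_herm, conj_herm]

theorem ofReal_re_herm_self (v : V) : ((herm v v).re : ℂ) = herm v v :=
  Complex.conj_eq_iff_re.1 (conj_herm v v)

/-- The lattice `L = Λ ⊕ H` as a module over the Eisenstein integers. -/
def latticeL : Submodule eisenstein V where
  carrier := Lset
  zero_mem' := ⟨leechLattice.zero_mem, eisenstein.zero_mem, eisenstein.zero_mem⟩
  add_mem' := fun hu hv ↦ ⟨leechLattice.add_mem hu.1 hv.1, eisenstein.add_mem hu.2.1 hv.2.1,
    eisenstein.add_mem hu.2.2 hv.2.2⟩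
  smul_mem' := fun a _ hv ↦ ⟨leechLattice.smul_mem a hv.1, eisenstein.mul_mem a.2 hv.2.1,
    eisenstein.mul_mem a.2 hv.2.2⟩

theorem smul_mem_Lset {a : ℂ} (ha : a ∈ eisenstein) (hv : v ∈ Lset) : a • v ∈ Lset :=
  latticeL.smul_mem ⟨a, ha⟩ hv

theorem herm_mem_thetaIdeal (hu : u ∈ Lset) (hv : v ∈ Lset) : herm u v ∈ thetaIdeal := by
  rw [herm_eq]
  exact add_mem (sub_mem (neg_mem (star_dotProduct_div_three_mem_thetaIdeal hu.1 hv.1))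
    (theta_mul_mem_thetaIdeal (mul_mem (conj_mem_eisenstein hu.2.1) hv.2.2)))
    (theta_mul_mem_thetaIdeal (mul_mem (conj_mem_eisenstein hu.2.2) hv.2.1))

theorem exists_herm_self_eq_three_mul (hv : v ∈ Lset) : ∃ k : ℤ, herm v v = 3 * k := by
  have hmem := herm_mem_thetaIdeal hv hv
  rw [← ofReal_re_herm_self] at hmem
  obtain ⟨k, hk⟩ := exists_eq_three_mul_of_ofReal_mem_thetaIdeal hmem
  exact ⟨k, by rw [← ofReal_re_herm_self, hk]; push_cast; rfl⟩

theorem isRoot_iff : IsRoot r ↔ r ∈ Lset ∧ herm r r = -3 := by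
  refine ⟨fun h ↦ ⟨h.1, h.2.1⟩, fun ⟨hr, hnorm⟩ ↦ ⟨hr, hnorm, fun a ha y hy hry ↦ ?_⟩⟩
  obtain ⟨n, hn⟩ := exists_normSq_eq_natCast ha
  obtain ⟨k, hk⟩ := exists_herm_self_eq_three_mul hy
  rw [hry, herm_smul_right, herm_smul_left, hk, ← mul_assoc, mul_comm a,
    ← Complex.normSq_eq_conj_mul_self, hn] at hnorm
  have hnk : (n : ℤ) * (3 * k) = -3 := by exact_mod_cast hnorm
  have hdvd : (n : ℤ) ∣ 1 := ⟨-k, by linarith⟩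
  have hone : n = 1 := by exact_mod_cast Int.eq_one_of_dvd_one (by positivity) hdvd
  exact eisUnit_iff.2 ⟨ha, by rw [hn, hone, Nat.cast_one]⟩

theorem IsRoot.smul {a : ℂ} (ha : EisUnit a) (hv : IsRoot v) : IsRoot (a • v) := by
  refine isRoot_iff.2 ⟨smul_mem_Lset (eisUnit_iff.1 ha).1 hv.1, ?_⟩
  rw [herm_smul_left, herm_smul_right, hv.2.1, ← mul_assoc, ha.conj_mul_self, one_mul]

theorem one_sub_mem_thetaIdeal (hμ : μ ∈ ({ω, conj ω} : Set ℂ)) : 1 - μ ∈ thetaIdeal := by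
  rcases hμ with rfl | rfl
  · exact one_sub_omega_mem_thetaIdeal
  · simpa using conj_mem_thetaIdeal one_sub_omega_mem_thetaIdeal

theorem mul_conj_eq_one (hμ : μ ∈ ({ω, conj ω} : Set ℂ)) : μ * conj μ = 1 := by
  rcases hμ with rfl | rfl
  · exact omega_mul_conj
  · rw [Complex.conj_conj, mul_comm, omega_mul_conj]

theorem reflMap_mem_Lset (hμ : 1 - μ ∈ thetaIdeal) (hr : IsRoot r) (hv : v ∈ Lset) :
    reflMap μ r v ∈ Lset := by
  obtain ⟨e, he, hμe⟩ := mem_thetaIdeal.1 hμ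
  obtain ⟨w, hw, hrv⟩ := mem_thetaIdeal.1 (herm_mem_thetaIdeal hr.1 hv)
  have hcoeff : (1 - μ) * herm r v / herm r r = e * w := by
    rw [hμe, hrv, hr.2.1]
    linear_combination (-(e * w) / 3) * theta_sq
  rw [reflMap, hcoeff]
  exact latticeL.sub_mem hv (smul_mem_Lset (mul_mem he hw) hr.1)

theorem herm_reflMap_reflMap (hμ : μ * conj μ = 1) (r u v : V) :
    herm (reflMap μ r u) (reflMap μ r v) = herm u v := by
  have hinv : (herm r r)⁻¹ * herm r r * (herm r r)⁻¹ = (herm r r)⁻¹ := by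
    simpa using mul_inv_mul_cancel (herm r r)⁻¹
  simp only [reflMap, herm_sub_left, herm_sub_right, herm_smul_left, herm_smul_right, map_mul,
    map_sub, map_one, map_inv₀, conj_herm, div_eq_mul_inv]
  linear_combination (herm u r * herm r v * (herm r r)⁻¹) * hμ +
    ((1 - conj μ) * (1 - μ) * herm u r * herm r v) * hinv

theorem reflMap_conj_reflMap (hμ : μ * conj μ = 1) (r v : V) :
    reflMap (conj μ) r (reflMap μ r v) = v := by
  have hinv : (herm r r)⁻¹ * herm r r * (herm r r)⁻¹ = (herm r r)⁻¹ := by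
    simpa using mul_inv_mul_cancel (herm r r)⁻¹
  ext i
  simp only [reflMap, herm_sub_right, herm_smul_right, Pi.sub_apply, Pi.smul_apply, smul_eq_mul,
    div_eq_mul_inv]
  linear_combination (herm r v * r i * (herm r r)⁻¹) * hμ +
    ((1 - conj μ) * (1 - μ) * herm r v * r i) * hinv

theorem IsRoot.reflMap (hμ : μ ∈ ({ω, conj ω} : Set ℂ)) (hr : IsRoot r) (hv : IsRoot v) :
    IsRoot (reflMap μ r v) :=
  isRoot_iff.2 ⟨reflMap_mem_Lset (one_sub_mem_thetaIdeal hμ) hr hv.1, by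
    rw [herm_reflMap_reflMap (mul_conj_eq_one hμ), hv.2.1]⟩

/-- The `μ`-reflection in `r` as a linear map. -/
def reflLinearMap (μ : ℂ) (r : V) : V →ₗ[ℂ] V where
  toFun := reflMap μ r
  map_add' u v := by
    simp only [reflMap, herm_add_right, mul_add, add_div, add_smul]
    abel
  map_smul' c v := by
    simp only [reflMap, herm_smul_right, smul_sub, smul_smul, RingHom.id_apply]
    congr 2
    ring

theorem reflMap_smul (μ : ℂ) (r : V) (c : ℂ) (v : V) :
    reflMap μ r (c • v) = c • reflMap μ r v := (reflLinearMap μ r).map_smul c v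

theorem reflMap_reflMap_reflMap (hμ : μ * conj μ = 1) (ν : ℂ) (a b v : V) :
    reflMap ν (reflMap μ a b) (reflMap μ a v) = reflMap μ a (reflMap ν b v) := by
  have hsub := (reflLinearMap μ a).map_sub v (((1 - ν) * herm b v / herm b b) • b)
  rw [map_smul] at hsub
  rw [Bimonster.reflMap, herm_reflMap_reflMap hμ, herm_reflMap_reflMap hμ]
  exact hsub.symm

theorem reflMap_smul_left {a : ℂ} (ha : conj a * a = 1) (μ : ℂ) (r v : V) :
    reflMap μ (a • r) v = reflMap μ r v := by
  rw [reflMap, reflMap, herm_smul_left, herm_smul_left, herm_smul_right, ← mul_assoc (conj a) a,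
    ha, one_mul, smul_smul]
  congr 2
  linear_combination ((1 - μ) * herm r v / herm r r) * ha

theorem isRoot_of_rad {Φ : Set V} (hΦ : ∀ r ∈ Φ, IsRoot r) (h : Rad Φ v) : IsRoot v := by
  induction h with
  | base h => exact hΦ _ h
  | refl _ _ ha hb => exact ha.reflMap (.inl rfl) hb
  | inv _ _ ha hb => exact ha.reflMap (.inr rfl) hb
  | unit hu _ h => exact h.smul hu

/-- The `ω`-reflection in `r` as a linear automorphism, with inverse the `ω̄`-reflection. -/
def reflEquiv (r : V) : V ≃ₗ[ℂ] V where
  __ := reflLinearMap ω r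
  invFun := reflMap (conj ω) r
  left_inv := reflMap_conj_reflMap omega_mul_conj r
  right_inv v := by
    have hinv := reflMap_conj_reflMap (mul_conj_eq_one (μ := conj ω) (.inr rfl)) r v
    rwa [Complex.conj_conj] at hinv

theorem reflEquiv_mem_AutL (hr : IsRoot r) : reflEquiv r ∈ AutL := by
  have hmem {μ : ℂ} (hμ : μ ∈ ({ω, conj ω} : Set ℂ)) (v) (hv : v ∈ Lset) :
      reflMap μ r v ∈ Lset := reflMap_mem_Lset (one_sub_mem_thetaIdeal hμ) hr hv
  refine ⟨fun v ↦ ⟨hmem (.inl rfl) v, fun hv ↦ ?_⟩, herm_reflMap_reflMap omega_mul_conj r⟩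
  exact reflMap_conj_reflMap omega_mul_conj r v ▸ hmem (.inr rfl) _ hv

theorem reflEquiv_mem_closure {Φ : Set V} (hΦ : ∀ r ∈ Φ, IsRoot r) (h : Rad Φ r) :
    reflEquiv r ∈ Subgroup.closure (ReflAutos Φ) := by
  induction h with
  | base h => exact Subgroup.subset_closure ⟨reflEquiv_mem_AutL (hΦ _ h), _, h, fun _ ↦ rfl⟩
  | @refl a b _ _ iha ihb =>
    have hconj : reflEquiv (reflMap ω a b) = reflEquiv a * reflEquiv b * (reflEquiv a)⁻¹ :=
      eq_mul_inv_iff_mul_eq.2 (LinearEquiv.ext (reflMap_reflMap_reflMap omega_mul_conj ω a b))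
    exact hconj ▸ mul_mem (mul_mem iha ihb) (inv_mem iha)
  | @inv a b _ _ iha ihb =>
    have hconj : reflEquiv (reflMap (conj ω) a b) = (reflEquiv a)⁻¹ * reflEquiv b * reflEquiv a :=
      mul_inv_eq_iff_eq_mul.1 (LinearEquiv.ext
        (reflMap_reflMap_reflMap (mul_conj_eq_one (.inr rfl)) ω a b))
    exact hconj ▸ mul_mem (mul_mem (inv_mem iha) ihb) iha
  | @unit a r ha _ ih =>
    have hunit : reflEquiv (a • r) = reflEquiv r :=
      LinearEquiv.ext (reflMap_smul_left ha.conj_mul_self ω r)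
    exact hunit ▸ ih

theorem closure_reflAutos_eq_RL {Φ : Set V} (hΦ : ∀ v, Rad Φ v ↔ IsRoot v) :
    Subgroup.closure (ReflAutos Φ) = RL := by
  have hroot (r) (hr : r ∈ Φ) : IsRoot r := (hΦ r).1 (.base hr)
  apply le_antisymm
  · refine Subgroup.closure_mono ?_
    rintro g ⟨hg, r, hr, hgr⟩
    exact ⟨hg, r, hroot r hr, hgr⟩
  · refine (Subgroup.closure_le _).2 ?_
    rintro g ⟨-, r, hr, hgr⟩
    obtain rfl : g = reflEquiv r := LinearEquiv.ext hgr
    exact reflEquiv_mem_closure hroot ((hΦ r).2 hr)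

end Lattice

/-! ### Height reduction -/

section Height

open Matrix

variable {u v w : V} {lam : Fin 12 → ℂ}

theorem leechPart_glue (lam : Fin 12 → ℂ) (x y : ℂ) : leechPart (glue lam x y) = lam := by
  ext i
  simp [leechPart, glue, LinearMap.funLeft_apply]

theorem glue_apply_twelve (lam : Fin 12 → ℂ) (x y : ℂ) : glue lam x y 12 = x := by
  simp [glue]

theorem glue_apply_thirteen (lam : Fin 12 → ℂ) (x y : ℂ) : glue lam x y 13 = y := by
  simp [glue]

theorem glue_leechPart (v : V) : glue (leechPart v) (v 12) (v 13) = v := by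
  funext i
  unfold glue
  split_ifs with hlt h12
  · rfl
  · exact congrArg v (Fin.ext h12.symm)
  · exact congrArg v (Fin.ext (by have := i.2; change 13 = (i : ℕ); omega))

theorem mem_Psi8_of_apply_twelve_eq_one (hv : IsRoot v) (h1 : v 12 = 1) : v ∈ Psi8 := by
  refine ⟨hv, leechPart v, (v 13).re, 0, hv.1.1, ?_⟩
  have hnorm : -(1 / 3 * (star (leechPart v) ⬝ᵥ leechPart v)) - θ * v 13 + θ * conj (v 13) =
      -3 := by
    simpa [h1] using (herm_eq v v).symm.trans hv.2.1
  have hnormL : normL (leechPart v) = -(1 / 3) * (star (leechPart v) ⬝ᵥ leechPart v) := rfl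
  have hre : ((v 13).re : ℂ) = (v 13 + conj (v 13)) / 2 := Complex.re_eq_add_conj _
  have h13 : v 13 = θ * (-3 - normL (leechPart v)) / 6 + ((v 13).re : ℂ) + ((0 : ℤ) : ℂ) := by
    rw [hre, hnormL, Int.cast_zero]
    linear_combination (θ / 6) * hnorm + ((v 13 - conj (v 13)) / 6) * theta_sq
  rw [← h13, ← h1, glue_leechPart]

theorem apply_twelve_ne_zero (hv : IsRoot v) : v 12 ≠ 0 := by
  intro h0
  have hnorm : -(1 / 3 * ((∑ i, Complex.normSq (leechPart v i) : ℝ) : ℂ)) = -3 := by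
    simpa [h0, star_dotProduct_self] using (herm_eq v v).symm.trans hv.2.1
  refine sum_normSq_ne_nine hv.1.1 (Complex.ofReal_injective ?_)
  rw [Complex.ofReal_ofNat]
  exact (by linear_combination (-3) * hnorm :
    ((∑ i, Complex.normSq (leechPart v i) : ℝ) : ℂ) = 9)

theorem exists_forall_glue_mem_Psi8 (hlam : lam ∈ Leech) :
    ∃ t : ℂ, ∀ n : ℤ, glue lam 1 (t + n) ∈ Psi8 := by
  obtain ⟨k, hk⟩ := exists_sum_normSq_eq_nine_mul hlam
  refine ⟨(k - 1 : ℤ) * (1 + ω), fun n ↦ mem_Psi8_of_apply_twelve_eq_one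
    (isRoot_iff.2 ⟨⟨?_, ?_, ?_⟩, ?_⟩) (glue_apply_twelve _ _ _)⟩
  · change leechPart (glue lam 1 _) ∈ Leech
    rwa [leechPart_glue]
  · rw [glue_apply_twelve]
    exact eisenstein.one_mem
  · rw [glue_apply_thirteen]
    exact add_mem (mul_mem (intCast_mem eisenstein _) (add_mem (one_mem _) omega_mem_eisenstein))
      (intCast_mem eisenstein _)
  · rw [herm_eq, glue_apply_twelve, glue_apply_thirteen, leechPart_glue, star_dotProduct_self, hk]
    simp only [map_add, map_mul, map_one, map_intCast, conj_omega, theta_eq]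
    push_cast
    linear_combination (-4 * ((k : ℂ) - 1)) * omega_sq

theorem herm_glue_add_intCast (lam : Fin 12 → ℂ) (x y : ℂ) (n : ℤ) (w : V) :
    herm (glue lam x (y + n)) w = herm (glue lam x y) w + θ * (n * w 12) := by
  simp only [herm_eq, leechPart_glue, glue_apply_twelve, glue_apply_thirteen, map_add, map_intCast]
  ring

theorem exists_abs_im_add_theta_mul_le (z : ℂ) : ∃ n : ℤ, |(z + θ * n).im| ≤ √3 / 2 := by
  refine ⟨-round (z.im / √3), ?_⟩
  have him : (z + θ * (-round (z.im / √3) : ℤ)).im = √3 * (z.im / √3 - round (z.im / √3)) := by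
    rw [Complex.add_im, Complex.mul_im, theta_re, theta_im, Complex.intCast_re, Complex.intCast_im,
      Int.cast_neg, mul_sub, mul_div_cancel₀ _ (by positivity)]
    ring
  rw [him, abs_mul, abs_of_pos (by positivity)]
  linarith [mul_le_mul_of_nonneg_left (abs_sub_round (z.im / √3)) (Real.sqrt_nonneg 3)]

theorem two_mul_re_herm (h : u 12 = v 12) : 2 * (herm u v).re =
    (herm u u).re + (herm v v).re +
      1 / 3 * ∑ i, Complex.normSq (leechPart u i - leechPart v i) := by
  have hsub : herm (u - v) (u - v) =
      ((-(1 / 3 * ∑ i, Complex.normSq (leechPart u i - leechPart v i)) : ℝ) : ℂ) := by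
    rw [herm_eq, star_dotProduct_self, map_sub, Pi.sub_apply, h, sub_self]
    simp
  have hre := congrArg Complex.re hsub
  rw [herm_sub_left, herm_sub_right, herm_sub_right, ← conj_herm u v] at hre
  simp only [Complex.sub_re, Complex.conj_re, Complex.ofReal_re] at hre
  linarith

theorem normSq_one_add_one_sub_omega_mul (X : ℂ) : Complex.normSq (1 + (1 - ω) * X / 3) =
    1 + (X.re * (X.re + 3) + X.im * (X.im + √3)) / 3 := by
  have hthird : (1 - ω) * X / 3 = ((1 / 3 : ℝ) : ℂ) * ((1 - ω) * X) := by push_cast; ring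
  have hs : √3 ^ 2 = 3 := Real.sq_sqrt (by norm_num)
  rw [hthird, Complex.normSq_apply]
  simp only [Complex.add_re, Complex.add_im, Complex.one_re, Complex.one_im, Complex.ofReal_re,
    Complex.ofReal_im, Complex.mul_re, Complex.mul_im, Complex.sub_re, Complex.sub_im, omega_re,
    omega_im]
  linear_combination (1 / 36 * (X.re ^ 2 + X.im ^ 2)) * hs

theorem exists_normSq_one_add_lt_one {X : ℂ} (hre : X.re ∈ Set.Ioo (-3) 0)
    (him : |X.im| ≤ √3 / 2) :
    ∃ μ ∈ ({ω, conj ω} : Set ℂ), Complex.normSq (1 + (1 - μ) * X / 3) < 1 := by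
  have hneg : X.re * (X.re + 3) < 0 := mul_neg_of_neg_of_pos hre.2 (by linarith [hre.1])
  have hs : 0 < √3 := by positivity
  obtain ⟨hlow, hupp⟩ := abs_le.1 him
  rcases le_total X.im 0 with h | h
  · refine ⟨ω, Or.inl rfl, ?_⟩
    rw [normSq_one_add_one_sub_omega_mul]
    linarith [mul_nonpos_of_nonpos_of_nonneg h (by linarith : 0 ≤ X.im + √3)]
  · refine ⟨conj ω, Or.inr rfl, ?_⟩
    have hconj : 1 + (1 - conj ω) * X / 3 = conj (1 + (1 - ω) * conj X / 3) := by
      simp [map_ofNat]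
    rw [hconj, Complex.normSq_conj, normSq_one_add_one_sub_omega_mul, Complex.conj_re,
      Complex.conj_im]
    linarith [mul_nonneg h (by linarith : 0 ≤ √3 - X.im)]

theorem exists_mem_Psi8_herm_re_im (hw : w 12 = 1) (hww : (herm w w).re ∈ Set.Ioo (-3) 0) :
    ∃ s ∈ Psi8, s 12 = 1 ∧ (herm s w).re ∈ Set.Ioo (-3) 0 ∧ |(herm s w).im| ≤ √3 / 2 := by
  obtain ⟨lam, hlam, hdist⟩ := exists_mem_leech_sum_normSq_sub_le (leechPart w)
  obtain ⟨t, ht⟩ := exists_forall_glue_mem_Psi8 hlam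
  obtain ⟨n, hn⟩ := exists_abs_im_add_theta_mul_le (herm (glue lam 1 t) w)
  have h12 : glue lam 1 (t + n) 12 = 1 := glue_apply_twelve _ _ _
  have hre := two_mul_re_herm (hw.trans h12.symm)
  rw [leechPart_glue, (ht n).1.2.1, ← conj_herm, Complex.conj_re] at hre
  have hdist_nonneg : 0 ≤ ∑ i, Complex.normSq (leechPart w i - lam i) :=
    Finset.sum_nonneg fun i _ ↦ Complex.normSq_nonneg _
  have hthree : (-3 : ℂ).re = -3 := by simp
  rw [hthree] at hre
  refine ⟨_, ht n, h12, ⟨by linarith [hww.1], by linarith [hww.2]⟩, ?_⟩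
  rwa [herm_glue_add_intCast, hw, mul_one]

theorem exists_normSq_reflMap_lt_one (hw : w 12 = 1) (hww : (herm w w).re ∈ Set.Ioo (-3) 0) :
    ∃ s ∈ Psi8, ∃ μ ∈ ({ω, conj ω} : Set ℂ), Complex.normSq (reflMap μ s w 12) < 1 := by
  obtain ⟨s, hs, hs12, hre, him⟩ := exists_mem_Psi8_herm_re_im hw hww
  obtain ⟨μ, hμ, hlt⟩ := exists_normSq_one_add_lt_one hre him
  have h12 : reflMap μ s w 12 = 1 + (1 - μ) * herm s w / 3 := by
    simp only [reflMap, Pi.sub_apply, Pi.smul_apply, smul_eq_mul, hs12, hw, hs.1.2.1]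
    ring
  exact ⟨s, hs, μ, hμ, h12 ▸ hlt⟩

theorem exists_normSq_reflMap_lt (hv : IsRoot v) (h1 : 1 < Complex.normSq (v 12)) :
    ∃ s ∈ Psi8, ∃ μ ∈ ({ω, conj ω} : Set ℂ),
      Complex.normSq (reflMap μ s v 12) < Complex.normSq (v 12) := by
  have h0 : v 12 ≠ 0 := apply_twelve_ne_zero hv
  have hpos : 0 < Complex.normSq (v 12) := Complex.normSq_pos.2 h0
  set w : V := (v 12)⁻¹ • v with hw
  have hvw : v = v 12 • w := (smul_inv_smul₀ h0 v).symm
  have hww : herm w w = ((-(3 / Complex.normSq (v 12)) : ℝ) : ℂ) := by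
    rw [hw, herm_smul_left, herm_smul_right, hv.2.1, ← mul_assoc,
      ← Complex.normSq_eq_conj_mul_self, Complex.normSq_inv]
    push_cast
    ring
  have hww_re : (herm w w).re ∈ Set.Ioo (-3) 0 := by
    rw [hww, Complex.ofReal_re]
    exact ⟨neg_lt_neg ((div_lt_iff₀ hpos).2 (by linarith)), neg_neg_of_pos (by positivity)⟩
  obtain ⟨s, hs, μ, hμ, hlt⟩ := exists_normSq_reflMap_lt_one (inv_mul_cancel₀ h0) hww_re
  refine ⟨s, hs, μ, hμ, ?_⟩
  conv_lhs => rw [hvw, reflMap_smul, Pi.smul_apply, smul_eq_mul, map_mul]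
  exact mul_lt_of_lt_one_right hpos hlt

theorem rad_Psi8_of_normSq_eq_one (hv : IsRoot v) (h1 : Complex.normSq (v 12) = 1) :
    Rad Psi8 v := by
  have hunit : EisUnit (v 12) := eisUnit_iff.2 ⟨hv.1.2.1, h1⟩
  have hconj : EisUnit (conj (v 12)) :=
    eisUnit_iff.2 ⟨conj_mem_eisenstein hv.1.2.1, by rwa [Complex.normSq_conj]⟩
  have hv_eq : v 12 • conj (v 12) • v = v := by
    rw [smul_smul, mul_comm, hunit.conj_mul_self, one_smul]
  rw [← hv_eq]
  exact .unit hunit (.base (mem_Psi8_of_apply_twelve_eq_one (hv.smul hconj) hunit.conj_mul_self))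

theorem rad_of_rad_reflMap {Φ : Set V} {s : V} {μ : ℂ} (hμ : μ ∈ ({ω, conj ω} : Set ℂ))
    (hs : Rad Φ s) (h : Rad Φ (reflMap μ s v)) : Rad Φ v := by
  rw [← reflMap_conj_reflMap (mul_conj_eq_one hμ) s v]
  rcases hμ with rfl | rfl
  · exact .inv hs h
  · rw [Complex.conj_conj]
    exact .refl hs h

theorem rad_Psi8_of_isRoot (hv : IsRoot v) : Rad Psi8 v := by
  obtain ⟨n, hn⟩ := exists_normSq_eq_natCast hv.1.2.1
  induction n using Nat.strong_induction_on generalizing v with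
  | _ n ih =>
    have hn0 : n ≠ 0 := by
      rintro rfl
      exact apply_twelve_ne_zero hv (Complex.normSq_eq_zero.1 (by simpa using hn))
    rcases eq_or_ne n 1 with rfl | hn1
    · exact rad_Psi8_of_normSq_eq_one hv (by simpa using hn)
    obtain ⟨s, hs, μ, hμ, hlt⟩ := exists_normSq_reflMap_lt hv
      (by rw [hn]; exact_mod_cast (by omega : 1 < n))
    have hroot : IsRoot (reflMap μ s v) := hs.1.reflMap hμ hv
    obtain ⟨m, hm⟩ := exists_normSq_eq_natCast hroot.1.2.1
    rw [hm, hn, Nat.cast_lt] at hlt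
    exact rad_of_rad_reflMap hμ (.base hs) (ih m hlt hroot hm)

end Height

/-- `rad(Ψ) = Φ_L`, the set of all roots of `L`; in particular the `ω`-reflections in
the elements of `Ψ` generate the reflection group `R(L)`. -/
theorem stmt8 :
    (∀ v : V, Rad Psi8 v ↔ IsRoot v) ∧
    Subgroup.closure (ReflAutos Psi8) = RL := by
  have hrad (v : V) : Rad Psi8 v ↔ IsRoot v :=
    ⟨isRoot_of_rad fun _ hr ↦ hr.1, rad_Psi8_of_isRoot⟩
  exact ⟨hrad, closure_reflAutos_eq_RL hrad⟩

end Bimonster
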